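/- There exist a constant c₀ > 0 and a finite family Ψ of maps, each of which is a smooth strictly increasing map from a closed subinterval of [0,1] into [0,1], such that for every Lebesgue-measurable set A ⊆ [0,1] with |A| ≤ 1/2, the set Ψ(A) = ⋃_{ψ∈Ψ} ψ(A ∩ dom ψ) satisfies |Ψ(A)| ≥ (1+c₀)·|A|, where |·| denotes Lebesgue measure. -/

import Mathlib

/-!
The expander consists of two kinds of maps: the affine blow-ups `x ↦ P * x - i` of the cells
`[i / P, (i + 1) / P]` onto `[0, 1]`, and, on `[0.01, 0.99]`, the inverses of finitely many Möbius
maps close to the identity. If some cell contains more than `1.1` times its share of `A`, its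
blow-up expands `A` (`expansion`). Otherwise `A` is evenly spread: its indicator is close to a step
function (`exists_outer_step`) whose averages over the cells are at most about `1.1 * |A|` pointwise
(`nsq_avg_indicator_le`), and the oscillating rest is contracted by the average of the Möbius
operators on `L²` (`exists_contraction`). As `|A| ≤ 1 / 2`, the averaged indicator has small `L²`
norm (`Good.nsq_avgT_indicator`), and by the Cauchy–Schwarz inequality the union of the preimages of
`A` is large (`Good.measure_preimages`).

The contraction rests on a family of elements of `SL₂(ℝ)` close to the identity whose random walk
spreads out optimally down to small scales. The letters are `s_a * s_b⁻¹`, where the `s_a` are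
proportional to integer matrices of prime determinant `p` (`exists_sep`). These are found by
completing coprime first rows and by the pigeonhole principle, which selects about `p / Q` matrices
that are close to each other, `p` being about `Q ^ 320`; closeness prevents the quotients from being
divisible by `p`. Hence a letter can be cancelled from a word in at most one way, which bounds the
number of words that represent a given integer matrix (`Sep.word_count`). The integer matrices of
determinant `X ^ 2` near the scalar matrix `X` are counted by the divisor bound
(`card_near_scalar`, `exists_divisor_bound`). Together, a word lies within `η` of the identity with
probability at most about `η ^ 3`, the volume of this neighbourhood in the three-dimensional group,
as long as `η` is not too small for the length (`Sep.count_close`, `return_bound`).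

For a function `f` with mean zero on short cells, the matrix coefficients `⟪g f, f⟫` are small on
average over a region of matrices `g` (`coef_bound`); this reduces to averages over affine maps,
where the integration over dilations brings in a primitive of `f`, which is small (`aff_bound`).
Thickening the words to cubes and applying the Cauchy–Schwarz inequality transfers this from the
continuous average to the average over words (`Good.word_bound`), and doubling the word length
(`Good.pow_le`) turns it into a bound for the norm of the averaged `f`. For functions in a band,
which are constant at scale `P ^ (-2 ^ (m + 1))` and have mean zero at scale `P ^ (-2 ^ m)`, where
`P = Q ^ 64`, words of length `2 ^ m` give a contraction factor that is uniform in `m`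
(`exists_band`). Distant bands remain almost orthogonal after averaging (`Good.cross_le`), so the
bands can be summed (`Good.sum_bands`), which gives `exists_contraction`.
-/

open MeasureTheory Set

namespace MonExp

/-! ### Square-integrable functions -/

theorem cauchy_schwarz {α : Type*} [MeasurableSpace α] {μ : Measure α} {f g : α → ℝ}
    (hf : AEStronglyMeasurable f μ) (hg : AEStronglyMeasurable g μ)
    (hf2 : Integrable (fun x => f x ^ 2) μ) (hg2 : Integrable (fun x => g x ^ 2) μ) :
    (∫ x, f x * g x ∂μ) ^ 2 ≤ (∫ x, f x ^ 2 ∂μ) * ∫ x, g x ^ 2 ∂μ := by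
  have hfg : Integrable (fun x => f x * g x) μ := by
    refine (hf2.add hg2).mono' (hf.mul hg) (Filter.Eventually.of_forall fun x => ?_)
    simp only [Pi.add_apply, Real.norm_eq_abs, abs_mul]
    nlinarith [sq_nonneg (|f x| - |g x|), sq_abs (f x), sq_abs (g x), sq_nonneg (f x), sq_nonneg (g x)]
  have key : ∀ t : ℝ, 0 ≤ (∫ x, g x ^ 2 ∂μ) * (t * t) + (2 * ∫ x, f x * g x ∂μ) * t
      + ∫ x, f x ^ 2 ∂μ := by
    intro t
    have h1 : ∫ x, (f x + t * g x) ^ 2 ∂μ = (∫ x, g x ^ 2 ∂μ) * (t * t)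
        + (2 * ∫ x, f x * g x ∂μ) * t + ∫ x, f x ^ 2 ∂μ := by
      have : ∀ x, (f x + t * g x) ^ 2 = (t * t) * g x ^ 2 + (2 * t) * (f x * g x) + f x ^ 2 :=
        fun x => by ring
      simp_rw [this]
      have i1 := hg2.const_mul (t * t)
      have i2 := hfg.const_mul (2 * t)
      have i3 : Integrable (fun x => (t * t) * g x ^ 2 + (2 * t) * (f x * g x)) μ := i1.add i2
      rw [integral_add i3 hf2, integral_add i1 i2, integral_const_mul, integral_const_mul]
      ring
    rw [← h1]
    exact integral_nonneg fun x => sq_nonneg _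
  have := discrim_le_zero key
  unfold discrim at this
  nlinarith

/-- A measurable real function on the line with integrable square. -/
structure L2 (f : ℝ → ℝ) : Prop where
  meas : Measurable f
  int : Integrable (fun x => f x ^ 2)

/-- The inner product of two real functions on the line. -/
noncomputable def ip (f g : ℝ → ℝ) : ℝ := ∫ x, f x * g x

/-- The squared `L²` norm. -/
noncomputable def nsq (f : ℝ → ℝ) : ℝ := ∫ x, f x ^ 2

theorem nsq_nonneg (f : ℝ → ℝ) : 0 ≤ nsq f := integral_nonneg fun _ => sq_nonneg _

theorem ip_self (f : ℝ → ℝ) : ip f f = nsq f := by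
  unfold ip nsq; congr 1; ext x; ring

theorem ip_comm (f g : ℝ → ℝ) : ip f g = ip g f := by
  unfold ip; congr 1; ext x; ring

theorem L2.mul {f g : ℝ → ℝ} (hf : L2 f) (hg : L2 g) : Integrable (fun x => f x * g x) := by
  refine (hf.int.add hg.int).mono' (hf.meas.mul hg.meas).aestronglyMeasurable
    (Filter.Eventually.of_forall fun x => ?_)
  simp only [Pi.add_apply, Real.norm_eq_abs, abs_mul]
  nlinarith [sq_nonneg (|f x| - |g x|), sq_abs (f x), sq_abs (g x), sq_nonneg (f x), sq_nonneg (g x)]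

theorem L2.add {f g : ℝ → ℝ} (hf : L2 f) (hg : L2 g) : L2 (fun x => f x + g x) := by
  refine ⟨hf.meas.add hg.meas, ?_⟩
  have : (fun x => (f x + g x) ^ 2) = fun x => f x ^ 2 + 2 * (f x * g x) + g x ^ 2 := by
    ext x; ring
  rw [this]
  exact (hf.int.add ((hf.mul hg).const_mul 2)).add hg.int

theorem L2.const_mul {f : ℝ → ℝ} (hf : L2 f) (c : ℝ) : L2 (fun x => c * f x) := by
  refine ⟨hf.meas.const_mul c, ?_⟩
  simp_rw [mul_pow]
  exact hf.int.const_mul _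

theorem L2.sub {f g : ℝ → ℝ} (hf : L2 f) (hg : L2 g) : L2 (fun x => f x - g x) := by
  have := hf.add (hg.const_mul (-1))
  simpa [sub_eq_add_neg] using this

theorem L2.zero : L2 (fun _ => (0:ℝ)) := ⟨measurable_const, by simp⟩

theorem L2.sum {ι : Type*} (s : Finset ι) {f : ι → ℝ → ℝ} (hf : ∀ i ∈ s, L2 (f i)) :
    L2 (fun x => ∑ i ∈ s, f i x) := by
  classical
  induction s using Finset.induction_on with
  | empty => simpa using L2.zero
  | insert a s ha ih =>
    simp_rw [Finset.sum_insert ha]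
    exact (hf a (Finset.mem_insert_self _ _)).add
      (ih fun i hi => hf i (Finset.mem_insert_of_mem hi))

theorem ip_add_left {f g h : ℝ → ℝ} (hf : L2 f) (hg : L2 g) (hh : L2 h) :
    ip (fun x => f x + g x) h = ip f h + ip g h := by
  unfold ip
  rw [← integral_add (hf.mul hh) (hg.mul hh)]
  congr 1; ext x; ring

theorem ip_sub_left {f g h : ℝ → ℝ} (hf : L2 f) (hg : L2 g) (hh : L2 h) :
    ip (fun x => f x - g x) h = ip f h - ip g h := by
  unfold ip
  rw [← integral_sub (hf.mul hh) (hg.mul hh)]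
  congr 1; ext x; ring

theorem ip_const_mul_left (f h : ℝ → ℝ) (c : ℝ) :
    ip (fun x => c * f x) h = c * ip f h := by
  unfold ip
  rw [← integral_const_mul]
  congr 1; ext x; ring

theorem ip_sum_left {ι : Type*} (s : Finset ι) {f : ι → ℝ → ℝ} (hf : ∀ i ∈ s, L2 (f i))
    {h : ℝ → ℝ} (hh : L2 h) :
    ip (fun x => ∑ i ∈ s, f i x) h = ∑ i ∈ s, ip (f i) h := by
  unfold ip
  rw [← integral_finsetSum s fun i hi => (hf i hi).mul hh]
  congr 1; ext x; rw [Finset.sum_mul]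

theorem ip_sq_le {f g : ℝ → ℝ} (hf : L2 f) (hg : L2 g) : ip f g ^ 2 ≤ nsq f * nsq g :=
  cauchy_schwarz hf.meas.aestronglyMeasurable hg.meas.aestronglyMeasurable hf.int hg.int

theorem abs_ip_le {f g : ℝ → ℝ} (hf : L2 f) (hg : L2 g) : |ip f g| ≤ √(nsq f) * √(nsq g) := by
  rw [← Real.sqrt_mul (nsq_nonneg f), ← Real.sqrt_sq_eq_abs]
  exact Real.sqrt_le_sqrt (ip_sq_le hf hg)

theorem nsq_add {f g : ℝ → ℝ} (hf : L2 f) (hg : L2 g) :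
    nsq (fun x => f x + g x) = nsq f + 2 * ip f g + nsq g := by
  unfold nsq ip
  have i2 := (hf.mul hg).const_mul 2
  have i3 : Integrable (fun x => f x ^ 2 + 2 * (f x * g x)) := hf.int.add i2
  rw [← integral_const_mul, ← integral_add hf.int i2, ← integral_add i3 hg.int]
  congr 1; ext x; ring

theorem sqrt_nsq_add_le {f g : ℝ → ℝ} (hf : L2 f) (hg : L2 g) :
    √(nsq (fun x => f x + g x)) ≤ √(nsq f) + √(nsq g) := by
  rw [nsq_add hf hg]
  apply Real.sqrt_le_iff.2
  refine ⟨by positivity, ?_⟩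
  have h1 := le_of_abs_le (abs_ip_le hf hg)
  nlinarith [Real.sq_sqrt (nsq_nonneg f), Real.sq_sqrt (nsq_nonneg g)]

/-! ### Weighted composition with Möbius maps -/

/-- Real two-by-two matrices, acting on the line by Möbius maps. -/
abbrev Mat := Matrix (Fin 2) (Fin 2) ℝ

/-- The denominator of the Möbius map of `g`. -/
def den (g : Mat) (x : ℝ) : ℝ := g 1 0 * x + g 1 1

/-- The Möbius map of `g`; at the pole it takes the junk value `0`. -/
noncomputable def mob (g : Mat) (x : ℝ) : ℝ := (g 0 0 * x + g 0 1) / den g x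

/-- The square root of the derivative of the Möbius map of `g`. -/
noncomputable def wt (g : Mat) (x : ℝ) : ℝ := √g.det / |den g x|

/-- The unitary right action of matrices of positive determinant on `L²(ℝ)`: composition with the
Möbius map, weighted by the square root of its derivative. -/
noncomputable def sl (g : Mat) (f : ℝ → ℝ) (x : ℝ) : ℝ := wt g x * f (mob g x)

theorem measurable_den (g : Mat) : Measurable (den g) := by unfold den; fun_prop
theorem measurable_mob (g : Mat) : Measurable (mob g) := by
  have := measurable_den g
  unfold mob; fun_prop
theorem measurable_wt (g : Mat) : Measurable (wt g) := by
  have := measurable_den g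
  unfold wt; fun_prop
theorem measurable_sl (g : Mat) {f : ℝ → ℝ} (hf : Measurable f) : Measurable (sl g f) := by
  have h1 := measurable_wt g
  have h2 := measurable_mob g
  unfold sl; fun_prop

theorem wt_nonneg (g : Mat) (x : ℝ) : 0 ≤ wt g x := by unfold wt; positivity

theorem wt_sq {g : Mat} (hg : 0 < g.det) (x : ℝ) : wt g x ^ 2 = g.det / den g x ^ 2 := by
  unfold wt; rw [div_pow, Real.sq_sqrt hg.le, sq_abs]

theorem det_eq (g : Mat) : g.det = g 0 0 * g 1 1 - g 0 1 * g 1 0 := Matrix.det_fin_two g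

theorem den_ne_ae {g : Mat} (hg : 0 < g.det) : ∀ᵐ x : ℝ, den g x ≠ 0 := by
  have : {x : ℝ | ¬ den g x ≠ 0}.Subsingleton := by
    intro x hx y hy
    simp only [not_not, mem_ofPred_eq, den] at hx hy
    have hd := det_eq g
    by_contra hxy
    have h1 : g 1 0 * (x - y) = 0 := by linear_combination hx - hy
    rcases mul_eq_zero.1 h1 with h | h
    · rw [h] at hx hd
      have : g 1 1 = 0 := by linarith
      rw [this] at hd; simp at hd; linarith
    · exact hxy (by linarith)
  rw [ae_iff]
  exact this.measure_zero _

theorem hasDerivAt_mob {g : Mat} {x : ℝ} (hx : den g x ≠ 0) :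
    HasDerivAt (mob g) (g.det / den g x ^ 2) x := by
  have h1 : HasDerivAt (fun x => g 0 0 * x + g 0 1) (g 0 0) x := by
    simpa using ((hasDerivAt_id x).const_mul (g 0 0)).add_const (g 0 1)
  have h2 : HasDerivAt (den g) (g 1 0) x := by
    unfold den
    simpa using ((hasDerivAt_id x).const_mul (g 1 0)).add_const (g 1 1)
  have h3 : HasDerivAt (mob g) _ x := h1.div h2 hx
  refine h3.congr_deriv ?_
  rw [det_eq]; unfold den; ring

theorem den_mul {g h : Mat} {x : ℝ} (hx : den g x ≠ 0) :
    den (h * g) x = den h (mob g x) * den g x := by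
  unfold mob
  simp only [den, Matrix.mul_apply, Fin.sum_univ_two] at *
  field_simp
  ring

theorem mob_mul {g h : Mat} {x : ℝ} (hx : den g x ≠ 0) :
    mob (h * g) x = mob h (mob g x) := by
  have e := den_mul (h := h) hx
  unfold mob at e ⊢
  rw [e]
  rw [show (h * g) 0 0 * x + (h * g) 0 1 =
    (h 0 0 * ((g 0 0 * x + g 0 1) / den g x) + h 0 1) * den g x by
      simp only [den, Matrix.mul_apply, Fin.sum_univ_two] at *
      field_simp
      ring]
  exact mul_div_mul_right _ _ hx

theorem mob_one (x : ℝ) : mob 1 x = x := by simp [mob, den]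

theorem wt_mul {g h : Mat} (hh : 0 < h.det) {x : ℝ} (hx : den g x ≠ 0) :
    wt (h * g) x = wt g x * wt h (mob g x) := by
  unfold wt
  rw [den_mul hx, Matrix.det_mul, Real.sqrt_mul hh.le, abs_mul]
  rw [div_mul_div_comm]
  congr 1 <;> ring

theorem sl_mul {g h : Mat} (hh : 0 < h.det) (f : ℝ → ℝ) {x : ℝ} (hx : den g x ≠ 0) :
    sl (h * g) f x = sl g (sl h f) x := by
  unfold sl
  rw [wt_mul hh hx, mob_mul hx]; ring

theorem mob_inv_mob {g : Mat} (hg : 0 < g.det) {x : ℝ} (hx : den g x ≠ 0) :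
    mob g⁻¹ (mob g x) = x := by
  rw [← mob_mul hx, Matrix.nonsing_inv_mul _ (isUnit_iff_ne_zero.2 hg.ne'), mob_one]

theorem det_inv_pos {g : Mat} (hg : 0 < g.det) : 0 < (g⁻¹).det := by
  rw [Matrix.det_nonsing_inv, Ring.inverse_eq_inv']; positivity

theorem image_mob {g : Mat} (hg : 0 < g.det) :
    mob g '' {x | den g x ≠ 0} = {y | den g⁻¹ y ≠ 0} := by
  have hu : IsUnit g.det := isUnit_iff_ne_zero.2 hg.ne'
  have one : ∀ x, den (1 : Mat) x = 1 := fun x => by simp [den]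
  have aux : ∀ (k : Mat), 0 < k.det → ∀ x, den k x ≠ 0 → den k⁻¹ (mob k x) ≠ 0 := by
    intro k hk x hx
    have := den_mul (h := k⁻¹) hx
    rw [Matrix.nonsing_inv_mul _ (isUnit_iff_ne_zero.2 hk.ne'), one] at this
    intro h0; rw [h0] at this; simp at this
  ext y
  constructor
  · rintro ⟨x, hx, rfl⟩
    exact aux g hg x hx
  · intro hy
    refine ⟨mob g⁻¹ y, ?_, ?_⟩
    · have := aux g⁻¹ (det_inv_pos hg) y hy
      rwa [Matrix.nonsing_inv_nonsing_inv _ hu] at this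
    · have := mob_inv_mob (det_inv_pos hg) hy
      rwa [Matrix.nonsing_inv_nonsing_inv _ hu] at this

theorem injOn_mob {g : Mat} (hg : 0 < g.det) : InjOn (mob g) {x | den g x ≠ 0} := by
  intro x hx y hy h
  rw [← mob_inv_mob hg hx, ← mob_inv_mob hg hy, h]

theorem measurableSet_den (g : Mat) : MeasurableSet {x | den g x ≠ 0} :=
  (measurableSet_singleton (0:ℝ)).compl.preimage (measurable_den g)

/-- Change of variables along a Möbius map. -/
theorem integral_mob {g : Mat} (hg : 0 < g.det) (F : ℝ → ℝ) :
    ∫ x, wt g x ^ 2 * F (mob g x) = ∫ x, F x := by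
  have h := integral_image_eq_integral_abs_deriv_smul (measurableSet_den g)
    (fun x hx => (hasDerivAt_mob (g := g) hx).hasDerivWithinAt) (injOn_mob hg) F
  rw [image_mob hg] at h
  rw [setIntegral_congr_set (Filter.eventuallyEq_univ.2 (den_ne_ae (det_inv_pos hg))),
    setIntegral_congr_set (Filter.eventuallyEq_univ.2 (den_ne_ae hg)), setIntegral_univ,
    setIntegral_univ] at h
  rw [h]
  refine integral_congr_ae (Filter.Eventually.of_forall fun x => ?_)
  simp only [smul_eq_mul]
  rw [wt_sq hg, abs_of_nonneg (by positivity)]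

theorem integrable_mob {g : Mat} (hg : 0 < g.det) {F : ℝ → ℝ} (hF : Integrable F) :
    Integrable (fun x => wt g x ^ 2 * F (mob g x)) := by
  have h := integrableOn_image_iff_integrableOn_abs_deriv_smul (measurableSet_den g)
    (fun x hx => (hasDerivAt_mob (g := g) hx).hasDerivWithinAt) (injOn_mob hg) F
  have h2 := h.1 hF.integrableOn
  have h3 : {x | den g x ≠ 0} =ᵐ[volume] univ := by
    rw [Filter.eventuallyEq_univ]; exact den_ne_ae hg
  rw [integrableOn_congr_set_ae h3, integrableOn_univ] at h2
  refine h2.congr (Filter.Eventually.of_forall fun x => ?_)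
  simp only [smul_eq_mul]
  rw [wt_sq hg, abs_of_nonneg (by positivity)]

theorem L2.sl {g : Mat} (hg : 0 < g.det) {f : ℝ → ℝ} (hf : L2 f) : L2 (sl g f) := by
  refine ⟨measurable_sl g hf.meas, ?_⟩
  have := integrable_mob hg hf.int
  simpa only [MonExp.sl, mul_pow] using this

theorem ip_sl_sl {g : Mat} (hg : 0 < g.det) (f h : ℝ → ℝ) : ip (sl g f) (sl g h) = ip f h := by
  unfold ip
  rw [← integral_mob hg (fun x => f x * h x)]
  congr 1; ext x; unfold sl; ring

theorem nsq_sl {g : Mat} (hg : 0 < g.det) (f : ℝ → ℝ) : nsq (sl g f) = nsq f := by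
  rw [← ip_self, ip_sl_sl hg, ip_self]

theorem ip_sl_mul {g h : Mat} (hh : 0 < h.det) (hg : 0 < g.det) (f k : ℝ → ℝ) :
    ip (sl (h * g) f) k = ip (sl g (sl h f)) k := by
  unfold ip
  refine integral_congr_ae ?_
  filter_upwards [den_ne_ae hg] with x hx
  rw [sl_mul hh f hx]

/-- Matrix coefficients only depend on the relative position of the two matrices. -/
theorem ip_sl {g h : Mat} (hg : 0 < g.det) (hh : 0 < h.det) (f k : ℝ → ℝ) :
    ip (sl g f) (sl h k) = ip (sl (g * h⁻¹) f) k := by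
  have hd : 0 < (g * h⁻¹).det := by rw [Matrix.det_mul]; exact mul_pos hg (det_inv_pos hh)
  have e : g = (g * h⁻¹) * h := by
    rw [Matrix.mul_assoc, Matrix.nonsing_inv_mul _ (isUnit_iff_ne_zero.2 hh.ne'), Matrix.mul_one]
  conv_lhs => rw [e]
  rw [ip_sl_mul hd hh, ip_sl_sl hh]

theorem sl_smul {c : ℝ} (hc : 0 < c) (g : Mat) (f : ℝ → ℝ) : sl (c • g) f = sl g f := by
  ext x
  have e1 : den (c • g) x = c * den g x := by simp [den]; ring
  have e2 : mob (c • g) x = mob g x := by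
    unfold mob; rw [e1]
    rw [show (c • g) 0 0 * x + (c • g) 0 1 = c * (g 0 0 * x + g 0 1) by simp; ring]
    exact mul_div_mul_left _ _ hc.ne'
  have e3 : wt (c • g) x = wt g x := by
    unfold wt; rw [e1]
    rw [Matrix.det_smul, Fintype.card_fin, Real.sqrt_mul (by positivity), Real.sqrt_sq hc.le,
      abs_mul, abs_of_pos hc]
    exact mul_div_mul_left _ _ hc.ne'
  unfold sl; rw [e2, e3]

/-! ### Step functions -/

/-- `f` vanishes off `[0,1)` and is constant on the cells `[j/N, (j+1)/N)`. -/
structure IsStep (N : ℕ) (f : ℝ → ℝ) : Prop where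
  const : ∃ c : ℤ → ℝ, ∀ x, f x = c ⌊N * x⌋
  supp : ∀ x, x ∉ Ico (0:ℝ) 1 → f x = 0

/-- `f` has integral zero over all cells `[j/N, (j+1)/N)`, expressed as orthogonality to all
functions that are constant on the cells. -/
def MeanZero (N : ℕ) (f : ℝ → ℝ) : Prop :=
  ∀ κ : ℤ → ℝ, ∫ x : ℝ, κ ⌊N * x⌋ * f x = 0

/-- The cell `[j/N, (j+1)/N)`. -/
def cell (N : ℕ) (j : ℤ) : Set ℝ := {x | ⌊N * x⌋ = j}

theorem cell_eq {N : ℕ} (hN : 0 < N) (j : ℤ) : cell N j = Ico ((j:ℝ) / N) ((j + 1 : ℝ) / N) := by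
  have : (0:ℝ) < N := by exact_mod_cast hN
  ext x
  simp only [cell, mem_ofPred_eq, Int.floor_eq_iff, mem_Ico]
  rw [div_le_iff₀ this, lt_div_iff₀ this, mul_comm x]

theorem measurableSet_cell (N : ℕ) (j : ℤ) : MeasurableSet (cell N j) := by
  have : Measurable fun x : ℝ => ⌊(N:ℝ) * x⌋ := Int.measurable_floor.comp (by fun_prop)
  exact this (measurableSet_singleton j)

theorem volume_cell {N : ℕ} (hN : 0 < N) (j : ℤ) : volume (cell N j) = ENNReal.ofReal (1 / N) := by
  rw [cell_eq hN, Real.volume_Ico]; congr 1; ring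

theorem measurable_floor_comp (N : ℕ) (κ : ℤ → ℝ) : Measurable fun x : ℝ => κ ⌊(N:ℝ) * x⌋ :=
  (measurable_from_top).comp (Int.measurable_floor.comp (by fun_prop))

theorem floor_mem {N : ℕ} (hN : 0 < N) {x : ℝ} (hx : x ∈ Ico (0:ℝ) 1) :
    ⌊(N:ℝ) * x⌋ ∈ Finset.Ico (0:ℤ) N := by
  have : (0:ℝ) < N := by exact_mod_cast hN
  rw [Finset.mem_Ico]
  constructor
  · exact Int.floor_nonneg.2 (mul_nonneg this.le hx.1)
  · rw [Int.floor_lt]; push_cast; nlinarith [hx.2]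

theorem integral_eq_sum_cells {N : ℕ} (hN : 0 < N) {h : ℝ → ℝ} (hi : Integrable h)
    (hs : ∀ x, x ∉ Ico (0:ℝ) 1 → h x = 0) :
    ∫ x, h x = ∑ j ∈ Finset.Ico (0:ℤ) N, ∫ x in cell N j, h x := by
  rw [← integral_biUnion_finset _ (fun j _ => measurableSet_cell N j) _
    (fun j _ => hi.integrableOn)]
  · rw [setIntegral_eq_integral_of_forall_compl_eq_zero]
    intro x hx
    apply hs
    intro hx'
    apply hx
    simp only [mem_iUnion]
    exact ⟨_, floor_mem hN hx', rfl⟩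
  · intro i _ j _ hij
    exact Set.disjoint_left.2 fun x hx hx' => hij (hx.symm.trans hx')

theorem IsStep.meas {N : ℕ} {f : ℝ → ℝ} (hf : IsStep N f) : Measurable f := by
  obtain ⟨c, hc⟩ := hf.const
  rw [funext hc]
  exact measurable_floor_comp N c

theorem IsStep.bdd {N : ℕ} (hN : 0 < N) {f : ℝ → ℝ} (hf : IsStep N f) :
    ∃ B, ∀ x, |f x| ≤ B := by
  obtain ⟨c, hc⟩ := hf.const
  refine ⟨∑ j ∈ Finset.Ico (0:ℤ) N, |c j|, fun x => ?_⟩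
  by_cases hx : x ∈ Ico (0:ℝ) 1
  · rw [hc]
    exact Finset.single_le_sum (f := fun j => |c j|) (fun i _ => abs_nonneg _) (floor_mem hN hx)
  · rw [hf.supp x hx, abs_zero]
    exact Finset.sum_nonneg fun i _ => abs_nonneg _

theorem integrable_of_bdd_supp {f : ℝ → ℝ} (hm : Measurable f) {B : ℝ} (hB : ∀ x, |f x| ≤ B)
    (hs : ∀ x, x ∉ Ico (0:ℝ) 1 → f x = 0) : Integrable f := by
  have h1 : IntegrableOn f (Ico 0 1) := by
    refine Measure.integrableOn_of_bounded (M := B) (by simp) hm.aestronglyMeasurable ?_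
    exact Filter.Eventually.of_forall fun x => by simpa using hB x
  exact h1.integrable_of_forall_notMem_eq_zero hs

theorem IsStep.l2 {N : ℕ} (hN : 0 < N) {f : ℝ → ℝ} (hf : IsStep N f) : L2 f := by
  obtain ⟨B, hB⟩ := hf.bdd hN
  refine ⟨hf.meas, integrable_of_bdd_supp (hf.meas.pow_const 2) (B := B ^ 2) (fun x => ?_) ?_⟩
  · rw [abs_pow]; exact pow_le_pow_left₀ (abs_nonneg _) (hB x) 2
  · intro x hx; rw [hf.supp x hx]; norm_num

theorem IsStep.sub {N : ℕ} {f g : ℝ → ℝ} (hf : IsStep N f) (hg : IsStep N g) :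
    IsStep N (fun x => f x - g x) := by
  obtain ⟨c, hc⟩ := hf.const
  obtain ⟨d, hd⟩ := hg.const
  exact ⟨⟨fun j => c j - d j, fun x => by rw [hc, hd]⟩, fun x hx => by
    rw [hf.supp x hx, hg.supp x hx, sub_zero]⟩

theorem IsStep.add {N : ℕ} {f g : ℝ → ℝ} (hf : IsStep N f) (hg : IsStep N g) :
    IsStep N (fun x => f x + g x) := by
  obtain ⟨c, hc⟩ := hf.const
  obtain ⟨d, hd⟩ := hg.const
  exact ⟨⟨fun j => c j + d j, fun x => by rw [hc, hd]⟩, fun x hx => by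
    rw [hf.supp x hx, hg.supp x hx, add_zero]⟩

theorem floor_mul_div {N k : ℕ} (hk : 0 < k) (x : ℝ) :
    ⌊(N:ℝ) * x⌋ = ⌊((N * k : ℕ) : ℝ) * x⌋ / (k : ℤ) := by
  have h : (N:ℝ) * x = (((N * k : ℕ) : ℝ) * x) / k := by
    have : (k:ℝ) ≠ 0 := by exact_mod_cast hk.ne'
    push_cast; field_simp
  rw [h, Int.floor_div_natCast]

theorem IsStep.mono {N N' : ℕ} (hd : N ∣ N') (hN : 0 < N') {f : ℝ → ℝ} (hf : IsStep N f) :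
    IsStep N' f := by
  obtain ⟨k, rfl⟩ := hd
  obtain ⟨c, hc⟩ := hf.const
  refine ⟨⟨fun j => c (j / k), fun x => ?_⟩, hf.supp⟩
  rw [hc, floor_mul_div (Nat.pos_of_mul_pos_left hN)]

theorem MeanZero.mono {N N' : ℕ} (hd : N ∣ N') (hN : 0 < N') {f : ℝ → ℝ} (hf : MeanZero N' f) :
    MeanZero N f := by
  obtain ⟨k, rfl⟩ := hd
  intro κ
  have := hf (fun j => κ (j / k))
  simpa only [← floor_mul_div (N := N) (Nat.pos_of_mul_pos_left hN)] using this

/-- Averages over the cells of length `1/N`. -/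
noncomputable def avg (N : ℕ) (f : ℝ → ℝ) (x : ℝ) : ℝ :=
  N * ∫ y in cell N ⌊N * x⌋, f y

theorem avg_step {N : ℕ} (hN : 0 < N) {f : ℝ → ℝ} (hs : ∀ x, x ∉ Ico (0:ℝ) 1 → f x = 0) :
    IsStep N (avg N f) := by
  refine ⟨⟨fun j => N * ∫ y in cell N j, f y, fun x => rfl⟩, fun x hx => ?_⟩
  have hN' : (0:ℝ) < N := by exact_mod_cast hN
  unfold avg
  rw [setIntegral_eq_zero_of_forall_eq_zero, mul_zero]
  intro y hy
  apply hs
  intro hy'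
  apply hx
  have h1 : ⌊(N:ℝ) * x⌋ ∈ Finset.Ico (0:ℤ) N := by
    have := floor_mem hN hy'
    rwa [show ⌊(N:ℝ) * y⌋ = ⌊(N:ℝ) * x⌋ from hy] at this
  rw [Finset.mem_Ico] at h1
  constructor
  · have := Int.floor_nonneg.1 h1.1
    exact nonneg_of_mul_nonneg_right this hN'
  · have := Int.floor_lt.1 h1.2
    push_cast at this
    nlinarith

theorem avg_meanZero {N : ℕ} (hN : 0 < N) {f : ℝ → ℝ} (hi : Integrable f)
    (hs : ∀ x, x ∉ Ico (0:ℝ) 1 → f x = 0) {B : ℝ} (hB : ∀ x, |f x| ≤ B) (hm : Measurable f) :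
    MeanZero N (fun x => f x - avg N f x) := by
  intro κ
  have hst := avg_step hN hs
  obtain ⟨B', hB'⟩ := hst.bdd hN
  have hN' : (0:ℝ) < N := by exact_mod_cast hN
  have hig : Integrable fun x : ℝ => κ ⌊N * x⌋ * (f x - avg N f x) := by
    refine integrable_of_bdd_supp (B := (∑ j ∈ Finset.Ico (0:ℤ) N, |κ j|) * (B + B'))
      ((measurable_floor_comp N κ).mul (hm.sub hst.meas)) (fun x => ?_) (fun x hx => ?_)
    · by_cases hx : x ∈ Ico (0:ℝ) 1
      · rw [abs_mul]
        refine mul_le_mul ?_ ((abs_sub _ _).trans (add_le_add (hB x) (hB' x))) (abs_nonneg _)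
          (Finset.sum_nonneg fun i _ => abs_nonneg _)
        exact Finset.single_le_sum (f := fun j => |κ j|) (fun i _ => abs_nonneg _) (floor_mem hN hx)
      · rw [hs x hx, hst.supp x hx]; simp
        exact mul_nonneg (Finset.sum_nonneg fun i _ => abs_nonneg _)
          (add_nonneg ((abs_nonneg _).trans (hB 0)) ((abs_nonneg _).trans (hB' 0)))
    · rw [hs x hx, hst.supp x hx]; simp
  rw [integral_eq_sum_cells hN hig (fun x hx => by rw [hs x hx, hst.supp x hx]; simp)]
  refine Finset.sum_eq_zero fun j _ => ?_
  have e : ∫ x in cell N j, κ ⌊N * x⌋ * (f x - avg N f x) =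
      ∫ x in cell N j, κ j * (f x - N * ∫ y in cell N j, f y) := by
    refine setIntegral_congr_fun (measurableSet_cell N j) fun x hx => ?_
    have : ⌊(N:ℝ) * x⌋ = j := hx
    simp only [avg, this]
  have hv : volume (cell N j) ≠ ⊤ := by rw [volume_cell hN]; exact ENNReal.ofReal_ne_top
  rw [e, integral_const_mul, integral_sub hi.integrableOn (integrableOn_const hv)]
  rw [setIntegral_const, measureReal_def, volume_cell hN, ENNReal.toReal_ofReal (by positivity)]
  simp only [smul_eq_mul]
  field_simp
  simp

theorem MeanZero.ip_eq_zero {N : ℕ} {f u : ℝ → ℝ} (hf : MeanZero N f) (hu : IsStep N u) :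
    ip u f = 0 := by
  obtain ⟨c, hc⟩ := hu.const
  have := hf c
  unfold ip
  simpa only [hc] using this

/-- Points within `η` of an end point of their cell of length `1/N`. -/
def near (N : ℕ) (η : ℝ) : Set ℝ :=
  {x | Int.fract (N * x) ≤ N * η ∨ 1 - Int.fract (N * x) ≤ N * η}

theorem measurableSet_near (N : ℕ) (η : ℝ) : MeasurableSet (near N η) := by
  have h : Measurable fun x : ℝ => Int.fract ((N:ℝ) * x) :=
    measurable_fract.comp (by fun_prop)
  exact (measurableSet_le h measurable_const).union
    (measurableSet_le (measurable_const.sub h) measurable_const)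

theorem mem_near {N : ℕ} {x y η : ℝ} (h : ⌊(N:ℝ) * x⌋ ≠ ⌊(N:ℝ) * y⌋) (hxy : |y - x| ≤ η) :
    x ∈ near N η := by
  have hN : (0:ℝ) ≤ N := Nat.cast_nonneg N
  have h1 : |(N:ℝ) * y - N * x| ≤ N * η := by
    rw [← mul_sub, abs_mul, abs_of_nonneg hN]; gcongr
  rw [abs_le] at h1
  rcases lt_or_gt_of_ne h with h | h
  · right
    have : (⌊(N:ℝ) * x⌋ : ℝ) + 1 ≤ ⌊(N:ℝ) * y⌋ := by exact_mod_cast h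
    have := Int.floor_le ((N:ℝ) * y)
    rw [Int.fract]; linarith
  · left
    have : (⌊(N:ℝ) * y⌋ : ℝ) + 1 ≤ ⌊(N:ℝ) * x⌋ := by exact_mod_cast h
    have := Int.lt_floor_add_one ((N:ℝ) * y)
    rw [Int.fract]; linarith

theorem volume_near_cell {N : ℕ} (hN : 0 < N) {η : ℝ} (hη : 0 ≤ η) (j : ℤ) :
    volume.real (near N η ∩ cell N j) ≤ 2 * η := by
  have hN' : (0:ℝ) < N := by exact_mod_cast hN
  have hsub : near N η ∩ cell N j ⊆ Icc ((j:ℝ) / N) (j / N + η) ∪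
      Icc ((j + 1 : ℝ) / N - η) ((j + 1 : ℝ) / N) := by
    rintro x ⟨hx, hj⟩
    have hj' : ⌊(N:ℝ) * x⌋ = j := hj
    have hI := (cell_eq hN j) ▸ hj
    simp only [near, mem_ofPred_eq, Int.fract, hj'] at hx
    rcases hx with hx | hx
    · left
      refine ⟨hI.1, ?_⟩
      rw [← sub_le_iff_le_add', ]
      have : x - j / N = (N * x - j) / N := by field_simp
      rw [this, div_le_iff₀ hN']; linarith
    · right
      refine ⟨?_, hI.2.le⟩
      have : (j + 1 : ℝ) / N - x = (1 - (N * x - j)) / N := by field_simp; ring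
      have h2 : (j + 1 : ℝ) / N - x ≤ η := by rw [this, div_le_iff₀ hN']; linarith
      linarith
  refine (measureReal_mono hsub (by simp)).trans ((measureReal_union_le _ _).trans ?_)
  rw [Real.volume_real_Icc_of_le (by linarith), Real.volume_real_Icc_of_le (by linarith)]
  linarith

theorem integral_near {N : ℕ} (hN : 0 < N) {η : ℝ} (hη : 0 ≤ η) {f : ℝ → ℝ} (hf : IsStep N f) :
    ∫ x, (near N η).indicator (fun x => f x ^ 2) x ≤ 2 * η * N * nsq f := by
  have hN' : (0:ℝ) < N := by exact_mod_cast hN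
  have hl := (hf.l2 hN).int
  obtain ⟨c, hc⟩ := hf.const
  unfold nsq
  rw [integral_eq_sum_cells hN (hl.indicator (measurableSet_near N η)) (fun x hx => by
      rw [indicator_apply_eq_zero]; intro _; rw [hf.supp x hx]; norm_num),
    integral_eq_sum_cells hN hl (fun x hx => by rw [hf.supp x hx]; norm_num), Finset.mul_sum]
  refine Finset.sum_le_sum fun j _ => ?_
  rw [setIntegral_indicator (measurableSet_near N η)]
  have e1 : ∫ x in cell N j ∩ near N η, f x ^ 2 = ∫ x in cell N j ∩ near N η, c j ^ 2 :=
    setIntegral_congr_fun ((measurableSet_cell N j).inter (measurableSet_near N η))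
      fun x hx => by
        have : ⌊(N:ℝ) * x⌋ = j := hx.1
        simp only [hc, this]
  have e2 : ∫ x in cell N j, f x ^ 2 = ∫ x in cell N j, c j ^ 2 :=
    setIntegral_congr_fun (measurableSet_cell N j) fun x hx => by
        have : ⌊(N:ℝ) * x⌋ = j := hx
        simp only [hc, this]
  rw [e1, e2, setIntegral_const, setIntegral_const, smul_eq_mul, smul_eq_mul,
    measureReal_def (μ := volume) (s := cell N j), volume_cell hN,
    ENNReal.toReal_ofReal (by positivity), inter_comm]
  have := volume_near_cell hN hη j
  calc volume.real (near N η ∩ cell N j) * c j ^ 2 ≤ 2 * η * c j ^ 2 := by gcongr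
    _ = _ := by field_simp

/-! ### Möbius maps close to the identity -/

/-- All entries of `h` are within `η` of those of the identity. -/
def NearOne (η : ℝ) (h : Mat) : Prop := ∀ i j, |h i j - (1 : Mat) i j| ≤ η

theorem NearOne.entries {η : ℝ} {h : Mat} (hh : NearOne η h) :
    |h 0 0 - 1| ≤ η ∧ |h 0 1| ≤ η ∧ |h 1 0| ≤ η ∧ |h 1 1 - 1| ≤ η := by
  refine ⟨?_, ?_, ?_, ?_⟩
  · simpa using hh 0 0
  · simpa using hh 0 1
  · simpa using hh 1 0
  · simpa using hh 1 1

theorem NearOne.det_bound {η : ℝ} {h : Mat} (hη : η ≤ 1 / 10) (hh : NearOne η h)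
    : |h.det - 1| ≤ 2.2 * η := by
  obtain ⟨h1, h2, h3, h4⟩ := hh.entries
  rw [det_eq]
  have h0 : 0 ≤ η := (abs_nonneg _).trans h1
  have e : h 0 0 * h 1 1 - h 0 1 * h 1 0 - 1 =
    (h 0 0 - 1) + (h 1 1 - 1) + ((h 0 0 - 1) * (h 1 1 - 1) - h 0 1 * h 1 0) := by ring
  have a1 : |(h 0 0 - 1) * (h 1 1 - 1)| ≤ η * η := by rw [abs_mul]; gcongr
  have a2 : |h 0 1 * h 1 0| ≤ η * η := by rw [abs_mul]; gcongr
  rw [e]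
  rw [abs_le] at *
  constructor <;> nlinarith

theorem NearOne.det_pos {η : ℝ} {h : Mat} (hη : η ≤ 1 / 10) (hh : NearOne η h)
    : 0 < h.det := by
  have := hh.det_bound hη
  rw [abs_le] at this
  linarith

theorem NearOne.den_bound {η : ℝ} {h : Mat} (hh : NearOne η h) {x : ℝ} (hx : |x| ≤ 2) : |den h x - 1| ≤ 3 * η := by
  obtain ⟨h1, h2, h3, h4⟩ := hh.entries
  have e : den h x - 1 = h 1 0 * x + (h 1 1 - 1) := by unfold den; ring
  have a1 : |h 1 0 * x| ≤ η * 2 := by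
    rw [abs_mul]; exact mul_le_mul h3 hx (abs_nonneg _) ((abs_nonneg _).trans h3)
  rw [e]
  rw [abs_le] at *
  constructor <;> linarith

theorem NearOne.den_ge {η : ℝ} {h : Mat} (hη : η ≤ 1 / 10) (hh : NearOne η h)
    {x : ℝ} (hx : |x| ≤ 2) : 0.7 ≤ den h x ∧ den h x ≤ 1.3 := by
  have := hh.den_bound hx
  rw [abs_le] at this
  constructor <;> linarith

theorem NearOne.mob_bound {η : ℝ} {h : Mat} (hη : η ≤ 1 / 10) (hh : NearOne η h)
    {x : ℝ} (hx : |x| ≤ 2) : |mob h x - x| ≤ 13 * η := by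
  obtain ⟨h1, h2, h3, h4⟩ := hh.entries
  have h0 : 0 ≤ η := (abs_nonneg _).trans h1
  have hd := hh.den_ge hη hx
  have hd0 : 0 < den h x := by linarith
  have e : mob h x - x = ((h 0 0 - 1) * x + h 0 1 - h 1 0 * (x * x) - (h 1 1 - 1) * x) / den h x := by
    unfold mob; rw [div_sub' hd0.ne']; congr 1; unfold den; ring
  have a1 : |(h 0 0 - 1) * x| ≤ η * 2 := by rw [abs_mul]; gcongr
  have a2 : |(h 1 1 - 1) * x| ≤ η * 2 := by rw [abs_mul]; gcongr
  have a3 : |h 1 0 * (x * x)| ≤ η * (2 * 2) := by rw [abs_mul, abs_mul]; gcongr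
  rw [e, abs_div, abs_of_pos hd0, div_le_iff₀ hd0]
  refine le_trans (b := 9 * η) ?_ (by nlinarith)
  clear e hx
  rw [abs_le] at *
  constructor <;> linarith

theorem NearOne.wt_bound {η : ℝ} {h : Mat} (hη : η ≤ 1 / 10) (hh : NearOne η h)
    {x : ℝ} (hx : |x| ≤ 2) : |wt h x - 1| ≤ 19 * η := by
  have h0 : 0 ≤ η := (abs_nonneg _).trans (hh 0 0)
  have hd := hh.den_ge hη hx
  have hdb := hh.den_bound hx
  have hdet := hh.det_bound hη
  have hd0 : 0 < den h x := by linarith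
  have hw := wt_nonneg h x
  have e := wt_sq (hh.det_pos hη) x
  have e2 : (wt h x - 1) * (wt h x + 1) = (h.det - den h x ^ 2) / den h x ^ 2 := by
    rw [sub_div, div_self (by positivity), ← e]; ring
  have e3 : |wt h x - 1| ≤ |(wt h x - 1) * (wt h x + 1)| := by
    rw [abs_mul]
    refine le_mul_of_one_le_right (abs_nonneg _) ?_
    rw [abs_of_nonneg (by linarith)]; linarith
  refine e3.trans ?_
  rw [e2, abs_div, abs_of_pos (by positivity : 0 < den h x ^ 2), div_le_iff₀ (by positivity)]
  have a1 : |den h x ^ 2 - 1| ≤ 6.9 * η := by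
    have : den h x ^ 2 - 1 = (den h x - 1) * (den h x + 1) := by ring
    rw [this, abs_mul, abs_of_nonneg (by linarith : 0 ≤ den h x + 1)]
    nlinarith [abs_nonneg (den h x - 1)]
  have a2 : 0.49 ≤ den h x ^ 2 := by nlinarith
  refine le_trans (b := 9.1 * η) ?_ (by nlinarith)
  rw [abs_le] at *
  constructor <;> linarith

theorem NearOne.mob_lip {η : ℝ} {h : Mat} (hη : η ≤ 1 / 10) (hh : NearOne η h)
    {x y : ℝ} (hx : |x| ≤ 2) (hy : |y| ≤ 2) :
    |mob h y - mob h x| ≤ 2.5 * |y - x| := by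
  have hd := hh.den_ge hη hx
  have hd' := hh.den_ge hη hy
  have hdet := hh.det_bound hη
  have hp : 0 < den h x * den h y := mul_pos (by linarith) (by linarith)
  have e : mob h y - mob h x = h.det * (y - x) / (den h x * den h y) := by
    unfold mob
    rw [div_sub_div _ _ (by linarith) (by linarith), det_eq]
    congr 1 <;> (unfold den; ring)
  rw [e, abs_div, abs_of_pos hp, abs_mul, div_le_iff₀ hp, abs_of_pos (hh.det_pos hη)]
  rw [abs_le] at hdet
  have : 0.49 ≤ den h x * den h y := by nlinarith
  nlinarith [abs_nonneg (y - x)]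

theorem NearOne.wt_lip {η : ℝ} {h : Mat} (hη : η ≤ 1 / 10) (hh : NearOne η h)
    {x y : ℝ} (hx : |x| ≤ 2) (hy : |y| ≤ 2) :
    |wt h y - wt h x| ≤ |y - x| := by
  obtain ⟨h1, h2, h3, h4⟩ := hh.entries
  have hd := hh.den_ge hη hx
  have hd' := hh.den_ge hη hy
  have hdet := hh.det_bound hη
  rw [abs_le] at hdet
  have hp : 0 < den h x * den h y := mul_pos (by linarith) (by linarith)
  have e : wt h y - wt h x = √h.det * (-h 1 0) * (y - x) / (den h x * den h y) := by
    unfold wt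
    rw [abs_of_nonneg (by linarith), abs_of_nonneg (by linarith : 0 ≤ den h x),
      div_sub_div _ _ (by linarith) (by linarith)]
    congr 1 <;> (unfold den; ring)
  have hs : √h.det ≤ 1.2 := Real.sqrt_le_iff.2 ⟨by norm_num, by nlinarith⟩
  rw [e, abs_div, abs_of_pos hp, abs_mul, div_le_iff₀ hp, abs_mul, abs_neg,
    abs_of_nonneg (Real.sqrt_nonneg _)]
  have : 0.49 ≤ den h x * den h y := by nlinarith
  have h5 : √h.det * |h 1 0| ≤ 1.2 * 0.1 := by
    refine mul_le_mul hs (by linarith) (abs_nonneg _) (by norm_num)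
  nlinarith [abs_nonneg (y - x)]

theorem NearOne.preimage_bound {η : ℝ} {h : Mat} (hη : η ≤ 1 / 10) (hh : NearOne η h)
    {x : ℝ} (hd : den h x ≠ 0) (hx : mob h x ∈ Ico (0:ℝ) 1) :
    |x| ≤ 2 := by
  obtain ⟨h1, h2, h3, h4⟩ := hh.entries
  set y := mob h x with hy
  have e : y * den h x = h 0 0 * x + h 0 1 := by rw [hy]; unfold mob; field_simp
  have e2 : x * (h 0 0 - y * h 1 0) = y * h 1 1 - h 0 1 := by unfold den at e; linarith
  obtain ⟨y0, y1⟩ := hx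
  have a1 : |y * h 1 0| ≤ 1 * η := by
    rw [abs_mul]; exact mul_le_mul (by rw [abs_of_nonneg y0]; exact y1.le) h3 (abs_nonneg _) (by norm_num)
  have a2 : |y * h 1 1| ≤ 1 * 1.1 := by
    rw [abs_mul]
    refine mul_le_mul (by rw [abs_of_nonneg y0]; exact y1.le) ?_ (abs_nonneg _) (by norm_num)
    rw [abs_le] at *; constructor <;> linarith
  have a3 : 0.8 ≤ h 0 0 - y * h 1 0 := by rw [abs_le] at *; linarith
  have a4 : |y * h 1 1 - h 0 1| ≤ 1.2 := by rw [abs_le] at *; constructor <;> linarith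
  rw [← e2, abs_mul, abs_of_pos (by linarith : 0 < h 0 0 - y * h 1 0)] at a4
  nlinarith [abs_nonneg x]

/-- A step function is barely moved by a Möbius map which is close to the identity on the scale
of its cells. -/
theorem nsq_sl_sub_le {η : ℝ} {h : Mat} (hη : η ≤ 1 / 10) (hh : NearOne η h)
    {N : ℕ} (hN : 0 < N) {f : ℝ → ℝ} (hf : IsStep N f) :
    nsq (fun x => sl h f x - f x) ≤ 150 * η * N * nsq f := by
  have h0 : 0 ≤ η := (abs_nonneg _).trans (hh 0 0)
  have hN' : (1:ℝ) ≤ N := by exact_mod_cast hN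
  have hdet := hh.det_pos hη
  have hl := hf.l2 hN
  obtain ⟨c, hc⟩ := hf.const
  set φ : ℝ → ℝ := (near N (13 * η)).indicator (fun x => f x ^ 2) with hφ
  have hφi : Integrable φ := hl.int.indicator (measurableSet_near _ _)
  have hφ0 : ∀ x, 0 ≤ φ x := fun x => indicator_nonneg (fun _ _ => sq_nonneg _) x
  have hφI := integral_near hN (by positivity : 0 ≤ 13 * η) hf
  simp only [← hφ] at hφI
  have hpt : ∀ᵐ x, (sl h f x - f x) ^ 2 ≤
      (361 * η ^ 2) * f x ^ 2 + (2 * (wt h x ^ 2 * φ (mob h x)) + 2 * φ x) := by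
    filter_upwards [den_ne_ae hdet] with x hd
    have p1 : 0 ≤ wt h x ^ 2 * φ (mob h x) := mul_nonneg (sq_nonneg _) (hφ0 _)
    have p2 := hφ0 x
    unfold sl
    by_cases hfe : f (mob h x) = f x
    · by_cases hz : f x = 0
      · rw [hfe, hz]; simp; linarith
      · have hx : x ∈ Ico (0:ℝ) 1 := by by_contra hx; exact hz (hf.supp x hx)
        have hw := hh.wt_bound hη (x := x) (by rw [abs_of_nonneg hx.1]; linarith [hx.2])
        have : (wt h x - 1) ^ 2 ≤ 361 * η ^ 2 := by
          rw [← sq_abs]; nlinarith [abs_nonneg (wt h x - 1)]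
        rw [hfe, show wt h x * f x - f x = (wt h x - 1) * f x by ring, mul_pow]
        nlinarith [mul_le_mul_of_nonneg_right this (sq_nonneg (f x))]
    · have hx2 : |x| ≤ 2 := by
        by_cases hx : x ∈ Ico (0:ℝ) 1
        · rw [abs_of_nonneg hx.1]; linarith [hx.2]
        · refine hh.preimage_bound hη hd ?_
          by_contra hm
          exact hfe (by rw [hf.supp x hx, hf.supp _ hm])
      have hfl : ⌊(N:ℝ) * mob h x⌋ ≠ ⌊(N:ℝ) * x⌋ := fun e => hfe (by rw [hc, hc, e])
      have hm := hh.mob_bound hη hx2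
      have n1 : x ∈ near N (13 * η) := mem_near hfl.symm hm
      have n2 : mob h x ∈ near N (13 * η) := mem_near hfl (by rwa [abs_sub_comm])
      have e1 : φ x = f x ^ 2 := indicator_of_mem n1 _
      have e2 : φ (mob h x) = f (mob h x) ^ 2 := indicator_of_mem n2 _
      rw [e1, e2]
      nlinarith [sq_nonneg (wt h x * f (mob h x) + f x), sq_nonneg (η * f x)]
  have i1 := hl.int.const_mul (361 * η ^ 2)
  have i2 := (integrable_mob hdet hφi).const_mul 2
  have i3 := hφi.const_mul 2
  have i23 : Integrable (fun x => 2 * (wt h x ^ 2 * φ (mob h x)) + 2 * φ x) := i2.add i3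
  have hI : nsq (fun x => sl h f x - f x) ≤ _ :=
    integral_mono_ae ((hl.sl hdet).sub hl).int (i1.add i23) hpt
  rw [show ((fun x => (361 * η ^ 2) * f x ^ 2) + fun x => 2 * (wt h x ^ 2 * φ (mob h x)) + 2 * φ x) =
    fun x => (361 * η ^ 2) * f x ^ 2 + (2 * (wt h x ^ 2 * φ (mob h x)) + 2 * φ x) from rfl,
    integral_add i1 i23, integral_add i2 i3, integral_const_mul, integral_const_mul,
    integral_const_mul, integral_mob hdet] at hI
  have hn := nsq_nonneg f
  change _ ≤ 361 * η ^ 2 * nsq f + _ at hI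
  have : 361 * η ^ 2 * nsq f ≤ 40 * (η * N * nsq f) := by
    have h1 : η ^ 2 * nsq f ≤ (1 / 10) * (η * nsq f) := by
      rw [sq, mul_assoc]; exact mul_le_mul_of_nonneg_right hη (by positivity)
    have h2 : η * nsq f ≤ η * N * nsq f := by
      rw [mul_assoc]
      exact mul_le_mul_of_nonneg_left (le_mul_of_one_le_left hn hN') h0
    have h3 : 0 ≤ η * N * nsq f := by positivity
    linarith
  have h3 : 0 ≤ η * N * nsq f := by positivity
  linarith

/-- Almost orthogonality of a step function moved by a Möbius map near the identity to a function
with mean zero on much shorter cells. -/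
theorem cross_bound {η : ℝ} {h : Mat} (hη : η ≤ 1 / 10) (hh : NearOne η h)
    {N N' : ℕ} (hN : 0 < N) (hNN : N ≤ N') {u v : ℝ → ℝ} (hu : IsStep N u)
    (hv : MeanZero N' v) (hvl : L2 v) (hvs : ∀ x, x ∉ Ico (0:ℝ) 1 → v x = 0) :
    ip (sl h u) v ^ 2 ≤ 9 * (N / N') * nsq u * nsq v := by
  classical
  have hN1 : (1:ℝ) ≤ N := by exact_mod_cast hN
  have hN1' : (1:ℝ) ≤ N' := by exact_mod_cast hN.trans_le hNN
  have hN'0 : (0:ℝ) < N' := by linarith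
  have hdet := hh.det_pos hη
  have hl := hu.l2 hN
  obtain ⟨c, hc⟩ := hu.const
  let good : ℤ → Prop := fun j => ∀ x ∈ cell N' j, ⌊(N:ℝ) * mob h x⌋ = ⌊(N:ℝ) * mob h (j / N')⌋
  let κ : ℤ → ℝ := fun j => if good j then sl h u (j / N') else 0
  set φ : ℝ → ℝ := (near N (2.5 / N')).indicator (fun x => u x ^ 2) with hφ
  have hφi : Integrable φ := hl.int.indicator (measurableSet_near _ _)
  have hφ0 : ∀ x, 0 ≤ φ x := fun x => indicator_nonneg (fun _ _ => sq_nonneg _) x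
  have hφI := integral_near hN (by positivity : 0 ≤ 2.5 / (N':ℝ)) hu
  simp only [← hφ] at hφI
  let D : ℝ → ℝ := (Ico (0:ℝ) 1).indicator (fun x => sl h u x - κ ⌊N' * x⌋)
  have hDm : Measurable D :=
    ((measurable_sl h hl.meas).sub (measurable_floor_comp N' κ)).indicator measurableSet_Ico
  have hpt : ∀ x, D x ^ 2 ≤ (4 / N' ^ 2) * (wt h x ^ 2 * u (mob h x) ^ 2) +
      wt h x ^ 2 * φ (mob h x) := by
    intro x
    have p1 : 0 ≤ wt h x ^ 2 * φ (mob h x) := mul_nonneg (sq_nonneg _) (hφ0 _)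
    by_cases hx : x ∈ Ico (0:ℝ) 1
    · have e : D x = sl h u x - κ ⌊N' * x⌋ := indicator_of_mem hx _
      rw [e]
      set j := ⌊(N':ℝ) * x⌋ with hj
      have hx2 : |x| ≤ 2 := by rw [abs_of_nonneg hx.1]; linarith [hx.2]
      have hj0 : (0:ℝ) ≤ j := by
        exact_mod_cast Int.floor_nonneg.2 (mul_nonneg hN'0.le hx.1)
      have hcl : ∀ y ∈ cell N' j, (j:ℝ) / N' ≤ y ∧ y < (j + 1 : ℝ) / N' := fun y hy => by
        rw [cell_eq (hN.trans_le hNN)] at hy; exact hy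
      have hxc := hcl x rfl
      have hll : |x - j / N'| ≤ 1 / N' := by
        rw [add_div] at hxc
        rw [abs_of_nonneg (by linarith)]; linarith
      have hl2 : |(j:ℝ) / N'| ≤ 2 := by
        rw [abs_of_nonneg (by positivity)]; linarith [hx.2]
      by_cases hg : good j
      · have e1 : κ j = sl h u (j / N') := if_pos hg
        have e2 : u (mob h (j / N')) = u (mob h x) := by rw [hc, hc, hg x rfl]
        rw [e1]; unfold sl; rw [e2, ← sub_mul, mul_pow]
        have hw1 := hh.wt_lip hη hl2 hx2
        have hw2 := hh.wt_bound hη hx2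
        have hw4 : 1 / 2 ≤ wt h x := by
          have hd := hh.den_ge hη hx2
          have hdb := hh.det_bound hη
          rw [abs_le] at hdb
          unfold wt
          rw [abs_of_pos (by linarith), le_div_iff₀ (by linarith)]
          have : 0.8 ≤ √h.det := Real.le_sqrt_of_sq_le (by nlinarith)
          linarith
        have hw3 : (wt h x - wt h (j / N')) ^ 2 ≤ (1 / N') ^ 2 := by
          rw [← sq_abs]; exact pow_le_pow_left₀ (abs_nonneg _) (hw1.trans hll) 2
        have hw5 : (1 / N' : ℝ) ^ 2 ≤ 4 / N' ^ 2 * wt h x ^ 2 := by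
          rw [div_pow, one_pow, div_mul_eq_mul_div]
          gcongr
          nlinarith
        nlinarith [mul_le_mul_of_nonneg_right (hw3.trans hw5) (sq_nonneg (u (mob h x)))]
      · have e1 : κ j = 0 := if_neg hg
        have hn : mob h x ∈ near N (2.5 / N') := by
          simp only [good, not_forall] at hg
          obtain ⟨y, hy, hne⟩ := hg
          have hyc := hcl y hy
          have hj1 : (j + 1 : ℝ) / N' ≤ 1 := by
            have := (Finset.mem_Ico.1 (floor_mem (hN.trans_le hNN) hx)).2
            rw [div_le_one hN'0]; exact_mod_cast this
          have key : ∀ z, (j:ℝ) / N' ≤ z → z < (j + 1 : ℝ) / N' →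
              |mob h z - mob h x| ≤ 2.5 / N' := by
            intro z hz1 hz2
            have hz0 : (0:ℝ) ≤ j / N' := by positivity
            refine (hh.mob_lip hη hx2 (by rw [abs_of_nonneg (by linarith)]; linarith)).trans ?_
            rw [div_eq_mul_one_div]
            gcongr
            rw [add_div] at hz2 hxc
            rw [abs_le]; constructor <;> linarith
          by_cases hxx : ⌊(N:ℝ) * mob h x⌋ = ⌊(N:ℝ) * mob h y⌋
          · have : (j:ℝ) / N' < (j + 1 : ℝ) / N' := by gcongr; linarith
            exact mem_near (fun e => hne (hxx.symm.trans e)) (key _ le_rfl this)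
          · exact mem_near hxx (key _ hyc.1 hyc.2)
        have e2 : φ (mob h x) = u (mob h x) ^ 2 := indicator_of_mem hn _
        rw [e1, e2]; unfold sl
        have : 0 ≤ 4 / (N':ℝ) ^ 2 * (wt h x ^ 2 * u (mob h x) ^ 2) := by positivity
        rw [sub_zero, mul_pow]; linarith
    · have e : D x = 0 := indicator_of_notMem hx _
      rw [e]
      have : 0 ≤ 4 / (N':ℝ) ^ 2 * (wt h x ^ 2 * u (mob h x) ^ 2) := by positivity
      nlinarith
  have i1 := (integrable_mob hdet hl.int).const_mul (4 / (N':ℝ) ^ 2)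
  have i2 := integrable_mob hdet hφi
  have i12 : Integrable (fun x => (4 / (N':ℝ) ^ 2) * (wt h x ^ 2 * u (mob h x) ^ 2) +
      wt h x ^ 2 * φ (mob h x)) := i1.add i2
  have hDi : Integrable (fun x => D x ^ 2) :=
    i12.mono' (hDm.pow_const 2).aestronglyMeasurable
      (Filter.Eventually.of_forall fun x => by
        rw [Real.norm_of_nonneg (sq_nonneg _)]; exact hpt x)
  have hD : L2 D := ⟨hDm, hDi⟩
  have hI : nsq D ≤ _ := integral_mono hDi i12 hpt
  rw [integral_add i1 i2, integral_const_mul, integral_mob hdet,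
    integral_mob hdet (fun x => u x ^ 2)] at hI
  change _ ≤ 4 / (N':ℝ) ^ 2 * nsq u + _ at hI
  have hn := nsq_nonneg u
  have hD9 : nsq D ≤ 9 * (N / N') * nsq u := by
    have h1 : (4:ℝ) / N' ^ 2 ≤ 4 * (N / N') := by
      rw [div_le_iff₀ (by positivity)]
      have : 4 * ((N:ℝ) / N') * N' ^ 2 = 4 * (N * N') := by field_simp
      rw [this]; nlinarith
    have h2 := mul_le_mul_of_nonneg_right h1 hn
    have h3 : 2 * (2.5 / (N':ℝ)) * N * nsq u = 5 * (N / N') * nsq u := by ring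
    linarith
  have hip : ip (sl h u) v = ip D v := by
    have hz := hv κ
    have s1 : Integrable fun x => sl h u x * v x := (hl.sl hdet).mul hvl
    have s2 : Integrable fun x => D x * v x := hD.mul hvl
    have e : ∀ x : ℝ, κ ⌊N' * x⌋ * v x = sl h u x * v x - D x * v x := by
      intro x
      by_cases hx : x ∈ Ico (0:ℝ) 1
      · have e : D x = sl h u x - κ ⌊N' * x⌋ := indicator_of_mem hx _
        rw [e]; ring
      · rw [hvs x hx]; ring
    simp_rw [e] at hz
    rw [integral_sub s1 s2] at hz
    unfold ip; linarith
  rw [hip]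
  exact (ip_sq_le hD hvl).trans (mul_le_mul_of_nonneg_right hD9 (nsq_nonneg v))

/-! ### Averaging over affine maps -/

/-- Bounded measurable functions vanishing off `[0,1)`. -/
structure BddSupp (f : ℝ → ℝ) : Prop where
  meas : Measurable f
  bdd : ∃ B, 0 ≤ B ∧ ∀ x, |f x| ≤ B
  supp : ∀ x, x ∉ Ico (0:ℝ) 1 → f x = 0

theorem BddSupp.integrable {f : ℝ → ℝ} (hf : BddSupp f) : Integrable f := by
  obtain ⟨B, _, hB⟩ := hf.bdd
  exact integrable_of_bdd_supp hf.meas hB hf.supp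

theorem BddSupp.l2 {f : ℝ → ℝ} (hf : BddSupp f) : L2 f := by
  obtain ⟨B, _, hB⟩ := hf.bdd
  refine ⟨hf.meas, integrable_of_bdd_supp (hf.meas.pow_const 2) (B := B ^ 2) (fun x => ?_) ?_⟩
  · rw [abs_pow]; exact pow_le_pow_left₀ (abs_nonneg _) (hB x) 2
  · intro x hx; rw [hf.supp x hx]; norm_num

theorem IsStep.bddSupp {N : ℕ} (hN : 0 < N) {f : ℝ → ℝ} (hf : IsStep N f) : BddSupp f := by
  obtain ⟨B, hB⟩ := hf.bdd hN
  exact ⟨hf.meas, ⟨B, (abs_nonneg _).trans (hB 0), hB⟩, hf.supp⟩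

/-- The measure on affine maps `x ↦ αx + β`: Lebesgue measure in `β` and in `α ∈ [1/2, 5]`. -/
noncomputable def affM : Measure (ℝ × ℝ) :=
  ((volume : Measure ℝ).restrict (Icc (1 / 2) 5)).prod volume

instance : SFinite affM := by unfold affM; infer_instance

theorem lintegral_affine_le {B : ENNReal} {α β : ℝ} (hα : α ∈ Icc (1 / 2 : ℝ) 5) :
    ∫⁻ y, (Ico (0:ℝ) 1).indicator (fun _ => B) (α * y + β) ≤ B * 2 := by
  have h0 : 0 < α := by have := hα.1; linarith
  have : ∀ y, (Ico (0:ℝ) 1).indicator (fun _ => B) (α * y + β) ≤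
      (Icc (-β / α) (-β / α + 2)).indicator (fun _ => B) y := by
    intro y
    by_cases hy : α * y + β ∈ Ico (0:ℝ) 1
    · rw [indicator_of_mem hy, indicator_of_mem]
      constructor
      · rw [div_le_iff₀ h0]; linarith [hy.1]
      · have : y = -β / α + (α * y + β) / α := by field_simp; ring
        rw [this]
        gcongr
        rw [div_le_iff₀ h0]; linarith [hy.2, hα.1]
    · rw [indicator_of_notMem hy]; exact zero_le
  refine (lintegral_mono this).trans ?_
  rw [lintegral_indicator measurableSet_Icc, setLIntegral_const, Real.volume_Icc]
  gcongr
  simp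

/-- The integrability needed to apply Fubini's theorem to the squared pairing of `f (αx + β)` with
`F`, averaged over affine maps. -/
theorem integrable_four {f F : ℝ → ℝ} (hf : BddSupp f) (hF : L2 F) :
    Integrable (fun p : (ℝ × ℝ) × (ℝ × ℝ) =>
      (f (p.1.1 * p.2.1 + p.1.2) * F p.2.1) * (f (p.1.1 * p.2.2 + p.1.2) * F p.2.2))
      (affM.prod (volume.prod volume)) := by
  obtain ⟨B, hB0, hB⟩ := hf.bdd
  have hfm := hf.meas
  have hFm := hF.meas
  have hmeas : Measurable (fun p : (ℝ × ℝ) × (ℝ × ℝ) =>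
      (f (p.1.1 * p.2.1 + p.1.2) * F p.2.1) * (f (p.1.1 * p.2.2 + p.1.2) * F p.2.2)) := by
    fun_prop
  refine ⟨hmeas.aestronglyMeasurable, ?_⟩
  rw [hasFiniteIntegral_iff_enorm]
  set e : ℝ → ENNReal := (Ico (0:ℝ) 1).indicator (fun _ => ENNReal.ofReal B) with he
  have hem : Measurable e := measurable_const.indicator measurableSet_Ico
  have hfe : ∀ t, ‖f t‖ₑ ≤ e t := by
    intro t
    by_cases ht : t ∈ Ico (0:ℝ) 1
    · rw [he, indicator_of_mem ht, Real.enorm_eq_ofReal_abs]; exact ENNReal.ofReal_le_ofReal (hB t)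
    · rw [hf.supp t ht]; simp
  set q : ℝ → ENNReal := fun x => ‖F x‖ₑ * ‖F x‖ₑ with hq
  have hqm : Measurable q := by fun_prop
  have hqf : ∫⁻ x, q x < ⊤ := by
    have := hF.int.2
    rw [hasFiniteIntegral_iff_enorm] at this
    convert this using 3 with x
    rw [sq, enorm_mul]
  rw [lintegral_prod _ hmeas.enorm.aemeasurable]
  have inner : ∀ w : ℝ × ℝ, w.1 ∈ Icc (1 / 2 : ℝ) 5 →
      ∫⁻ z : ℝ × ℝ, ‖(f (w.1 * z.1 + w.2) * F z.1) * (f (w.1 * z.2 + w.2) * F z.2)‖ₑ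
        ∂(volume.prod volume) ≤
      2 * (ENNReal.ofReal B * 2) * ∫⁻ x, e (w.1 * x + w.2) * q x := by
    intro w hw
    have h1 : ∀ z : ℝ × ℝ, ‖(f (w.1 * z.1 + w.2) * F z.1) * (f (w.1 * z.2 + w.2) * F z.2)‖ₑ ≤
        (e (w.1 * z.1 + w.2) * q z.1) * e (w.1 * z.2 + w.2) +
        e (w.1 * z.1 + w.2) * (e (w.1 * z.2 + w.2) * q z.2) := by
      intro z
      have hab : ‖F z.1‖ₑ * ‖F z.2‖ₑ ≤ q z.1 + q z.2 := by
        rcases le_total ‖F z.1‖ₑ ‖F z.2‖ₑ with h | h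
        · exact (mul_le_mul' h le_rfl).trans le_add_self
        · exact (mul_le_mul' le_rfl h).trans le_self_add
      calc ‖(f (w.1 * z.1 + w.2) * F z.1) * (f (w.1 * z.2 + w.2) * F z.2)‖ₑ
          = (‖f (w.1 * z.1 + w.2)‖ₑ * ‖f (w.1 * z.2 + w.2)‖ₑ) * (‖F z.1‖ₑ * ‖F z.2‖ₑ) := by
            simp only [enorm_mul]; ring
        _ ≤ (e (w.1 * z.1 + w.2) * e (w.1 * z.2 + w.2)) * (q z.1 + q z.2) :=
            mul_le_mul' (mul_le_mul' (hfe _) (hfe _)) hab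
        _ = _ := by ring
    have m1 : Measurable fun x => e (w.1 * x + w.2) * q x := by fun_prop
    have m2 : Measurable fun x => e (w.1 * x + w.2) := by fun_prop
    refine (lintegral_mono h1).trans ?_
    rw [lintegral_add_left (by fun_prop), lintegral_prod_mul m1.aemeasurable m2.aemeasurable,
      lintegral_prod_mul m2.aemeasurable m1.aemeasurable]
    have h2 := lintegral_affine_le (B := ENNReal.ofReal B) (β := w.2) hw
    calc _ ≤ (∫⁻ x, e (w.1 * x + w.2) * q x) * (ENNReal.ofReal B * 2) +
        (ENNReal.ofReal B * 2) * ∫⁻ x, e (w.1 * x + w.2) * q x :=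
          add_le_add (mul_le_mul' le_rfl h2) (mul_le_mul' h2 le_rfl)
      _ = _ := by ring
  have hmI : Measurable fun w : ℝ × ℝ => ∫⁻ z : ℝ × ℝ,
      ‖(f (w.1 * z.1 + w.2) * F z.1) * (f (w.1 * z.2 + w.2) * F z.2)‖ₑ ∂(volume.prod volume) :=
    hmeas.enorm.lintegral_prod_right'
  unfold affM
  rw [lintegral_prod _ hmI.aemeasurable]
  have step : ∀ α ∈ Icc (1 / 2 : ℝ) 5, ∫⁻ β, (∫⁻ z : ℝ × ℝ,
      ‖(f (α * z.1 + β) * F z.1) * (f (α * z.2 + β) * F z.2)‖ₑ ∂(volume.prod volume)) ≤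
      2 * (ENNReal.ofReal B * 2) * (ENNReal.ofReal B * ∫⁻ x, q x) := by
    intro α hα
    refine (lintegral_mono fun β => inner (α, β) hα).trans ?_
    have m3 : Measurable (Function.uncurry fun β x => e (α * x + β) * q x) := by
      unfold Function.uncurry; fun_prop
    rw [lintegral_const_mul _ (by exact m3.lintegral_prod_right'),
      lintegral_lintegral_swap m3.aemeasurable]
    gcongr
    rw [← lintegral_const_mul _ hqm]
    refine lintegral_mono fun x => ?_
    simp only
    rw [lintegral_mul_const _ (by fun_prop)]
    gcongr
    have : ∫⁻ β, e (α * x + β) = ∫⁻ t, e t := lintegral_add_left_eq_self e (α * x)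
    rw [this, he, lintegral_indicator measurableSet_Ico, setLIntegral_const, Real.volume_Ico]
    simp
  refine (setLIntegral_mono measurable_const step).trans_lt ?_
  rw [setLIntegral_const, Real.volume_Icc]
  refine ENNReal.mul_lt_top (ENNReal.mul_lt_top ?_ (ENNReal.mul_lt_top ENNReal.ofReal_lt_top hqf))
    ENNReal.ofReal_lt_top
  exact ENNReal.mul_lt_top (by simp) (ENNReal.mul_lt_top ENNReal.ofReal_lt_top (by simp))

/-- The kernel obtained by averaging `f(αx+β) f(αy+β)` over affine maps. -/
noncomputable def kern (f : ℝ → ℝ) (x y : ℝ) : ℝ :=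
  ∫ w, f (w.1 * x + w.2) * f (w.1 * y + w.2) ∂affM

theorem aff_expand {f F : ℝ → ℝ} (hf : BddSupp f) (hF : L2 F) :
    Integrable (fun w : ℝ × ℝ => (∫ x, f (w.1 * x + w.2) * F x) ^ 2) affM ∧
    Integrable (fun z : ℝ × ℝ => F z.1 * F z.2 * kern f z.1 z.2) (volume.prod volume) ∧
    ∫ w, (∫ x, f (w.1 * x + w.2) * F x) ^ 2 ∂affM =
      ∫ z : ℝ × ℝ, F z.1 * F z.2 * kern f z.1 z.2 ∂(volume.prod volume) := by
  have h := integrable_four hf hF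
  have e1 : ∀ w : ℝ × ℝ, ∫ z : ℝ × ℝ, (f (w.1 * z.1 + w.2) * F z.1) *
      (f (w.1 * z.2 + w.2) * F z.2) ∂(volume.prod volume) =
      (∫ x, f (w.1 * x + w.2) * F x) ^ 2 := by
    intro w
    rw [sq]
    exact integral_prod_mul (fun x => f (w.1 * x + w.2) * F x) (fun x => f (w.1 * x + w.2) * F x)
  have e2 : ∀ z : ℝ × ℝ, ∫ w : ℝ × ℝ, (f (w.1 * z.1 + w.2) * F z.1) *
      (f (w.1 * z.2 + w.2) * F z.2) ∂affM = F z.1 * F z.2 * kern f z.1 z.2 := by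
    intro z
    unfold kern
    rw [← integral_const_mul]
    congr 1; ext w; ring
  refine ⟨?_, ?_, ?_⟩
  · have := h.integral_prod_left
    simpa only [e1] using this
  · have := h.integral_prod_right
    simpa only [e2] using this
  · have := integral_integral_swap (f := fun (w : ℝ × ℝ) (z : ℝ × ℝ) =>
      (f (w.1 * z.1 + w.2) * F z.1) * (f (w.1 * z.2 + w.2) * F z.2)) h
    simpa only [e1, e2] using this

theorem ip_shift {f : ℝ → ℝ} (hf : L2 f) (s : ℝ) : |∫ t, f t * f (t + s)| ≤ nsq f := by
  have hg : L2 (fun t => f (t + s)) :=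
    ⟨hf.meas.comp (by fun_prop), hf.int.comp_add_right s⟩
  have h1 : nsq (fun t => f (t + s)) = nsq f := integral_add_right_eq_self (fun t => f t ^ 2) s
  have := abs_ip_le hf hg
  rwa [h1, Real.mul_self_sqrt (nsq_nonneg f)] at this

theorem integral_abs_le {f : ℝ → ℝ} (hf : BddSupp f) : ∫ t, |f t| ≤ √(nsq f) := by
  apply Real.le_sqrt_of_sq_le
  have h1 : BddSupp ((Ico (0:ℝ) 1).indicator fun _ => (1:ℝ)) := by
    refine ⟨measurable_const.indicator measurableSet_Ico, ⟨1, by norm_num, fun x => ?_⟩,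
      fun x hx => indicator_of_notMem hx _⟩
    by_cases hx : x ∈ Ico (0:ℝ) 1
    · rw [indicator_of_mem hx]; norm_num
    · rw [indicator_of_notMem hx]; norm_num
  have h2 : L2 (fun x => |f x|) := ⟨by have := hf.meas; fun_prop, by simpa using hf.l2.int⟩
  have h3 := ip_sq_le h2 h1.l2
  have e1 : ip (fun x => |f x|) ((Ico (0:ℝ) 1).indicator fun _ => (1:ℝ)) = ∫ t, |f t| := by
    unfold ip
    congr 1; ext x
    by_cases hx : x ∈ Ico (0:ℝ) 1
    · rw [indicator_of_mem hx, mul_one]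
    · simp [hf.supp x hx]
  have e2 : nsq (fun x => |f x|) = nsq f := by unfold nsq; simp
  have e3 : nsq ((Ico (0:ℝ) 1).indicator fun _ => (1:ℝ)) = 1 := by
    unfold nsq
    have : (fun x => (Ico (0:ℝ) 1).indicator (fun _ => (1:ℝ)) x ^ 2) =
        (Ico (0:ℝ) 1).indicator fun _ => (1:ℝ) := by
      ext x
      by_cases hx : x ∈ Ico (0:ℝ) 1
      · simp [hx]
      · simp [hx]
    rw [this, integral_indicator measurableSet_Ico]
    simp
  rwa [e1, e2, e3, mul_one] at h3

/-- The primitive of a function with mean zero on all cells of length `1/N` is small, since only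
the cell containing the end point contributes. -/
theorem primitive_bound {N : ℕ} (hN : 0 < N) {f : ℝ → ℝ} (hf : BddSupp f) (h0 : MeanZero N f)
    (t : ℝ) : |∫ x in Iic t, f x| ≤ √(1 / N) * √(nsq f) := by
  classical
  have hN' : (0:ℝ) < N := by exact_mod_cast hN
  set J := ⌊(N:ℝ) * t⌋ with hJ
  let κ : ℤ → ℝ := fun j => if j < J then 1 else 0
  have hk := h0 κ
  let v : ℝ → ℝ := (cell N J ∩ Iic t).indicator fun _ => 1
  have hms : MeasurableSet (cell N J ∩ Iic t) := (measurableSet_cell N J).inter measurableSet_Iic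
  have hpt : ∀ x : ℝ, (Iic t).indicator f x = κ ⌊N * x⌋ * f x + v x * f x := by
    intro x
    rcases lt_trichotomy ⌊(N:ℝ) * x⌋ J with h | h | h
    · have hx : x ≤ t := by
        by_contra hx
        have : J ≤ ⌊(N:ℝ) * x⌋ := Int.floor_mono (by push Not at hx; gcongr)
        omega
      have e1 : κ ⌊(N:ℝ) * x⌋ = 1 := if_pos h
      have e2 : v x = 0 := indicator_of_notMem (fun hx => by
        have : ⌊(N:ℝ) * x⌋ = J := hx.1
        omega) _
      rw [indicator_of_mem (show x ∈ Iic t from hx), e1, e2]; ring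
    · have e1 : κ ⌊(N:ℝ) * x⌋ = 0 := if_neg (by omega)
      by_cases hx : x ≤ t
      · have e2 : v x = 1 := indicator_of_mem (show x ∈ cell N J ∩ Iic t from ⟨h, hx⟩) _
        rw [indicator_of_mem (show x ∈ Iic t from hx), e1, e2]; ring
      · have e2 : v x = 0 := indicator_of_notMem (fun h' => hx h'.2) _
        rw [indicator_of_notMem (show x ∉ Iic t from hx), e1, e2]; ring
    · have hx : ¬ x ≤ t := by
        intro hx
        have : ⌊(N:ℝ) * x⌋ ≤ J := Int.floor_mono (by gcongr)
        omega
      have e1 : κ ⌊(N:ℝ) * x⌋ = 0 := if_neg (by omega)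
      have e2 : v x = 0 := indicator_of_notMem (fun h' => hx h'.2) _
      rw [indicator_of_notMem (show x ∉ Iic t from hx), e1, e2]; ring
  have hv2 : (fun x => v x ^ 2) = v := by
    ext x
    by_cases hx : x ∈ cell N J ∩ Iic t
    · simp [v, hx]
    · simp [v, hx]
  have hfin : volume (cell N J ∩ Iic t) ≤ ENNReal.ofReal (1 / N) :=
    (measure_mono inter_subset_left).trans (volume_cell hN J).le
  have hvi : Integrable v := (integrable_indicator_iff hms).2
    (integrableOn_const (hfin.trans_lt ENNReal.ofReal_lt_top).ne)
  have hvl : L2 v := ⟨measurable_const.indicator hms, by rw [hv2]; exact hvi⟩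
  have hvn : nsq v ≤ 1 / N := by
    unfold nsq
    rw [hv2, integral_indicator hms, setIntegral_const, smul_eq_mul, mul_one, measureReal_def]
    exact ENNReal.toReal_le_of_le_ofReal (by positivity) hfin
  have e : ∫ x in Iic t, f x = ip v f := by
    rw [← integral_indicator measurableSet_Iic]
    have i1 : Integrable ((Iic t).indicator f) := hf.integrable.indicator measurableSet_Iic
    have i2 : Integrable fun x => v x * f x := hvl.mul hf.l2
    have : (fun x : ℝ => κ ⌊N * x⌋ * f x) = fun x => (Iic t).indicator f x - v x * f x := by
      ext x; rw [hpt]; ring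
    rw [this, integral_sub i1 i2] at hk
    unfold ip; linarith
  rw [e]
  refine (abs_ip_le hvl hf.l2).trans ?_
  gcongr

theorem interval_bound {N : ℕ} (hN : 0 < N) {f : ℝ → ℝ} (hf : BddSupp f) (h0 : MeanZero N f)
    (a b : ℝ) : |∫ x in a..b, f x| ≤ 2 * (√(1 / N) * √(nsq f)) := by
  rw [← intervalIntegral.integral_Iic_sub_Iic hf.integrable.integrableOn hf.integrable.integrableOn]
  have h1 := primitive_bound hN hf h0 a
  have h2 := primitive_bound hN hf h0 b
  rw [abs_le] at *
  constructor <;> linarith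

theorem kern_eq {f : ℝ → ℝ} (x y : ℝ)
    (h : Integrable (fun w : ℝ × ℝ => f (w.1 * x + w.2) * f (w.1 * y + w.2)) affM) :
    kern f x y = ∫ α in Icc (1 / 2 : ℝ) 5, ∫ t, f t * f (t + α * (y - x)) := by
  unfold kern affM
  rw [integral_prod _ h]
  congr 1; ext α
  rw [← integral_add_left_eq_self (fun t => f t * f (t + α * (y - x))) (α * x)]
  congr 1; ext β
  simp only
  congr 2; ring

theorem kern_bound {f : ℝ → ℝ} (hf : L2 f) (x y : ℝ) : |kern f x y| ≤ 4.5 * nsq f := by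
  by_cases h : Integrable (fun w : ℝ × ℝ => f (w.1 * x + w.2) * f (w.1 * y + w.2)) affM
  · rw [kern_eq x y h]
    have := norm_setIntegral_le_of_norm_le_const (μ := volume) (s := Icc (1 / 2 : ℝ) 5)
      (f := fun α => ∫ t, f t * f (t + α * (y - x))) (C := nsq f) (by simp)
      (fun α _ => ip_shift hf _)
    rw [Real.norm_eq_abs, Real.volume_real_Icc_of_le (by norm_num)] at this
    linarith
  · unfold kern
    rw [integral_undef h, abs_zero]
    have := nsq_nonneg f
    positivity

theorem kern_supp {f : ℝ → ℝ} (hf : BddSupp f) {x y : ℝ} (hxy : 2 < |y - x|) :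
    kern f x y = 0 := by
  by_cases h : Integrable (fun w : ℝ × ℝ => f (w.1 * x + w.2) * f (w.1 * y + w.2)) affM
  · rw [kern_eq x y h]
    refine setIntegral_eq_zero_of_forall_eq_zero fun α hα => ?_
    refine integral_eq_zero_of_ae (Filter.Eventually.of_forall fun t => ?_)
    simp only [Pi.zero_apply]
    by_contra hne
    have h1 : t ∈ Ico (0:ℝ) 1 := by
      by_contra h1; exact hne (by rw [hf.supp t h1, zero_mul])
    have h2 : t + α * (y - x) ∈ Ico (0:ℝ) 1 := by
      by_contra h1; exact hne (by rw [hf.supp _ h1, mul_zero])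
    have h3 : |α * (y - x)| < 1 := by
      rw [abs_lt]; constructor <;> linarith [h1.1, h1.2, h2.1, h2.2]
    have hα0 : 0 < α := by linarith [hα.1]
    rw [abs_mul, abs_of_pos hα0] at h3
    nlinarith [hα.1]
  · unfold kern; rw [integral_undef h]

/-- Away from the diagonal the kernel is small: integrating over the dilation first produces a
primitive of `f`, which is small since `f` has mean zero on short cells. -/
theorem kern_decay {N : ℕ} (hN : 0 < N) {f : ℝ → ℝ} (hf : BddSupp f) (h0 : MeanZero N f)
    {x y : ℝ} (hxy : x ≠ y) : |kern f x y| ≤ 2 * √(1 / N) / |y - x| * nsq f := by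
  have hz : y - x ≠ 0 := sub_ne_zero.2 hxy.symm
  by_cases h : Integrable (fun w : ℝ × ℝ => f (w.1 * x + w.2) * f (w.1 * y + w.2)) affM
  · have hfm := hf.meas
    rw [kern_eq x y h]
    obtain ⟨B, hB0, hB⟩ := hf.bdd
    have hI : Integrable (Function.uncurry fun (α t : ℝ) => f t * f (t + α * (y - x)))
        ((volume.restrict (Icc (1 / 2 : ℝ) 5)).prod volume) := by
      have i0 : Integrable (fun p : ℝ × ℝ => (1:ℝ) * (|f p.2| * B))
          ((volume.restrict (Icc (1 / 2 : ℝ) 5)).prod volume) :=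
        Integrable.mul_prod (f := fun _ => (1:ℝ)) (integrable_const 1)
          (hf.integrable.abs.mul_const B)
      refine i0.mono' ?_ (Filter.Eventually.of_forall fun p => ?_)
      · refine Measurable.aestronglyMeasurable ?_
        unfold Function.uncurry; fun_prop
      · simp only [Function.uncurry, Real.norm_eq_abs, abs_mul, one_mul]
        exact mul_le_mul_of_nonneg_left (hB _) (abs_nonneg _)
    rw [integral_integral_swap hI]
    have inner : ∀ t, |∫ α in Icc (1 / 2 : ℝ) 5, f t * f (t + α * (y - x))| ≤
        |f t| * (2 * (√(1 / N) * √(nsq f)) / |y - x|) := by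
      intro t
      rw [integral_const_mul, abs_mul]
      gcongr
      rw [integral_Icc_eq_integral_Ioc, ← intervalIntegral.integral_of_le (by norm_num)]
      simp_rw [mul_comm _ (y - x)]
      rw [intervalIntegral.integral_comp_add_mul _ hz, smul_eq_mul, abs_mul, abs_inv,
        inv_mul_eq_div]
      gcongr
      exact interval_bound hN hf h0 _ _
    have h1 : |∫ t, ∫ α in Icc (1 / 2 : ℝ) 5, f t * f (t + α * (y - x))| ≤
        ∫ t, |f t| * (2 * (√(1 / N) * √(nsq f)) / |y - x|) := by
      have := norm_integral_le_of_norm_le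
        (f := fun t => ∫ α in Icc (1 / 2 : ℝ) 5, f t * f (t + α * (y - x)))
        (hf.integrable.abs.mul_const (2 * (√(1 / N) * √(nsq f)) / |y - x|))
        (Filter.Eventually.of_forall fun t => by rw [Real.norm_eq_abs]; exact inner t)
      exact this
    refine h1.trans ?_
    rw [integral_mul_const]
    refine (mul_le_mul_of_nonneg_right (integral_abs_le hf) (by positivity)).trans (le_of_eq ?_)
    have := Real.mul_self_sqrt (nsq_nonneg f)
    field_simp
    rw [sq, this]
  · unfold kern
    rw [integral_undef h, abs_zero]
    have := nsq_nonneg f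
    positivity

/-- Averaged over affine maps, a function with mean zero on short cells has small matrix
coefficients. -/
theorem aff_bound {N : ℕ} (hN : 0 < N) {f F : ℝ → ℝ} (hf : BddSupp f) (h0 : MeanZero N f)
    (hF : L2 F) {σ : ℝ} (hσ : 0 < σ) (hσN : √(1 / N) ≤ σ ^ 2) :
    ∫ w, (∫ x, f (w.1 * x + w.2) * F x) ^ 2 ∂affM ≤ 17 * σ * nsq f * nsq F := by
  obtain ⟨_, h2, h3⟩ := aff_expand hf hF
  rw [h3]
  have hn := nsq_nonneg f
  let κ : ℝ → ℝ := fun z => (Icc (-σ) σ).indicator (fun _ => 4.5 * nsq f) z +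
    (Icc (-2) 2).indicator (fun _ => 2 * σ * nsq f) z
  have i1 : Integrable ((Icc (-σ) σ).indicator (fun _ => 4.5 * nsq f)) :=
    (integrable_indicator_iff measurableSet_Icc).2 (integrableOn_const (by simp))
  have i2 : Integrable ((Icc (-2:ℝ) 2).indicator (fun _ => 2 * σ * nsq f)) :=
    (integrable_indicator_iff measurableSet_Icc).2 (integrableOn_const (by simp))
  have hκi : Integrable κ := i1.add i2
  have hκI : ∫ z, κ z = 17 * σ * nsq f := by
    change ∫ z, ((Icc (-σ) σ).indicator (fun _ => 4.5 * nsq f) z +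
      (Icc (-2) 2).indicator (fun _ => 2 * σ * nsq f) z) = _
    rw [integral_add i1 i2, integral_indicator measurableSet_Icc,
      integral_indicator measurableSet_Icc, setIntegral_const, setIntegral_const,
      Real.volume_real_Icc_of_le (by linarith), Real.volume_real_Icc_of_le (by norm_num)]
    simp only [smul_eq_mul]; ring
  have hκneg : ∀ z, κ (-z) = κ z := by
    intro z
    have e : ∀ a b : ℝ, (Icc (-a) a).indicator (fun _ => b) (-z) =
        (Icc (-a) a).indicator (fun _ => b) z := by
      intro a b
      have : -z ∈ Icc (-a) a ↔ z ∈ Icc (-a) a := by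
        simp only [mem_Icc]; constructor <;> rintro ⟨h, h'⟩ <;> constructor <;> linarith
      by_cases hz : z ∈ Icc (-a) a
      · rw [indicator_of_mem hz, indicator_of_mem (this.2 hz)]
      · rw [indicator_of_notMem hz, indicator_of_notMem (fun h => hz (this.1 h))]
    simp only [κ, e]
  have hκ0 : ∀ z, 0 ≤ κ z := fun z =>
    add_nonneg (indicator_nonneg (fun _ _ => by positivity) z)
      (indicator_nonneg (fun _ _ => by positivity) z)
  have hkκ : ∀ x y, |kern f x y| ≤ κ (y - x) := by
    intro x y
    have p2 := hκ0 (y - x)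
    by_cases hb : |y - x| ≤ σ
    · have e : (Icc (-σ) σ).indicator (fun _ => 4.5 * nsq f) (y - x) = 4.5 * nsq f :=
        indicator_of_mem (show y - x ∈ Icc (-σ) σ from abs_le.1 hb) _
      have : 0 ≤ (Icc (-2) 2).indicator (fun _ => 2 * σ * nsq f) (y - x) :=
        indicator_nonneg (fun _ _ => by positivity) _
      simp only [κ, e]
      linarith [kern_bound hf.l2 x y]
    · push Not at hb
      by_cases hb2 : |y - x| ≤ 2
      · have e : (Icc (-2) 2).indicator (fun _ => 2 * σ * nsq f) (y - x) = 2 * σ * nsq f :=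
          indicator_of_mem (show y - x ∈ Icc (-2) 2 from abs_le.1 hb2) _
        have : 0 ≤ (Icc (-σ) σ).indicator (fun _ => 4.5 * nsq f) (y - x) :=
          indicator_nonneg (fun _ _ => by positivity) _
        simp only [κ, e]
        have hne : x ≠ y := by rintro rfl; simp at hb; linarith
        have hd := kern_decay hN hf h0 hne
        have : 2 * √(1 / N) / |y - x| * nsq f ≤ 2 * σ * nsq f := by
          gcongr
          rw [div_le_iff₀ (by linarith)]
          nlinarith
        linarith
      · rw [kern_supp hf (by push Not at hb2; exact hb2), abs_zero]; exact p2
  have hmp := measurePreserving_prod_neg_add (volume : Measure ℝ) (volume : Measure ℝ)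
  have iA : Integrable (fun z : ℝ × ℝ => F z.1 ^ 2 * κ (z.2 - z.1)) (volume.prod volume) := by
    have := (hmp.integrable_comp (hF.int.mul_prod hκi).aestronglyMeasurable).2
      (hF.int.mul_prod hκi)
    refine this.congr (Filter.Eventually.of_forall fun z => ?_)
    simp only [Function.comp]
    congr 2; ring
  have IA : ∫ z : ℝ × ℝ, F z.1 ^ 2 * κ (z.2 - z.1) ∂(volume.prod volume) =
      17 * σ * nsq f * nsq F := by
    have h4 := integral_prod_mul (μ := (volume : Measure ℝ)) (ν := (volume : Measure ℝ))
      (fun x => F x ^ 2) κ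
    rw [hκI] at h4
    have h5 := integral_map (μ := (volume : Measure ℝ).prod (volume : Measure ℝ))
      (φ := fun z : ℝ × ℝ => (z.1, -z.1 + z.2)) hmp.measurable.aemeasurable
      (f := fun z : ℝ × ℝ => F z.1 ^ 2 * κ z.2)
      (by rw [hmp.map_eq]; exact (hF.int.mul_prod hκi).aestronglyMeasurable)
    rw [hmp.map_eq, h4] at h5
    have e : (∫ x, F x ^ 2) = nsq F := rfl
    rw [e] at h5
    rw [mul_comm, h5]
    congr 1; ext z; simp only
    congr 2; ring
  have iB := iA.swap
  have IB := integral_prod_swap (μ := (volume : Measure ℝ)) (ν := (volume : Measure ℝ))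
    (fun z : ℝ × ℝ => F z.1 ^ 2 * κ (z.2 - z.1))
  rw [IA] at IB
  have iB' : Integrable (fun z : ℝ × ℝ => F z.2 ^ 2 * κ (z.2 - z.1)) (volume.prod volume) := by
    refine iB.congr (Filter.Eventually.of_forall fun z => ?_)
    simp only [Function.comp, Prod.swap]
    rw [← hκneg]; congr 2; ring
  have IB' : ∫ z : ℝ × ℝ, F z.2 ^ 2 * κ (z.2 - z.1) ∂(volume.prod volume) =
      17 * σ * nsq f * nsq F := by
    rw [← IB]
    congr 1; ext z
    simp only [Prod.swap]
    rw [← hκneg]; congr 2; ring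
  have hle : ∀ z : ℝ × ℝ, F z.1 * F z.2 * kern f z.1 z.2 ≤
      (1 / 2) * (F z.1 ^ 2 * κ (z.2 - z.1)) + (1 / 2) * (F z.2 ^ 2 * κ (z.2 - z.1)) := by
    intro z
    have a1 := hkκ z.1 z.2
    have a2 : |F z.1 * F z.2| ≤ (F z.1 ^ 2 + F z.2 ^ 2) / 2 := by
      rw [abs_le]; constructor <;> nlinarith [sq_nonneg (F z.1 + F z.2), sq_nonneg (F z.1 - F z.2)]
    calc F z.1 * F z.2 * kern f z.1 z.2 ≤ |F z.1 * F z.2| * |kern f z.1 z.2| := by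
          rw [← abs_mul]; exact le_abs_self _
      _ ≤ (F z.1 ^ 2 + F z.2 ^ 2) / 2 * κ (z.2 - z.1) :=
          mul_le_mul a2 a1 (abs_nonneg _) (by positivity)
      _ = _ := by ring
  refine (integral_mono h2 ((iA.const_mul _).add (iB'.const_mul _)) hle).trans ?_
  rw [show ((fun z : ℝ × ℝ => 1 / 2 * (F z.1 ^ 2 * κ (z.2 - z.1))) +
    fun z : ℝ × ℝ => 1 / 2 * (F z.2 ^ 2 * κ (z.2 - z.1))) = fun z : ℝ × ℝ =>
    1 / 2 * (F z.1 ^ 2 * κ (z.2 - z.1)) + 1 / 2 * (F z.2 ^ 2 * κ (z.2 - z.1)) from rfl]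
  rw [integral_add (iA.const_mul _) (iB'.const_mul _), integral_const_mul, integral_const_mul,
    IA, IB']
  linarith

/-- The matrix with second row `p.1` and first row `p.2`. -/
def mat (p : (ℝ × ℝ) × (ℝ × ℝ)) : Mat := !![p.2.1, p.2.2; p.1.1, p.1.2]

theorem det_mat (p : (ℝ × ℝ) × (ℝ × ℝ)) : (mat p).det = p.2.1 * p.1.2 - p.2.2 * p.1.1 := by
  simp [mat, Matrix.det_fin_two]

/-- Matrices with entries at most `R` in absolute value and determinant in `[1/2, 5]`. -/
def region (R : ℝ) : Set ((ℝ × ℝ) × (ℝ × ℝ)) :=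
  {p | p ∈ (Icc (-R) R ×ˢ Icc (-R) R) ×ˢ (Icc (-R) R ×ˢ Icc (-R) R) ∧
    (mat p).det ∈ Icc (1 / 2 : ℝ) 5}

theorem measurableSet_region (R : ℝ) : MeasurableSet (region R) := by
  unfold region
  refine MeasurableSet.inter ?_ ?_
  · exact (measurableSet_Icc.prod measurableSet_Icc).prod (measurableSet_Icc.prod measurableSet_Icc)
  · simp_rw [det_mat]
    have : Measurable fun p : (ℝ × ℝ) × (ℝ × ℝ) => p.2.1 * p.1.2 - p.2.2 * p.1.1 := by fun_prop
    exact this measurableSet_Icc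

theorem volume_region_lt (R : ℝ) : volume (region R) < ⊤ := by
  refine (measure_mono (fun p hp => hp.1)).trans_lt ?_
  refine IsCompact.measure_lt_top ?_
  exact (isCompact_Icc.prod isCompact_Icc).prod (isCompact_Icc.prod isCompact_Icc)

/-- The matrix coefficient of `f` at `g`. -/
noncomputable def coef (f : ℝ → ℝ) (g : Mat) : ℝ := ip (sl g f) f

theorem measurable_coef {f : ℝ → ℝ} (hf : Measurable f) :
    Measurable fun p => coef f (mat p) := by
  have : Measurable (fun q : ((ℝ × ℝ) × (ℝ × ℝ)) × ℝ => sl (mat q.1) f q.2 * f q.2) := by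
    unfold sl wt mob den
    simp only [det_mat]
    simp only [mat, Matrix.of_apply, Matrix.cons_val', Matrix.cons_val_zero, Matrix.cons_val_one,
      Matrix.cons_val_fin_one]
    fun_prop
  exact (this.stronglyMeasurable.integral_prod_right').measurable

theorem abs_coef_le {f : ℝ → ℝ} (hf : L2 f) {g : Mat} (hg : 0 < g.det) : |coef f g| ≤ nsq f := by
  have := abs_ip_le (hf.sl hg) hf
  rwa [nsq_sl hg, Real.mul_self_sqrt (nsq_nonneg f)] at this

theorem coef_factor (f : ℝ → ℝ) {c d α β : ℝ} (hd : d ≠ 0) (hα : 0 < α) :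
    coef f (mat ((c, d), (α / d + β * c, β * d))) =
      √α * ∫ x, f (α * x + β) * sl (!![1 / d, 0; c, d]⁻¹) f x := by
  set g0 : Mat := !![1 / d, 0; c, d] with hg0
  set A : Mat := !![α, β; 0, 1] with hA
  have h1 : 0 < g0.det := by rw [hg0, Matrix.det_fin_two]; simp [hd]
  have h2 : 0 < A.det := by rw [hA, Matrix.det_fin_two]; simpa using hα
  have e : mat ((c, d), (α / d + β * c, β * d)) = A * g0⁻¹⁻¹ := by
    rw [Matrix.nonsing_inv_nonsing_inv _ (isUnit_iff_ne_zero.2 h1.ne'), hA, hg0]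
    ext i j
    fin_cases i <;> fin_cases j <;> simp [mat, Matrix.mul_apply, Fin.sum_univ_two]
    field_simp
  unfold coef
  rw [e, ← ip_sl h2 (det_inv_pos h1)]
  unfold ip
  rw [← integral_const_mul]
  congr 1; ext x
  simp [sl, wt, mob, den, hA]
  ring

theorem integral_shear (G : ℝ → ℝ → ℝ) {c d : ℝ} (hd : d ≠ 0) :
    ∫ b, ∫ a, G a b = ∫ β, ∫ α, G (α / d + β * c) (β * d) := by
  have h1 : ∀ β, ∫ α, G (α / d + β * c) (β * d) = |d| * ∫ a, G a (β * d) := by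
    intro β
    have := Measure.integral_comp_div (fun a => G (a + β * c) (β * d)) d
    rw [this, integral_add_right_eq_self (fun a => G a (β * d)), smul_eq_mul]
  simp_rw [h1, integral_const_mul]
  rw [Measure.integral_comp_mul_right (fun b => ∫ a, G a b) d, smul_eq_mul, abs_inv]
  field_simp

/-- On average over a region of matrices, the matrix coefficients of an oscillating function are
small. -/
theorem coef_bound {N : ℕ} (hN : 0 < N) {f : ℝ → ℝ} (hf : BddSupp f) (h0 : MeanZero N f)
    {σ : ℝ} (hσ : 0 < σ) (hσN : √(1 / N) ≤ σ ^ 2) {R : ℝ} (hR : 0 ≤ R) :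
    ∫ p in region R, coef f (mat p) ^ 2 ≤ (2 * R) ^ 2 * (85 * σ * nsq f ^ 2) := by
  have hn := nsq_nonneg f
  have hfm := hf.meas
  have hcm := measurable_coef hfm
  set G : (ℝ × ℝ) × (ℝ × ℝ) → ℝ := (region R).indicator fun p => coef f (mat p) ^ 2 with hG
  have hGm : Measurable G := (hcm.pow_const 2).indicator (measurableSet_region R)
  have hG0 : ∀ p, 0 ≤ G p := fun p => indicator_nonneg (fun _ _ => sq_nonneg _) p
  have hGb : ∀ p, G p ≤ nsq f ^ 2 := by
    intro p
    by_cases hp : p ∈ region R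
    · rw [hG, indicator_of_mem hp]
      have hd : 0 < (mat p).det := by have := hp.2.1; linarith
      have := abs_coef_le hf.l2 hd
      rw [← sq_abs]; gcongr
    · rw [hG, indicator_of_notMem hp]; positivity
  have hsupp : ∀ p, p ∉ (Icc (-R) R ×ˢ Icc (-R) R) ×ˢ (Icc (-R) R ×ˢ Icc (-R) R) → G p = 0 :=
    fun p hp => indicator_of_notMem (fun h => hp h.1) _
  have hK2 : IsCompact (Icc (-R) R ×ˢ Icc (-R) R) := isCompact_Icc.prod isCompact_Icc
  have bddInt : ∀ (H : ℝ × ℝ → ℝ), Measurable H → (∀ q, 0 ≤ H q) → (∀ q, H q ≤ nsq f ^ 2) →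
      (∀ q, q ∉ Icc (-R) R ×ˢ Icc (-R) R → H q = 0) →
      Integrable H (volume.prod volume) := by
    intro H hm h1 h2 h3
    have : Integrable ((Icc (-R) R ×ˢ Icc (-R) R).indicator fun _ : ℝ × ℝ => nsq f ^ 2) :=
      (integrable_indicator_iff (measurableSet_Icc.prod measurableSet_Icc)).2
        (integrableOn_const hK2.measure_lt_top.ne)
    refine this.mono' hm.aestronglyMeasurable (Filter.Eventually.of_forall fun q => ?_)
    rw [Real.norm_eq_abs, abs_of_nonneg (h1 q)]
    by_cases hq : q ∈ Icc (-R) R ×ˢ Icc (-R) R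
    · rw [indicator_of_mem hq]; exact h2 q
    · rw [h3 q hq]; exact indicator_nonneg (fun _ _ => by positivity) q
  -- for a fixed second row the matrices form a coset of the affine group
  have inner : ∀ c d : ℝ, d ≠ 0 → ∫ q, G ((c, d), q) ≤ 85 * σ * nsq f ^ 2 := by
    intro c d hd
    set g0 : Mat := !![1 / d, 0; c, d] with hg0
    have hg0d : 0 < g0.det := by rw [hg0, Matrix.det_fin_two]; simp [hd]
    set F := sl g0⁻¹ f with hF
    have hF2 : L2 F := hf.l2.sl (det_inv_pos hg0d)
    have hFn : nsq F = nsq f := nsq_sl (det_inv_pos hg0d) f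
    have hGi : Integrable (fun q : ℝ × ℝ => G ((c, d), q)) (volume.prod volume) := by
      refine bddInt _ (hGm.comp (by fun_prop)) (fun q => hG0 _) (fun q => hGb _) ?_
      intro q hq
      exact hsupp _ fun h => hq h.2
    have hab := aff_bound hN hf h0 hF2 hσ hσN
    obtain ⟨hig, _, _⟩ := aff_expand hf hF2
    set K : ℝ × ℝ → ℝ := fun w => (∫ x, f (w.1 * x + w.2) * F x) ^ 2 with hK
    have hmeasE : MeasurableSet (Icc (1 / 2 : ℝ) 5 ×ˢ (univ : Set ℝ)) :=
      measurableSet_Icc.prod .univ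
    have haffM : affM = (volume.prod volume).restrict (Icc (1 / 2 : ℝ) 5 ×ˢ (univ : Set ℝ)) := by
      unfold affM
      rw [← Measure.prod_restrict, Measure.restrict_univ]
    have hKi : Integrable ((Icc (1 / 2 : ℝ) 5 ×ˢ (univ : Set ℝ)).indicator fun w => 5 * K w)
        (volume.prod volume) := by
      rw [integrable_indicator_iff hmeasE, IntegrableOn, ← haffM]
      exact hig.const_mul 5
    let L : ℝ × ℝ → ℝ × ℝ := fun w => (w.1 / d + w.2 * c, w.2 * d)
    have hLm : Measurable L := by fun_prop
    have hle : ∀ w, G ((c, d), L w) ≤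
        (Icc (1 / 2 : ℝ) 5 ×ˢ (univ : Set ℝ)).indicator (fun w => 5 * K w) w := by
      intro w
      by_cases hw : w.1 ∈ Icc (1 / 2 : ℝ) 5
      · rw [indicator_of_mem (show w ∈ Icc (1 / 2 : ℝ) 5 ×ˢ (univ : Set ℝ) from ⟨hw, trivial⟩)]
        by_cases hr : ((c, d), L w) ∈ region R
        · have hα : 0 < w.1 := by have := hw.1; linarith
          rw [hG, indicator_of_mem hr]
          simp only [L]
          rw [coef_factor f hd hα, mul_pow, Real.sq_sqrt hα.le]
          exact mul_le_mul_of_nonneg_right hw.2 (sq_nonneg _)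
        · rw [hG, indicator_of_notMem hr]
          simp only [hK]; positivity
      · rw [indicator_of_notMem (fun h => hw h.1)]
        refine le_of_eq (indicator_of_notMem (fun h => hw ?_) _)
        have h2 := h.2
        rw [det_mat] at h2
        have : w.1 = (w.1 / d + w.2 * c) * d - w.2 * d * c := by field_simp; ring
        rw [this]; exact h2
    have hGLi : Integrable (fun w => G ((c, d), L w)) (volume.prod volume) := by
      refine hKi.mono' (hGm.comp (by fun_prop)).aestronglyMeasurable
        (Filter.Eventually.of_forall fun w => ?_)
      rw [Real.norm_eq_abs, abs_of_nonneg (hG0 _)]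
      exact hle w
    calc ∫ q, G ((c, d), q) = ∫ b, ∫ a, G ((c, d), (a, b)) :=
          integral_prod_symm _ hGi
      _ = ∫ β, ∫ α, G ((c, d), L (α, β)) := integral_shear (fun a b => G ((c, d), (a, b))) hd
      _ = ∫ w, G ((c, d), L w) := (integral_prod_symm _ hGLi).symm
      _ ≤ ∫ w, (Icc (1 / 2 : ℝ) 5 ×ˢ (univ : Set ℝ)).indicator (fun w => 5 * K w) w :=
          integral_mono hGLi hKi hle
      _ = 5 * ∫ w, K w ∂affM := by
          rw [integral_indicator hmeasE, haffM, ← integral_const_mul]; rfl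
      _ ≤ 85 * σ * nsq f ^ 2 := by rw [hFn] at hab; nlinarith
  have hGi : Integrable G (volume.prod volume) := by
    have : Integrable ((region R).indicator fun _ => nsq f ^ 2) :=
      (integrable_indicator_iff (measurableSet_region R)).2
        (integrableOn_const (volume_region_lt R).ne)
    refine this.mono' hGm.aestronglyMeasurable (Filter.Eventually.of_forall fun p => ?_)
    rw [Real.norm_eq_abs, abs_of_nonneg (hG0 p)]
    by_cases hp : p ∈ region R
    · rw [indicator_of_mem hp]; exact hGb p
    · rw [hG, indicator_of_notMem hp, indicator_of_notMem hp]
  rw [← integral_indicator (measurableSet_region R)]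
  change ∫ p, G p ∂(volume.prod volume) ≤ _
  rw [integral_prod _ hGi]
  have hci : Integrable ((Icc (-R) R ×ˢ Icc (-R) R).indicator
      fun _ : ℝ × ℝ => 85 * σ * nsq f ^ 2) :=
    (integrable_indicator_iff (measurableSet_Icc.prod measurableSet_Icc)).2
        (integrableOn_const hK2.measure_lt_top.ne)
  have hae : ∀ᵐ r : ℝ × ℝ, r.2 ≠ 0 := by
    have : ∀ᵐ y : ℝ, y ≠ 0 := by
      rw [ae_iff]; simp
    exact (Measure.ae_prod_iff_ae_ae (μ := (volume : Measure ℝ)) (ν := (volume : Measure ℝ))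
      (p := fun r : ℝ × ℝ => r.2 ≠ 0)
      (measurable_snd (measurableSet_singleton (0:ℝ)).compl)).2
      (Filter.Eventually.of_forall fun _ => this)
  have hmono : ∫ r, ∫ q, G (r, q) ≤ ∫ r, (Icc (-R) R ×ˢ Icc (-R) R).indicator
      (fun _ : ℝ × ℝ => 85 * σ * nsq f ^ 2) r := by
    refine integral_mono_ae hGi.integral_prod_left hci ?_
    filter_upwards [hae] with r hr
    by_cases hrm : r ∈ Icc (-R) R ×ˢ Icc (-R) R
    · rw [indicator_of_mem hrm]; exact inner r.1 r.2 hr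
    · rw [indicator_of_notMem hrm]
      refine le_of_eq ?_
      have : ∀ q, G (r, q) = 0 := fun q => hsupp _ fun h => hrm h.1
      simp [this]
  refine hmono.trans (le_of_eq ?_)
  rw [integral_indicator (measurableSet_Icc.prod measurableSet_Icc), setIntegral_const,
    Measure.real, Measure.volume_eq_prod, Measure.prod_prod, Real.volume_Icc, smul_eq_mul,
    ENNReal.toReal_mul, ENNReal.toReal_ofReal (by linarith)]
  ring

/-! ### Averaging over words -/

/-- The sum of the absolute values of the entries. -/
def en (g : Mat) : ℝ := ∑ i, ∑ j, |g i j|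

theorem en_eq (g : Mat) : en g = |g 0 0| + |g 0 1| + (|g 1 0| + |g 1 1|) := by
  simp [en, Fin.sum_univ_two]

theorem en_nonneg (g : Mat) : 0 ≤ en g := by rw [en_eq]; positivity

theorem abs_le_en (g : Mat) (i j : Fin 2) : |g i j| ≤ en g := by
  rw [en_eq]
  have := abs_nonneg (g 0 0)
  have := abs_nonneg (g 0 1)
  have := abs_nonneg (g 1 0)
  have := abs_nonneg (g 1 1)
  fin_cases i <;> fin_cases j <;> simp <;> linarith

theorem en_mul (g h : Mat) : en (g * h) ≤ en g * en h := by
  have key : ∀ a b c d : ℝ, |a * b + c * d| ≤ |a| * |b| + |c| * |d| := fun a b c d => by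
    rw [← abs_mul, ← abs_mul]; exact abs_add_le _ _
  simp only [en_eq, Matrix.mul_apply, Fin.sum_univ_two]
  have h1 := key (g 0 0) (h 0 0) (g 0 1) (h 1 0)
  have h2 := key (g 0 0) (h 0 1) (g 0 1) (h 1 1)
  have h3 := key (g 1 0) (h 0 0) (g 1 1) (h 1 0)
  have h4 := key (g 1 0) (h 0 1) (g 1 1) (h 1 1)
  have hp : ∀ i j k l, 0 ≤ |g i j| * |h k l| := fun i j k l => by positivity
  linarith [hp 0 0 1 0, hp 0 0 1 1, hp 0 1 0 0, hp 0 1 0 1, hp 1 0 1 0, hp 1 0 1 1, hp 1 1 0 0,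
    hp 1 1 0 1]

theorem NearOne.en_le {h : Mat} (hh : NearOne (1 / 10) h) : en h ≤ 3 := by
  rw [en_eq]
  have h1 := abs_le.1 (hh 0 0)
  have h2 := abs_le.1 (hh 0 1)
  have h3 := abs_le.1 (hh 1 0)
  have h4 := abs_le.1 (hh 1 1)
  simp at h1 h2 h3 h4
  have e1 : |h 0 0| ≤ 1.1 := abs_le.2 ⟨by linarith, by linarith⟩
  have e2 : |h 0 1| ≤ 0.1 := abs_le.2 ⟨by linarith, by linarith⟩
  have e3 : |h 1 0| ≤ 0.1 := abs_le.2 ⟨by linarith, by linarith⟩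
  have e4 : |h 1 1| ≤ 1.1 := abs_le.2 ⟨by linarith, by linarith⟩
  linarith

section Words

variable {κ : Type}

/-- The average of `Φ` over all words of length `j` in the quotients `s a * (s b)⁻¹`. -/
noncomputable def avgW [Fintype κ] (s : κ → Mat) : ℕ → (Mat → ℝ) → ℝ
  | 0, Φ => Φ 1
  | j + 1, Φ => avgW s j fun g =>
      ((Fintype.card κ : ℝ) ^ 2)⁻¹ * ∑ a, ∑ b, Φ (g * (s a * (s b)⁻¹))

/-- A finite family of unimodular matrices all of whose quotients are near the identity. -/
structure Good (s : κ → Mat) : Prop where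
  ne : Nonempty κ
  det : ∀ a, (s a).det = 1
  near : ∀ a b, NearOne (1 / 10) (s a * (s b)⁻¹)

theorem Good.pos {s : κ → Mat} (hs : Good s) (a : κ) : 0 < (s a).det := by
  rw [hs.det]; norm_num

theorem Good.quot {s : κ → Mat} (hs : Good s) (a b : κ) : (s a * (s b)⁻¹).det = 1 := by
  rw [Matrix.det_mul, Matrix.det_nonsing_inv, hs.det, hs.det]; simp

theorem Good.quot_inv {s : κ → Mat} (hs : Good s) (a b : κ) :
    (s a * (s b)⁻¹)⁻¹ = s b * (s a)⁻¹ := by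
  rw [Matrix.mul_inv_rev, Matrix.nonsing_inv_nonsing_inv _ (isUnit_iff_ne_zero.2 (hs.pos b).ne')]

variable [Fintype κ]

/-- An average over words is an average over a finite family of matrices of determinant one whose
entries grow at most exponentially in the length. -/
theorem Good.rep {s : κ → Mat} (hs : Good s) (j : ℕ) :
    ∃ (ι : Type) (_ : Fintype ι) (_ : Nonempty ι) (v : ι → Mat),
      (∀ Φ, avgW s j Φ = (Fintype.card ι : ℝ)⁻¹ * ∑ i, Φ (v i)) ∧
      ∀ i, (v i).det = 1 ∧ en (v i) ≤ 2 * 3 ^ j ∧ en (v i)⁻¹ ≤ 2 * 3 ^ j := by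
  have := hs.ne
  induction j with
  | zero =>
    refine ⟨Unit, inferInstance, inferInstance, fun _ => 1, fun Φ => by simp [avgW], fun i => ?_⟩
    simp [en_eq]; norm_num
  | succ j ih =>
    obtain ⟨ι, i1, i2, v, h1, h2⟩ := ih
    refine ⟨ι × κ × κ, inferInstance, inferInstance,
      fun q => v q.1 * (s q.2.1 * (s q.2.2)⁻¹), fun Φ => ?_, fun q => ?_⟩
    · rw [avgW, h1]
      simp only [Fintype.sum_prod_type, Fintype.card_prod, ← Finset.mul_sum]
      push_cast
      rw [← mul_assoc, ← mul_inv]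
      ring
    · obtain ⟨e1, e2, e3⟩ := h2 q.1
      refine ⟨by rw [Matrix.det_mul, e1, hs.quot, one_mul], ?_, ?_⟩
      · refine (en_mul _ _).trans ?_
        rw [pow_succ, ← mul_assoc]
        exact mul_le_mul e2 (hs.near _ _).en_le (en_nonneg _) (by positivity)
      · rw [Matrix.mul_inv_rev (v q.1), hs.quot_inv, pow_succ, ← mul_assoc, mul_comm (2 * 3 ^ j) (3:ℝ)]
        refine (en_mul _ _).trans ?_
        exact mul_le_mul (hs.near _ _).en_le e3 (en_nonneg _) (by positivity)

theorem Good.avgW_sum {s : κ → Mat} (hs : Good s) (j : ℕ) {ι : Type*} (t : Finset ι) (c : ℝ)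
    (Φ : ι → Mat → ℝ) :
    avgW s j (fun g => c * ∑ i ∈ t, Φ i g) = c * ∑ i ∈ t, avgW s j (Φ i) := by
  obtain ⟨ι', i1, i2, v, h1, _⟩ := hs.rep j
  simp only [h1]
  rw [← Finset.mul_sum, ← Finset.mul_sum, Finset.sum_comm]
  ring

theorem Good.avgW_add {s : κ → Mat} (hs : Good s) (j i : ℕ) (Φ : Mat → ℝ) :
    avgW s i (fun g => avgW s j fun h => Φ (g * h⁻¹)) = avgW s (i + j) Φ := by
  induction j generalizing i with
  | zero => simp [avgW]
  | succ j ih =>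
    rw [show i + (j + 1) = (i + 1) + j by ring, ← ih (i + 1)]
    change avgW s i (fun g => avgW s j fun h => ((Fintype.card κ : ℝ) ^ 2)⁻¹ *
        ∑ a, ∑ b, Φ (g * (h * (s a * (s b)⁻¹))⁻¹)) =
      avgW s i (fun g => ((Fintype.card κ : ℝ) ^ 2)⁻¹ *
        ∑ a, ∑ b, avgW s j fun h => Φ (g * (s a * (s b)⁻¹) * h⁻¹))
    congr 1; ext g
    simp only [← Finset.sum_product' (s := (Finset.univ : Finset κ)) (t := (Finset.univ : Finset κ))]
    rw [hs.avgW_sum]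
    congr 1
    refine Finset.sum_bij' (fun q _ => q.swap) (fun q _ => q.swap) ?_ ?_ ?_ ?_ ?_ <;> simp
    intro a b
    congr 1; ext h
    rw [Matrix.mul_inv_rev h, hs.quot_inv]
    simp only [Matrix.mul_assoc]

/-- The averaging operator of the family. -/
noncomputable def avgT (s : κ → Mat) (f : ℝ → ℝ) (x : ℝ) : ℝ :=
  (Fintype.card κ : ℝ)⁻¹ * ∑ a, sl (s a) f x

theorem Good.l2_avgT {s : κ → Mat} (hs : Good s) {f : ℝ → ℝ} (hf : L2 f) : L2 (avgT s f) :=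
  (L2.sum _ fun a _ => hf.sl (hs.pos a)).const_mul _

/-- Inner products of averages are averages of matrix coefficients. -/
theorem ip_avg {ι : Type} [Fintype ι] {v : ι → Mat} (hv : ∀ i, 0 < (v i).det) {f h : ℝ → ℝ}
    (hf : L2 f) (hh : L2 h) :
    ip (fun x => (Fintype.card ι : ℝ)⁻¹ * ∑ i, sl (v i) f x)
      (fun x => (Fintype.card ι : ℝ)⁻¹ * ∑ i, sl (v i) h x) =
    ((Fintype.card ι : ℝ) ^ 2)⁻¹ * ∑ i, ∑ j, ip (sl (v i * (v j)⁻¹) f) h := by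
  have l1 : L2 (fun x => ∑ i, sl (v i) h x) := L2.sum _ fun i _ => hh.sl (hv i)
  rw [ip_const_mul_left, ip_comm, ip_const_mul_left, ip_comm,
    ip_sum_left _ (fun i _ => hf.sl (hv i)) l1]
  rw [← mul_assoc, sq, mul_inv]
  congr 1
  refine Finset.sum_congr rfl fun i _ => ?_
  rw [ip_comm, ip_sum_left _ (fun i _ => hh.sl (hv i)) (hf.sl (hv i))]
  refine Finset.sum_congr rfl fun j _ => ?_
  rw [ip_comm, ip_sl (hv i) (hv j)]

theorem Good.ip_avgT {s : κ → Mat} (hs : Good s) {f h : ℝ → ℝ} (hf : L2 f) (hh : L2 h) :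
    ip (avgT s f) (avgT s h) =
      ((Fintype.card κ : ℝ) ^ 2)⁻¹ * ∑ a, ∑ b, ip (sl (s a * (s b)⁻¹) f) h :=
  ip_avg hs.pos hf hh

theorem Good.nsq_avgT {s : κ → Mat} (hs : Good s) {f : ℝ → ℝ} (hf : L2 f) :
    nsq (avgT s f) = avgW s 1 (coef f) := by
  rw [← ip_self, hs.ip_avgT hf hf]
  simp [avgW, coef]

/-- Doubling the length of the words, by the Cauchy–Schwarz inequality. -/
theorem Good.avgW_sq_le {s : κ → Mat} (hs : Good s) {f : ℝ → ℝ} (hf : L2 f) (j : ℕ) :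
    avgW s j (coef f) ^ 2 ≤ avgW s (j + j) (coef f) * nsq f := by
  rw [← hs.avgW_add j j]
  obtain ⟨ι, i1, i2, v, h1, h2⟩ := hs.rep j
  have hv : ∀ i, 0 < (v i).det := fun i => by rw [(h2 i).1]; norm_num
  have e1 : ip (fun x => (Fintype.card ι : ℝ)⁻¹ * ∑ i, sl (v i) f x) f = avgW s j (coef f) := by
    rw [ip_const_mul_left, ip_sum_left _ (fun i _ => hf.sl (hv i)) hf, h1]; rfl
  have e2 : nsq (fun x => (Fintype.card ι : ℝ)⁻¹ * ∑ i, sl (v i) f x) =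
      avgW s j (fun g => avgW s j fun h => coef f (g * h⁻¹)) := by
    rw [← ip_self, ip_avg hv hf hf]
    simp only [h1, coef, ← Finset.mul_sum]
    rw [sq, mul_inv, mul_assoc]
  rw [← e1, ← e2]
  exact ip_sq_le ((L2.sum _ fun i _ => hf.sl (hv i)).const_mul _) hf

/-- Iterated doubling: the norm of the average of `f` is controlled by the matrix coefficient
averaged over long words. -/
theorem Good.pow_le {s : κ → Mat} (hs : Good s) {f : ℝ → ℝ} (hf : L2 f) (m : ℕ) :
    nsq (avgT s f) ^ (2 ^ m) ≤ avgW s (2 ^ m) (coef f) * nsq f ^ (2 ^ m - 1) := by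
  induction m with
  | zero => simp [hs.nsq_avgT hf]
  | succ m ih =>
    have hn := nsq_nonneg f
    have hp : 0 < 2 ^ m := by positivity
    calc nsq (avgT s f) ^ 2 ^ (m + 1) = (nsq (avgT s f) ^ 2 ^ m) ^ 2 := by rw [pow_succ, pow_mul]
      _ ≤ (avgW s (2 ^ m) (coef f) * nsq f ^ (2 ^ m - 1)) ^ 2 := by
          have := nsq_nonneg (avgT s f)
          gcongr
      _ = avgW s (2 ^ m) (coef f) ^ 2 * nsq f ^ (2 * (2 ^ m - 1)) := by
          rw [mul_pow, ← pow_mul, mul_comm (2 ^ m - 1)]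
      _ ≤ avgW s (2 ^ m + 2 ^ m) (coef f) * nsq f * nsq f ^ (2 * (2 ^ m - 1)) := by
          gcongr
          exact hs.avgW_sq_le hf _
      _ = _ := by
          rw [mul_assoc, ← pow_succ', show 2 ^ m + 2 ^ m = 2 ^ (m + 1) by ring]
          congr 2
          omega

end Words

/-! ### Counting words in integer matrices -/

/-- Integer two-by-two matrices. -/
abbrev ZMat := Matrix (Fin 2) (Fin 2) ℤ

/-- The integer `q` divides all entries of `M`. -/
def Dv (q : ℤ) (M : ZMat) : Prop := ∀ i j, q ∣ M i j

theorem dv_iff (q : ℤ) (M : ZMat) : Dv q M ↔ ∃ M' : ZMat, M = q • M' := by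
  constructor
  · intro h
    choose M' hM' using h
    exact ⟨Matrix.of M', by ext i j; simp [hM' i j]⟩
  · rintro ⟨M', rfl⟩ i j
    simp

/-- Two matrices killed by the same nonzero matrix modulo `p` have a vanishing product. -/
theorem dv_unique {p : ℤ} (hp : Prime p) {M s s' : ZMat} (hM : ¬ Dv p M)
    (h : Dv p (M * s.adjugate)) (h' : Dv p (M * s'.adjugate)) : Dv p (s * s'.adjugate) := by
  unfold Dv at hM
  push Not at hM
  obtain ⟨i, j, hij⟩ := hM
  obtain ⟨k1, e1⟩ := h i 0
  obtain ⟨k2, e2⟩ := h i 1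
  obtain ⟨k3, e3⟩ := h' i 0
  obtain ⟨k4, e4⟩ := h' i 1
  simp only [Matrix.mul_apply, Fin.sum_univ_two, Matrix.adjugate_fin_two, Matrix.of_apply,
    Matrix.cons_val', Matrix.cons_val_zero, Matrix.cons_val_one, Matrix.cons_val_fin_one]
    at e1 e2 e3 e4
  have key : ∀ r c, p ∣ M i j * (s * s'.adjugate) r c := by
    intro r c
    simp only [Matrix.mul_apply, Fin.sum_univ_two, Matrix.adjugate_fin_two, Matrix.of_apply,
      Matrix.cons_val', Matrix.cons_val_zero, Matrix.cons_val_one, Matrix.cons_val_fin_one]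
    fin_cases j <;> fin_cases r <;> fin_cases c <;>
      simp only [Fin.zero_eta, Fin.mk_one, Matrix.cons_val_zero, Matrix.cons_val_one]
    · exact ⟨s 0 0 * k3 + s' 1 0 * k2, by linear_combination s 0 0 * e3 + s' 1 0 * e2⟩
    · exact ⟨s 0 0 * k4 - s' 0 0 * k2, by linear_combination s 0 0 * e4 - s' 0 0 * e2⟩
    · exact ⟨s 1 0 * k3 - s' 1 0 * k1, by linear_combination s 1 0 * e3 - s' 1 0 * e1⟩
    · exact ⟨s 1 0 * k4 + s' 0 0 * k1, by linear_combination s 1 0 * e4 + s' 0 0 * e1⟩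
    · exact ⟨s 0 1 * k3 + s' 1 1 * k2, by linear_combination s 0 1 * e3 + s' 1 1 * e2⟩
    · exact ⟨s 0 1 * k4 - s' 0 1 * k2, by linear_combination s 0 1 * e4 - s' 0 1 * e2⟩
    · exact ⟨s 1 1 * k3 - s' 1 1 * k1, by linear_combination s 1 1 * e3 - s' 1 1 * e1⟩
    · exact ⟨s 1 1 * k4 + s' 0 1 * k1, by linear_combination s 1 1 * e4 + s' 0 1 * e1⟩
  intro r c
  exact (hp.dvd_or_dvd (key r c)).resolve_left hij

section Count

variable {κ : Type}

/-- The `n`-th letter set of an alternating word. -/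
def letter (t : κ → ZMat) (n : ℕ) (a : κ) : ZMat := if Even n then t a else (t a).adjugate

/-- The sum of `Φ` over all alternating words of length `n` in the matrices `t a` and their
adjugates. -/
def cnt [Fintype κ] (t : κ → ZMat) : ℕ → (ZMat → ℝ) → ℝ
  | 0, Φ => Φ 1
  | n + 1, Φ => cnt t n fun M => ∑ a, Φ (M * letter t n a)

/-- Matrices of determinant `p` whose quotients are not integral. -/
structure Sep (p : ℕ) (t : κ → ZMat) : Prop where
  prime : p.Prime
  det : ∀ a, (t a).det = p
  left : ∀ a b, a ≠ b → ¬ Dv p (t a * (t b).adjugate)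
  right : ∀ a b, a ≠ b → ¬ Dv p ((t a).adjugate * t b)

theorem adj_adj (M : ZMat) : M.adjugate.adjugate = M := by
  ext i j
  rw [Matrix.adjugate_fin_two, Matrix.adjugate_fin_two]
  fin_cases i <;> fin_cases j <;> simp

theorem Sep.det_letter {p : ℕ} {t : κ → ZMat} (ht : Sep p t) (n : ℕ) (a : κ) :
    (letter t n a).det = p := by
  unfold letter
  split_ifs
  · exact ht.det a
  · rw [Matrix.det_adjugate]; simp [ht.det a]

theorem Sep.letter_sep {p : ℕ} {t : κ → ZMat} (ht : Sep p t) (n : ℕ) {a b : κ} (hab : a ≠ b) :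
    ¬ Dv p (letter t n a * (letter t n b).adjugate) := by
  unfold letter
  split_ifs
  · exact ht.left a b hab
  · rw [adj_adj]; exact ht.right a b hab

variable [Fintype κ]

theorem cnt_mono (t : κ → ZMat) (n : ℕ) {Φ Ψ : ZMat → ℝ} (h : ∀ M, Φ M ≤ Ψ M) :
    cnt t n Φ ≤ cnt t n Ψ := by
  induction n generalizing Φ Ψ with
  | zero => exact h 1
  | succ n ih => exact ih fun M => Finset.sum_le_sum fun a _ => h _

theorem Sep.cnt_mono {p : ℕ} {t : κ → ZMat} (ht : Sep p t) (n : ℕ) {Φ Ψ : ZMat → ℝ}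
    (h : ∀ M : ZMat, M.det = p ^ n → Φ M ≤ Ψ M) : cnt t n Φ ≤ cnt t n Ψ := by
  induction n generalizing Φ Ψ with
  | zero => exact h 1 (by simp)
  | succ n ih =>
    refine ih fun M hM => Finset.sum_le_sum fun a _ => h _ ?_
    rw [Matrix.det_mul, hM, ht.det_letter, pow_succ]

theorem cnt_sum (t : κ → ZMat) (n : ℕ) {ι : Type*} (s : Finset ι) (Φ : ι → ZMat → ℝ) :
    cnt t n (fun M => ∑ i ∈ s, Φ i M) = ∑ i ∈ s, cnt t n (Φ i) := by
  induction n generalizing Φ with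
  | zero => rfl
  | succ n ih =>
    have : cnt t (n + 1) (fun M => ∑ i ∈ s, Φ i M) =
        cnt t n (fun M => ∑ i ∈ s, ∑ a, Φ i (M * letter t n a)) := by
      change cnt t n (fun M => ∑ a, ∑ i ∈ s, Φ i (M * letter t n a)) = _
      congr 1; ext M; exact Finset.sum_comm
    rw [this, ih]
    rfl

theorem cnt_zero (t : κ → ZMat) (n : ℕ) : cnt t n (fun _ => 0) = 0 := by
  have := cnt_sum t n (∅ : Finset ℕ) (fun _ _ => 0)
  simpa using this

/-- A bound for the number of words representing `p ^ e • M` with `M` primitive: cancelling the last letter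
lowers `e`, except for at most one letter. -/
theorem Sep.word_count {p : ℕ} {t : κ → ZMat} (ht : Sep p t) (n e : ℕ) (M : ZMat)
    (hM : ¬ Dv p M) :
    cnt t n (fun A => if A = (p:ℤ) ^ e • M then 1 else 0) ≤ 2 ^ n * (Fintype.card κ : ℝ) ^ e := by
  classical
  have hp : Prime (p:ℤ) := Nat.prime_iff_prime_int.1 ht.prime
  have hp0 : (p:ℤ) ≠ 0 := hp.ne_zero
  induction n generalizing e M with
  | zero =>
    simp only [cnt, pow_zero, one_mul]
    split_ifs with h
    · have : e = 0 := by
        by_contra he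
        have h1 : (p:ℤ) ∣ 1 := by
          have h2 := congrFun (congrFun h 0) 0
          simp at h2
          rw [h2]
          exact (dvd_pow_self _ he).mul_right _
        exact hp.not_isUnit (isUnit_of_dvd_one h1)
      simp [this]
    · positivity
  | succ n ih =>
    set L := letter t n with hL
    have hmulL : ∀ a, L a * (L a).adjugate = (p:ℤ) • 1 := fun a => by
      rw [Matrix.mul_adjugate, ht.det_letter]
    have hLmul : ∀ a, (L a).adjugate * L a = (p:ℤ) • 1 := fun a => by
      rw [Matrix.adjugate_mul, ht.det_letter]
    have hcancel : ∀ A a, A * L a = (p:ℤ) ^ e • M →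
        (p:ℤ) • A = (p:ℤ) ^ e • (M * (L a).adjugate) := by
      intro A a h
      rw [← smul_mul_assoc, ← h, Matrix.mul_assoc, hmulL, Matrix.mul_smul, Matrix.mul_one]
    have hsm : ∀ (c : ℤ), c ≠ 0 → ∀ A B : ZMat, c • A = c • B → A = B := by
      intro c hc A B h
      ext i j
      have := congrFun (congrFun h i) j
      simpa [hc] using this
    change cnt t n (fun A => ∑ a, if A * L a = (p:ℤ) ^ e • M then (1:ℝ) else 0) ≤ _
    rw [cnt_sum]
    -- the exceptional letter
    have hexc : ∀ a, Dv p (M * (L a).adjugate) →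
        cnt t n (fun A => if A * L a = (p:ℤ) ^ e • M then (1:ℝ) else 0) ≤
          2 ^ n * (Fintype.card κ : ℝ) ^ e := by
      intro a ha
      obtain ⟨M', hM'⟩ := (dv_iff _ _).1 ha
      refine (MonExp.cnt_mono t n (fun A => ?_)).trans (ih e M' ?_)
      · by_cases h : A * L a = (p:ℤ) ^ e • M
        · have h2 := hcancel A a h
          rw [hM', smul_comm] at h2
          rw [if_pos h, if_pos (hsm _ hp0 _ _ h2)]
        · rw [if_neg h]; split_ifs <;> norm_num
      · intro hd
        obtain ⟨M'', hM''⟩ := (dv_iff _ _).1 hd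
        apply hM
        have : (p:ℤ) • M = (p:ℤ) • ((p:ℤ) • (M'' * L a)) := by
          calc (p:ℤ) • M = M * (L a).adjugate * L a := by rw [Matrix.mul_assoc, hLmul, Matrix.mul_smul, Matrix.mul_one]
            _ = _ := by rw [hM', hM'', Matrix.smul_mul, Matrix.smul_mul]
        exact (dv_iff _ _).2 ⟨_, hsm _ hp0 _ _ this⟩
    have hreg : ∀ a, ¬ Dv p (M * (L a).adjugate) →
        cnt t n (fun A => if A * L a = (p:ℤ) ^ e • M then (1:ℝ) else 0) ≤
          if e = 0 then 0 else 2 ^ n * (Fintype.card κ : ℝ) ^ (e - 1) := by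
      intro a ha
      split_ifs with he
      · subst he
        refine (MonExp.cnt_mono t n (Ψ := fun _ => 0) (fun A => ?_)).trans (cnt_zero t n).le
        rw [if_neg]
        intro h
        have h2 := hcancel A a h
        rw [pow_zero, one_smul] at h2
        exact ha ((dv_iff _ _).2 ⟨A, h2.symm⟩)
      · refine (MonExp.cnt_mono t n (fun A => ?_)).trans (ih (e - 1) _ ha)
        by_cases h : A * L a = (p:ℤ) ^ e • M
        · have h2 := hcancel A a h
          obtain ⟨e', rfl⟩ := Nat.exists_eq_succ_of_ne_zero he
          rw [Nat.succ_eq_add_one, pow_succ', mul_smul] at h2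
          rw [if_pos h, if_pos]
          simpa using hsm _ hp0 _ _ h2
        · rw [if_neg h]; split_ifs <;> norm_num
    have hk : (0:ℝ) ≤ Fintype.card κ := by positivity
    have hreg0 : (0:ℝ) ≤ if e = 0 then 0 else 2 ^ n * (Fintype.card κ : ℝ) ^ (e - 1) := by
      split_ifs <;> positivity
    have hregk : (Fintype.card κ : ℝ) * (if e = 0 then 0 else 2 ^ n * (Fintype.card κ : ℝ) ^ (e - 1))
        ≤ 2 ^ n * (Fintype.card κ : ℝ) ^ e := by
      split_ifs with he
      · rw [mul_zero]; positivity
      · obtain ⟨e', rfl⟩ := Nat.exists_eq_succ_of_ne_zero he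
        rw [Nat.succ_eq_add_one, pow_succ]
        simp only [Nat.add_sub_cancel]
        apply le_of_eq; ring
    by_cases hex : ∃ a, Dv p (M * (L a).adjugate)
    · obtain ⟨a0, ha0⟩ := hex
      rw [← Finset.add_sum_erase _ _ (Finset.mem_univ a0)]
      have h1 := hexc a0 ha0
      have h2 : ∑ a ∈ Finset.univ.erase a0,
          cnt t n (fun A => if A * L a = (p:ℤ) ^ e • M then (1:ℝ) else 0) ≤
          (Fintype.card κ : ℝ) * (if e = 0 then 0 else 2 ^ n * (Fintype.card κ : ℝ) ^ (e - 1)) := by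
        refine (Finset.sum_le_card_nsmul _ _ _ fun a ha => hreg a fun had => ?_).trans ?_
        · exact ht.letter_sep n (Finset.ne_of_mem_erase ha) (dv_unique hp hM had ha0)
        · rw [nsmul_eq_mul]
          refine mul_le_mul_of_nonneg_right ?_ hreg0
          exact_mod_cast Finset.card_le_univ _
      rw [pow_succ]
      linarith
    · push Not at hex
      refine (Finset.sum_le_card_nsmul _ _ _ fun a _ => hreg a (hex a)).trans ?_
      rw [nsmul_eq_mul, Finset.card_univ]
      refine hregk.trans ?_
      rw [pow_succ]
      have : (0:ℝ) ≤ 2 ^ n * (Fintype.card κ : ℝ) ^ e := by positivity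
      linarith

end Count

/-- The integers of absolute value at most `y`. -/
noncomputable def symI (y : ℝ) : Finset ℤ := Finset.Icc (-⌊y⌋) ⌊y⌋

theorem mem_symI {y : ℝ} {x : ℤ} : x ∈ symI y ↔ |(x:ℝ)| ≤ y := by
  rw [symI, Finset.mem_Icc, abs_le, Int.le_floor, neg_le, Int.le_floor]
  push_cast
  constructor <;> rintro ⟨h1, h2⟩ <;> constructor <;> linarith

theorem card_symI {y : ℝ} (hy : 0 ≤ y) : ((symI y).card : ℝ) ≤ 2 * y + 1 := by
  rw [symI, Int.card_Icc]
  have h0 : 0 ≤ ⌊y⌋ := Int.floor_nonneg.2 hy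
  have h1 : ((⌊y⌋ + 1 - -⌊y⌋).toNat : ℤ) = 2 * ⌊y⌋ + 1 := by
    rw [Int.toNat_of_nonneg (by omega)]; ring
  have h2 : ((⌊y⌋ + 1 - -⌊y⌋).toNat : ℝ) = 2 * ⌊y⌋ + 1 := by exact_mod_cast h1
  rw [h2]
  linarith [Int.floor_le y]

/-- An integer has at most twice as many signed divisors as positive ones. -/
theorem card_signed_divisors (n : ℕ) (s : Finset ℤ) (hn : n ≠ 0) (hs : ∀ b ∈ s, b ∣ (n:ℤ)) :
    s.card ≤ 2 * n.divisors.card := by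
  classical
  have : s ⊆ n.divisors.image (fun d : ℕ => (d:ℤ)) ∪ n.divisors.image (fun d : ℕ => -(d:ℤ)) := by
    intro b hb
    have h1 : b.natAbs ∈ n.divisors :=
      Nat.mem_divisors.2 ⟨Int.natAbs_dvd_natAbs.2 (hs b hb), hn⟩
    rw [Finset.mem_union, Finset.mem_image, Finset.mem_image]
    rcases Int.natAbs_eq b with h | h
    · exact Or.inl ⟨_, h1, h.symm⟩
    · exact Or.inr ⟨_, h1, h.symm⟩
  refine (Finset.card_le_card this).trans ((Finset.card_union_le _ _).trans ?_)
  have h1 := Finset.card_image_le (s := n.divisors) (f := fun d : ℕ => (d:ℤ))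
  have h2 := Finset.card_image_le (s := n.divisors) (f := fun d : ℕ => -(d:ℤ))
  omega

/-- A divisor of `p ^ (2 * k)` within a bounded factor of `p ^ k` equals `p ^ k`, as it is a power
of `p`. -/
theorem prime_pow_near {p k : ℕ} (hp : p.Prime) (hp3 : 3 ≤ p) {x y : ℤ}
    (hxy : x * y = ((p ^ k : ℕ) : ℤ) ^ 2) (h1 : ((p ^ k : ℕ) : ℝ) / 2 ≤ x)
    (h2 : (x:ℝ) ≤ 3 / 2 * (p ^ k : ℕ)) : x = ((p ^ k : ℕ) : ℤ) := by
  have hpk : 0 < p ^ k := pow_pos hp.pos k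
  have hpkr : (0:ℝ) < (p ^ k : ℕ) := by exact_mod_cast hpk
  have hx0 : 0 < x := by
    have : (0:ℝ) < x := by linarith
    exact_mod_cast this
  lift x to ℕ using hx0.le
  have hd : (x:ℤ) ∣ ((p ^ (2 * k) : ℕ) : ℤ) := ⟨y, by rw [hxy]; push_cast; ring⟩
  obtain ⟨i, _, rfl⟩ := (Nat.dvd_prime_pow hp).1 (Int.natCast_dvd_natCast.1 hd)
  have h1' : p ^ k ≤ 2 * p ^ i := by
    have : ((p ^ k : ℕ) : ℝ) ≤ 2 * ((p ^ i : ℕ) : ℝ) := by push_cast at h1 ⊢; linarith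
    exact_mod_cast this
  have h2' : 2 * p ^ i ≤ 3 * p ^ k := by
    have : 2 * ((p ^ i : ℕ) : ℝ) ≤ 3 * ((p ^ k : ℕ) : ℝ) := by push_cast at h2 ⊢; linarith
    exact_mod_cast this
  rcases lt_trichotomy i k with h | h | h
  · have : p ^ (i + 1) ≤ p ^ k := Nat.pow_le_pow_right hp.pos h
    rw [pow_succ] at this
    have : 0 < p ^ i := pow_pos hp.pos i
    nlinarith
  · rw [h]
  · have : p ^ (k + 1) ≤ p ^ i := Nat.pow_le_pow_right hp.pos h
    rw [pow_succ] at this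
    nlinarith

/-- A bound for the number of integer matrices of determinant `X²` near the scalar matrix `X`. -/
theorem card_near_scalar {p k : ℕ} (hp : p.Prime) (hp3 : 3 ≤ p) {η : ℝ} (hη0 : 0 < η)
    (hη : η ≤ 1 / 2) {X D : ℕ} (hX : X = p ^ k) (hD : ∀ m : ℕ, 0 < m → m ≤ X ^ 2 → m.divisors.card ≤ D)
    (C : Finset ZMat) (hdet : ∀ M ∈ C, M.det = (X:ℤ) ^ 2)
    (hC : ∀ M ∈ C, ∀ i j, |(M i j : ℝ) - X * (1 : Mat) i j| ≤ η * X) :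
    (C.card : ℝ) ≤ (4 * η ^ 2 * X + 1) * (2 * η * X + 1) * (2 * D) + 2 * (2 * η * X + 1) := by
  classical
  have hXpos : 0 < X := by rw [hX]; exact pow_pos hp.pos k
  have hXr : (0:ℝ) < X := by exact_mod_cast hXpos
  have b00 : ∀ M ∈ C, |((M 0 0 - X : ℤ) : ℝ)| ≤ η * X := fun M hM => by
    simpa using hC M hM 0 0
  have b11 : ∀ M ∈ C, |((M 1 1 - X : ℤ) : ℝ)| ≤ η * X := fun M hM => by
    simpa using hC M hM 1 1
  have b01 : ∀ M ∈ C, |(M 0 1 : ℝ)| ≤ η * X := fun M hM => by simpa using hC M hM 0 1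
  have b10 : ∀ M ∈ C, |(M 1 0 : ℝ)| ≤ η * X := fun M hM => by simpa using hC M hM 1 0
  have hdt : ∀ M ∈ C, M 0 0 * M 1 1 - M 0 1 * M 1 0 = (X:ℤ) ^ 2 := fun M hM => by
    rw [← hdet M hM, Matrix.det_fin_two]
  have hbc : ∀ M ∈ C, |(M 0 1 : ℝ) * M 1 0| ≤ η ^ 2 * X ^ 2 := fun M hM => by
    rw [abs_mul, show η ^ 2 * (X:ℝ) ^ 2 = (η * X) * (η * X) by ring]
    exact mul_le_mul (b01 M hM) (b10 M hM) (abs_nonneg _) (by positivity)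
  rw [← Finset.card_filter_add_card_filter_not (s := C) (fun M => M 0 1 * M 1 0 ≠ 0)]
  push_cast
  refine add_le_add ?_ ?_
  · set C1 := C.filter (fun M => M 0 1 * M 1 0 ≠ 0) with hC1
    let φ : ZMat → ℤ × ℤ := fun M => (M 0 0 + M 1 1 - 2 * X, M 0 0 - X)
    have himg : C1.image φ ⊆ symI (2 * η ^ 2 * X) ×ˢ symI (η * X) := by
      intro q hq
      obtain ⟨M, hM, rfl⟩ := Finset.mem_image.1 hq
      have hMC := (Finset.mem_filter.1 hM).1
      rw [Finset.mem_product, mem_symI, mem_symI]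
      refine ⟨?_, b00 M hMC⟩
      have e : (X:ℝ) * ((M 0 0 + M 1 1 - 2 * X : ℤ) : ℝ) =
          (M 0 1 : ℝ) * M 1 0 - ((M 0 0 - X : ℤ) : ℝ) * ((M 1 1 - X : ℤ) : ℝ) := by
        have : (X:ℤ) * (M 0 0 + M 1 1 - 2 * X) =
          M 0 1 * M 1 0 - (M 0 0 - X) * (M 1 1 - X) := by linear_combination hdt M hMC
        exact_mod_cast this
      have e2 : |((M 0 0 - X : ℤ) : ℝ) * ((M 1 1 - X : ℤ) : ℝ)| ≤ η ^ 2 * X ^ 2 := by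
        rw [abs_mul, show η ^ 2 * (X:ℝ) ^ 2 = (η * X) * (η * X) by ring]
        exact mul_le_mul (b00 M hMC) (b11 M hMC) (abs_nonneg _) (by positivity)
      have e3 : (X:ℝ) * |((M 0 0 + M 1 1 - 2 * X : ℤ) : ℝ)| ≤ X * (2 * η ^ 2 * X) := by
        rw [← abs_of_pos hXr, ← abs_mul, abs_of_pos hXr, e]
        refine (abs_sub _ _).trans ?_
        linarith [hbc M hMC]
      exact le_of_mul_le_mul_left e3 hXr
    have hfib : ∀ q ∈ C1.image φ, (C1.filter fun M => φ M = q).card ≤ 2 * D := by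
      intro q hq
      obtain ⟨M0, hM0, rfl⟩ := Finset.mem_image.1 hq
      obtain ⟨hM0C, hM0n⟩ := Finset.mem_filter.1 hM0
      have hprod : ∀ M ∈ C1.filter fun M => φ M = φ M0, M 0 0 = M0 0 0 ∧ M 1 1 = M0 1 1 ∧
          M 0 1 * M 1 0 = M0 0 1 * M0 1 0 := by
        intro M hM
        obtain ⟨hM1, hM2⟩ := Finset.mem_filter.1 hM
        have h1 := congrArg Prod.fst hM2
        have h2 := congrArg Prod.snd hM2
        simp only [φ] at h1 h2
        have h3 : M 0 0 = M0 0 0 := by omega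
        have h4 : M 1 1 = M0 1 1 := by omega
        refine ⟨h3, h4, ?_⟩
        have h5 := hdt M (Finset.mem_filter.1 hM1).1
        rw [h3, h4] at h5
        linarith [hdt M0 hM0C]
      have hinj : Set.InjOn (fun M : ZMat => M 0 1) (C1.filter fun M => φ M = φ M0) := by
        intro M hM M' hM' h
        obtain ⟨a1, a2, a3⟩ := hprod M hM
        obtain ⟨c1, c2, c3⟩ := hprod M' hM'
        simp only at h
        have h10 : M 1 0 = M' 1 0 := by
          rw [← c3, h] at a3
          refine mul_left_cancel₀ ?_ a3
          intro h0
          rw [h0, zero_mul] at c3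
          exact hM0n c3.symm
        ext i j
        fin_cases i <;> fin_cases j
        · exact a1.trans c1.symm
        · exact h
        · exact h10
        · exact a2.trans c2.symm
      rw [← Finset.card_image_of_injOn hinj]
      refine (card_signed_divisors (M0 0 1 * M0 1 0).natAbs _ (Int.natAbs_ne_zero.2 hM0n) ?_).trans ?_
      · intro b hb
        obtain ⟨M, hM, rfl⟩ := Finset.mem_image.1 hb
        rw [Int.dvd_natAbs]
        exact ⟨_, (hprod M hM).2.2.symm⟩
      · refine Nat.mul_le_mul_left 2 (hD _ (Int.natAbs_pos.2 hM0n) ?_)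
        have h1 := hbc M0 hM0C
        have h2 : (((M0 0 1 * M0 1 0).natAbs : ℕ) : ℝ) = |(M0 0 1 : ℝ) * M0 1 0| := by
          rw [Nat.cast_natAbs]; push_cast; rfl
        have h3 : (((M0 0 1 * M0 1 0).natAbs : ℕ) : ℝ) ≤ ((X ^ 2 : ℕ) : ℝ) := by
          rw [h2]
          refine h1.trans ?_
          push_cast
          have : η ^ 2 ≤ 1 := by nlinarith
          exact mul_le_of_le_one_left (by positivity) this
        exact_mod_cast h3
    have h1 := Finset.card_le_mul_card_image C1 (2 * D) hfib
    have h2 := Finset.card_le_card himg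
    rw [Finset.card_product] at h2
    have h3 : (C1.card : ℝ) ≤ (2 * D) * (((symI (2 * η ^ 2 * X)).card : ℝ) * (symI (η * X)).card) := by
      have : C1.card ≤ 2 * D * ((symI (2 * η ^ 2 * X)).card * (symI (η * X)).card) :=
        h1.trans (Nat.mul_le_mul_left _ h2)
      exact_mod_cast this
    have h4 := card_symI (y := 2 * η ^ 2 * X) (by positivity)
    have h5 := card_symI (y := η * X) (by positivity)
    calc (C1.card : ℝ) ≤ _ := h3
      _ ≤ (2 * D) * ((2 * (2 * η ^ 2 * X) + 1) * (2 * (η * X) + 1)) := by gcongr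
      _ = _ := by ring
  · set C2 := C.filter (fun M => ¬ M 0 1 * M 1 0 ≠ 0) with hC2
    have hdiag : ∀ M ∈ C2, M 0 0 = X ∧ M 1 1 = X := by
      intro M hM
      obtain ⟨hM1, hM2⟩ := Finset.mem_filter.1 hM
      push Not at hM2
      have h1 := hdt M hM1
      rw [hM2, sub_zero] at h1
      have h2 := abs_le.1 (b00 M hM1)
      have h3 := abs_le.1 (b11 M hM1)
      push_cast at h2 h3
      have hXX : η * X ≤ 1 / 2 * X := by gcongr
      constructor
      · rw [hX] at h1 h2 hXX ⊢
        exact prime_pow_near hp hp3 h1 (by linarith) (by linarith)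
      · rw [hX] at h1 h3 hXX ⊢
        rw [mul_comm] at h1
        exact prime_pow_near hp hp3 h1 (by linarith) (by linarith)
    let ψ : ZMat → ℤ × ℤ := fun M => (M 0 1, M 1 0)
    have hinj : Set.InjOn ψ C2 := by
      intro M hM M' hM' h
      ext i j
      fin_cases i <;> fin_cases j
      · exact (hdiag M hM).1.trans (hdiag M' hM').1.symm
      · exact congrArg Prod.fst h
      · exact congrArg Prod.snd h
      · exact (hdiag M hM).2.trans (hdiag M' hM').2.symm
    have himg : C2.image ψ ⊆ ({0} : Finset ℤ) ×ˢ symI (η * X) ∪ symI (η * X) ×ˢ ({0} : Finset ℤ) := by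
      intro q hq
      obtain ⟨M, hM, rfl⟩ := Finset.mem_image.1 hq
      obtain ⟨hM1, hM2⟩ := Finset.mem_filter.1 hM
      push Not at hM2
      rw [Finset.mem_union, Finset.mem_product, Finset.mem_product, mem_symI, mem_symI,
        Finset.mem_singleton, Finset.mem_singleton]
      rcases mul_eq_zero.1 hM2 with h | h
      · exact Or.inl ⟨h, b10 M hM1⟩
      · exact Or.inr ⟨b01 M hM1, h⟩
    rw [← Finset.card_image_of_injOn hinj]
    have h1 := (Finset.card_le_card himg).trans (Finset.card_union_le _ _)
    rw [Finset.card_product, Finset.card_product, Finset.card_singleton] at h1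
    have h2 : ((C2.image ψ).card : ℝ) ≤ 1 * (symI (η * X)).card + (symI (η * X)).card * 1 := by
      exact_mod_cast h1
    have h5 := card_symI (y := η * X) (by positivity)
    linarith

/-- An integer matrix whose determinant is a power of `p` is a power of `p` times a matrix not
divisible by `p`. -/
theorem exists_primitive {p : ℕ} (hp : p.Prime) (n : ℕ) (M : ZMat) (hM : M.det = (p:ℤ) ^ n) :
    ∃ (e : ℕ) (M' : ZMat), 2 * e ≤ n ∧ M = (p:ℤ) ^ e • M' ∧ ¬ Dv p M' ∧
      M'.det = (p:ℤ) ^ (n - 2 * e) := by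
  have hp0 : (p:ℤ) ≠ 0 := by exact_mod_cast hp.ne_zero
  induction n using Nat.strong_induction_on generalizing M with
  | _ n ih =>
    by_cases hd : Dv p M
    · obtain ⟨M1, rfl⟩ := (dv_iff _ _).1 hd
      have h1 : (p:ℤ) ^ 2 * M1.det = (p:ℤ) ^ n := by
        rw [← hM, Matrix.det_smul]; simp
      have hn : 2 ≤ n := by
        have h2 : (p:ℤ) ^ 2 ∣ (p:ℤ) ^ n := ⟨_, h1.symm⟩
        have h3 : p ^ 2 ∣ p ^ n := by exact_mod_cast h2
        exact (Nat.pow_dvd_pow_iff_le_right hp.one_lt).1 h3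
      obtain ⟨n, rfl⟩ := Nat.exists_eq_add_of_le hn
      rw [pow_add] at h1
      obtain ⟨e, M', h2, h3, h4, h5⟩ := ih n (by omega) M1
        (mul_left_cancel₀ (pow_ne_zero 2 hp0) h1)
      refine ⟨e + 1, M', by omega, ?_, h4, ?_⟩
      · rw [h3, smul_smul, pow_succ']
      · rw [h5]; congr 1; omega
    · exact ⟨0, M, by omega, by simp, hd, by simpa using hM⟩

/-- The matrix `M` lies within `η X` of the scalar matrix `X`. -/
def NearScalar (η X : ℝ) (M : ZMat) : Prop := ∀ i j, |(M i j : ℝ) - X * (1 : Mat) i j| ≤ η * X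

open Classical in
/-- Few words of length `4ℓ` give a matrix close to a scalar one. -/
theorem Sep.count_close {κ : Type} [Fintype κ] {p : ℕ} {t : κ → ZMat} (ht : Sep p t) (hp3 : 3 ≤ p)
    (hκ : Fintype.card κ ≤ p) {l : ℕ} {η : ℝ} (hη0 : 0 < η) (hη : η ≤ 1 / 2)
    (h1 : 1 ≤ η ^ 3 * (p:ℝ) ^ (2 * l)) {D : ℕ}
    (hD : ∀ m : ℕ, 0 < m → m ≤ p ^ (4 * l) → m.divisors.card ≤ D) :
    cnt t (4 * l) (fun M => if NearScalar η ((p:ℝ) ^ (2 * l)) M then 1 else 0) ≤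
      16 ^ l * (2 * l + 1) * (36 * D * η ^ 3 * (p:ℝ) ^ (4 * l)) := by
  have hp := ht.prime
  have hpr : (0:ℝ) < p := by exact_mod_cast hp.pos
  have hp1 : (1:ℝ) ≤ p := by exact_mod_cast hp.one_lt.le
  have hD1 : (1:ℝ) ≤ D := by
    have := hD 1 one_pos (Nat.one_le_pow _ _ hp.pos)
    simp at this
    exact_mod_cast this
  -- the candidates for the primitive part
  let B : ℕ → Finset ZMat := fun e =>
    (Fintype.piFinset fun _ => Fintype.piFinset fun _ => symI (2 * (p:ℝ) ^ (2 * l - e))).filter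
      fun M => M.det = (p:ℤ) ^ (4 * l - 2 * e) ∧ NearScalar η ((p:ℝ) ^ (2 * l - e)) M ∧ ¬ Dv p M
  have hB : ∀ e, e ≤ 2 * l → ∀ M : ZMat, M.det = (p:ℤ) ^ (4 * l - 2 * e) →
      NearScalar η ((p:ℝ) ^ (2 * l - e)) M → ¬ Dv p M → M ∈ B e := by
    intro e _ M h2 h3 h4
    refine Finset.mem_filter.2 ⟨?_, h2, h3, h4⟩
    refine Fintype.mem_piFinset.2 fun i => Fintype.mem_piFinset.2 fun j => mem_symI.2 ?_
    have hX : (0:ℝ) < (p:ℝ) ^ (2 * l - e) := by positivity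
    have h5 := abs_le.1 (h3 i j)
    have h6 : 0 ≤ (1 : Mat) i j ∧ (1 : Mat) i j ≤ 1 := by
      rw [Matrix.one_apply]; split_ifs <;> norm_num
    have h7 := mul_nonneg hX.le h6.1
    have h8 := mul_le_mul_of_nonneg_left h6.2 hX.le
    have h9 : η * (p:ℝ) ^ (2 * l - e) ≤ 1 / 2 * (p:ℝ) ^ (2 * l - e) := by gcongr
    exact abs_le.2 ⟨by linarith, by linarith⟩
  have step1 : cnt t (4 * l) (fun M => if NearScalar η ((p:ℝ) ^ (2 * l)) M then 1 else 0) ≤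
      cnt t (4 * l) (fun M => ∑ e ∈ Finset.range (2 * l + 1), ∑ M' ∈ B e,
        if M = (p:ℤ) ^ e • M' then 1 else 0) := by
    refine ht.cnt_mono _ fun M hM => ?_
    have hnn : ∀ e, (0:ℝ) ≤ ∑ M' ∈ B e, if M = (p:ℤ) ^ e • M' then (1:ℝ) else 0 := fun e =>
      Finset.sum_nonneg fun _ _ => by split_ifs <;> norm_num
    split_ifs with hn
    · obtain ⟨e, M', e1, e2, e3, e4⟩ := exists_primitive hp _ M hM
      have hpe : (0:ℝ) < (p:ℝ) ^ e := by positivity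
      have e5 : NearScalar η ((p:ℝ) ^ (2 * l - e)) M' := by
        intro i j
        have h := hn i j
        have hs : (p:ℝ) ^ (2 * l) = (p:ℝ) ^ e * (p:ℝ) ^ (2 * l - e) := by
          rw [← pow_add]; congr 1; omega
        have hMij : (M i j : ℝ) = (p:ℝ) ^ e * (M' i j : ℝ) := by rw [e2]; simp
        rw [hMij, hs, mul_assoc, ← mul_sub, abs_mul, abs_of_pos hpe, mul_left_comm η] at h
        exact le_of_mul_le_mul_left h hpe
      have hmem := hB e (by omega) M' e4 e5 e3
      calc (1:ℝ) = if M = (p:ℤ) ^ e • M' then (1:ℝ) else 0 := by rw [if_pos e2]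
        _ ≤ ∑ M' ∈ B e, if M = (p:ℤ) ^ e • M' then (1:ℝ) else 0 :=
            Finset.single_le_sum (f := fun M' => if M = (p:ℤ) ^ e • M' then (1:ℝ) else 0)
              (fun _ _ => by split_ifs <;> norm_num) hmem
        _ ≤ _ := Finset.single_le_sum
            (f := fun e => ∑ M' ∈ B e, if M = (p:ℤ) ^ e • M' then (1:ℝ) else 0)
            (fun e _ => hnn e) (Finset.mem_range.2 (by omega))
    · exact Finset.sum_nonneg fun e _ => hnn e
  refine step1.trans ?_
  rw [cnt_sum]
  have step2 : ∀ e ∈ Finset.range (2 * l + 1), cnt t (4 * l) (fun M => ∑ M' ∈ B e,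
      if M = (p:ℤ) ^ e • M' then 1 else 0) ≤ 16 ^ l * (36 * D * η ^ 3 * (p:ℝ) ^ (4 * l)) := by
    intro e he
    have he' : e ≤ 2 * l := by have := Finset.mem_range.1 he; omega
    rw [cnt_sum]
    have h2 : ∀ M' ∈ B e, cnt t (4 * l) (fun M => if M = (p:ℤ) ^ e • M' then 1 else 0) ≤
        2 ^ (4 * l) * (Fintype.card κ : ℝ) ^ e := fun M' hM' =>
      ht.word_count _ _ _ (Finset.mem_filter.1 hM').2.2.2
    refine (Finset.sum_le_card_nsmul _ _ _ h2).trans ?_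
    rw [nsmul_eq_mul]
    have hXX : (p ^ (2 * l - e)) ^ 2 = p ^ (4 * l - 2 * e) := by
      rw [← pow_mul]; congr 1; omega
    have hc := card_near_scalar hp hp3 hη0 hη (X := p ^ (2 * l - e)) (D := D) rfl
      (fun m hm hm2 => hD m hm (hm2.trans (by
        rw [hXX]; exact Nat.pow_le_pow_right hp.pos (by omega)))) (B e)
      (fun M hM => by
        rw [(Finset.mem_filter.1 hM).2.1]; exact_mod_cast hXX.symm)
      (fun M hM i j => by
        have := (Finset.mem_filter.1 hM).2.2.1 i j
        push_cast; exact this)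
    push_cast at hc
    set Xe : ℝ := (p:ℝ) ^ (2 * l - e) with hXe
    set X : ℝ := (p:ℝ) ^ (2 * l) with hX
    set K : ℝ := (Fintype.card κ : ℝ) ^ e with hK
    have hK0 : 0 ≤ K := by positivity
    have hXe0 : 0 < Xe := by positivity
    have hX0 : 0 < X := by positivity
    have hKp : K ≤ (p:ℝ) ^ e := by
      rw [hK]; gcongr
    have hKX : K * Xe ≤ X := by
      calc K * Xe ≤ (p:ℝ) ^ e * Xe := by gcongr
        _ = X := by rw [hXe, hX, ← pow_add]; congr 1; omega
    have hKX' : K ≤ X := hKp.trans (pow_le_pow_right₀ hp1 he')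
    have hXeX : Xe ≤ X := pow_le_pow_right₀ hp1 (by omega)
    have hX4 : (p:ℝ) ^ (4 * l) = X ^ 2 := by rw [hX, ← pow_mul]; congr 1; omega
    have hXη : X ≤ η ^ 3 * X ^ 2 := by nlinarith
    rw [hX4, show (2:ℝ) ^ (4 * l) = 16 ^ l by rw [pow_mul]; norm_num]
    have t1 : D * η ^ 3 * ((K * Xe) * Xe) ≤ D * η ^ 3 * (X * X) := by gcongr
    have t2 : D * η ^ 2 * (K * Xe) ≤ D * 1 * X := by
      gcongr
      nlinarith
    have t3 : D * η * (K * Xe) ≤ D * 1 * X := by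
      gcongr
      linarith
    have t4 : D * K ≤ D * X := by gcongr
    have t5 : η * (K * Xe) ≤ D * X := by
      gcongr
      linarith
    have t6 : K ≤ D * X := by nlinarith
    have t7 : D * X ≤ D * (η ^ 3 * X ^ 2) := by gcongr
    have hfin : ((B e).card : ℝ) * K ≤ 36 * D * η ^ 3 * X ^ 2 := by
      calc ((B e).card : ℝ) * K ≤ _ * K := mul_le_mul_of_nonneg_right hc hK0
        _ = 16 * (D * η ^ 3 * ((K * Xe) * Xe)) + 8 * (D * η ^ 2 * (K * Xe)) +
            4 * (D * η * (K * Xe)) + 2 * (D * K) + 4 * (η * (K * Xe)) + 2 * K := by ring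
        _ ≤ _ := by linarith
    calc ((B e).card : ℝ) * (16 ^ l * K) = 16 ^ l * ((B e).card * K) := by ring
      _ ≤ _ := by gcongr
  refine (Finset.sum_le_card_nsmul _ _ _ step2).trans (le_of_eq ?_)
  rw [Finset.card_range, nsmul_eq_mul]
  push_cast
  ring

theorem avgW_const_mul {κ : Type} [Fintype κ] (s : κ → Mat) (j : ℕ) (c : ℝ) (Φ : Mat → ℝ) :
    avgW s j (fun g => c * Φ g) = c * avgW s j Φ := by
  induction j generalizing Φ with
  | zero => rfl
  | succ j ih =>
    rw [avgW, avgW, ← ih]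
    congr 1; ext g
    simp only [← Finset.mul_sum]
    ring

/-- The average over words of real matrices is a normalized count of integer words. -/
theorem cnt_eq_avgW {κ : Type} [Fintype κ] {p : ℕ} {t : κ → ZMat} {s : κ → Mat}
    (hst : ∀ a b, s a * (s b)⁻¹ =
      ((p:ℝ)⁻¹) • ((t a * (t b).adjugate).map (Int.cast : ℤ → ℝ))) (j : ℕ) (Φ : Mat → ℝ)
    (hκ : Fintype.card κ ≠ 0) :
    (Fintype.card κ : ℝ) ^ (2 * j) * avgW s j Φ =
      cnt t (2 * j) fun M => Φ (((p:ℝ) ^ j)⁻¹ • M.map (Int.cast : ℤ → ℝ)) := by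
  have hk : (Fintype.card κ : ℝ) ≠ 0 := by exact_mod_cast hκ
  induction j generalizing Φ with
  | zero =>
    simp only [avgW, cnt, Nat.mul_zero, pow_zero, one_mul, inv_one, one_smul]
    congr 1
    ext i j
    simp [Matrix.one_apply]
  | succ j ih =>
    have e1 : cnt t (2 * (j + 1)) (fun M => Φ (((p:ℝ) ^ (j + 1))⁻¹ • M.map (Int.cast : ℤ → ℝ))) =
        cnt t (2 * j) (fun M => ∑ a, ∑ b, Φ (((p:ℝ) ^ (j + 1))⁻¹ •
          (M * t a * (t b).adjugate).map (Int.cast : ℤ → ℝ))) := by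
      rw [show 2 * (j + 1) = 2 * j + 1 + 1 by ring]
      change cnt t (2 * j) (fun M => ∑ a, ∑ b, Φ (((p:ℝ) ^ (j + 1))⁻¹ •
          (M * letter t (2 * j) a * letter t (2 * j + 1) b).map (Int.cast : ℤ → ℝ))) = _
      simp [letter]
    rw [e1, avgW]
    have e2 := ih (fun g => ∑ a, ∑ b, Φ (g * (s a * (s b)⁻¹)))
    have e3 : (fun M : ZMat => ∑ a, ∑ b, Φ ((((p:ℝ) ^ j)⁻¹ • M.map (Int.cast : ℤ → ℝ)) *
        (s a * (s b)⁻¹))) = fun M => ∑ a, ∑ b, Φ (((p:ℝ) ^ (j + 1))⁻¹ •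
          (M * t a * (t b).adjugate).map (Int.cast : ℤ → ℝ)) := by
      ext M
      refine Finset.sum_congr rfl fun a _ => Finset.sum_congr rfl fun b _ => ?_
      congr 1
      rw [hst, Matrix.mul_assoc M, Matrix.smul_mul, Matrix.mul_smul, smul_smul, pow_succ, mul_inv]
      congr 1
      ext i k
      simp [Matrix.mul_apply, Fin.sum_univ_two]
    rw [← e3, ← e2]
    have e4 : avgW s j (fun g => ((Fintype.card κ : ℝ) ^ 2)⁻¹ *
        ∑ a, ∑ b, Φ (g * (s a * (s b)⁻¹))) = ((Fintype.card κ : ℝ) ^ 2)⁻¹ *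
        avgW s j (fun g => ∑ a, ∑ b, Φ (g * (s a * (s b)⁻¹))) := by
      exact avgW_const_mul s j _ _
    rw [e4, show 2 * (j + 1) = 2 * j + 2 by ring, pow_add]
    field_simp

theorem exists_pow_le (r : ℕ) : ∃ A : ℕ, 1 ≤ A ∧ ∀ a : ℕ, (a + 1) ^ r ≤ A * 2 ^ a := by
  have h := tendsto_pow_const_div_const_pow_of_one_lt r (r := (2:ℝ)) (by norm_num)
  obtain ⟨B, hB⟩ := h.bddAbove_range
  obtain ⟨A, hA⟩ := exists_nat_ge B
  refine ⟨2 * A + 1, by omega, fun a => ?_⟩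
  have h1 := hB ⟨a + 1, rfl⟩
  simp only at h1
  have h2 := h1.trans hA
  rw [div_le_iff₀ (by positivity)] at h2
  have h3 : (a + 1) ^ r ≤ A * 2 ^ (a + 1) := by exact_mod_cast h2
  rw [pow_succ] at h3
  nlinarith [Nat.zero_le (2 ^ a)]

/-- The number of divisors of `m` is `O(m ^ (1 / r))`. -/
theorem exists_divisor_bound (r : ℕ) (hr : r ≠ 0) :
    ∃ C : ℕ, 1 ≤ C ∧ ∀ m B : ℕ, 0 < m → m ≤ B ^ r → m.divisors.card ≤ C * B := by
  obtain ⟨A, hA1, hA⟩ := exists_pow_le r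
  refine ⟨A ^ 2 ^ r, Nat.one_le_pow _ _ hA1, fun m B hm hmB => ?_⟩
  have h1 : m.divisors.card ^ r ≤ A ^ 2 ^ r * m := by
    rw [Nat.card_divisors hm.ne', ← Finset.prod_pow]
    calc ∏ x ∈ m.primeFactors, (m.factorization x + 1) ^ r
        ≤ ∏ x ∈ m.primeFactors, (if x < 2 ^ r then A else 1) * x ^ m.factorization x := by
          refine Finset.prod_le_prod' fun x hx => ?_
          have hx2 := (Nat.prime_of_mem_primeFactors hx).two_le
          split_ifs with h
          · exact (hA _).trans (Nat.mul_le_mul_left _ (Nat.pow_le_pow_left hx2 _))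
          · push Not at h
            rw [one_mul]
            calc (m.factorization x + 1) ^ r ≤ (2 ^ m.factorization x) ^ r :=
                  Nat.pow_le_pow_left (Nat.lt_two_pow_self) _
              _ = (2 ^ r) ^ m.factorization x := by rw [← pow_mul, ← pow_mul, mul_comm]
              _ ≤ _ := Nat.pow_le_pow_left h _
      _ = (∏ x ∈ m.primeFactors, if x < 2 ^ r then A else 1) * m := by
          rw [Finset.prod_mul_distrib]
          congr 1
          exact Nat.prod_factorization_pow_eq_self hm.ne'
      _ ≤ A ^ 2 ^ r * m := by
          gcongr
          rw [← Finset.prod_filter, Finset.prod_const]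
          refine Nat.pow_le_pow_right hA1 ?_
          calc _ ≤ (Finset.range (2 ^ r)).card := Finset.card_le_card fun x hx =>
                Finset.mem_range.2 (Finset.mem_filter.1 hx).2
            _ = _ := Finset.card_range _
  have h2 : m.divisors.card ^ r ≤ (A ^ 2 ^ r * B) ^ r := by
    calc _ ≤ A ^ 2 ^ r * B ^ r := h1.trans (Nat.mul_le_mul_left _ hmB)
      _ ≤ (A ^ 2 ^ r) ^ r * B ^ r := Nat.mul_le_mul_right _ (Nat.le_self_pow hr _)
      _ = _ := (mul_pow _ _ _).symm
  exact (Nat.pow_le_pow_iff_left hr).1 h2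

theorem le_totient_mul (n : ℕ) (hn : 0 < n) : n ≤ n.totient * n.divisors.card := by
  conv_lhs => rw [← Nat.sum_totient n]
  rw [mul_comm, ← smul_eq_mul]
  refine Finset.sum_le_card_nsmul _ _ _ fun d hd => ?_
  exact Nat.le_of_dvd (Nat.totient_pos.2 hn) (Nat.totient_dvd_of_dvd (Nat.dvd_of_mem_divisors hd))

/-- An integer matrix of determinant `p` with prescribed first row. -/
theorem exists_row {p a b : ℕ} (ha : 0 < a) (hab : a.Coprime b) :
    ∃ c d : ℤ, 0 ≤ c ∧ c < a ∧ a * d - b * c = p := by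
  obtain ⟨u, v, h⟩ := Nat.isCoprime_iff_coprime.2 hab
  have ha' : (a:ℤ) ≠ 0 := by exact_mod_cast ha.ne'
  have e := Int.emod_add_mul_ediv (-(p * v) : ℤ) a
  refine ⟨(-(p * v)) % a, p * u - b * ((-(p * v)) / a), Int.emod_nonneg _ ha',
    Int.emod_lt_of_pos _ (by exact_mod_cast ha), ?_⟩
  linear_combination (p:ℤ) * h - b * e

/-- The first rows of the matrices under consideration. -/
def rows (B : ℕ) : Finset (ℕ × ℕ) :=
  ((Finset.Ioc (B / 2) B) ×ˢ (Finset.range (B + 1))).filter fun x => x.2 < x.1 ∧ x.1.Coprime x.2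

theorem card_rows_le (B : ℕ) : (rows B).card ≤ B ^ 2 := by
  calc (rows B).card ≤ ((Finset.Ioc 0 B) ×ˢ (Finset.range B)).card := by
        refine Finset.card_le_card fun x hx => ?_
        simp only [rows, Finset.mem_filter, Finset.mem_product, Finset.mem_Ioc, Finset.mem_range]
          at hx ⊢
        omega
    _ = B ^ 2 := by simp [sq]

/-- There are many coprime rows: each totient `φ a` is at least `a` divided by a divisor count. -/
theorem le_card_rows {B D : ℕ} (hD : ∀ m, 0 < m → m ≤ B → m.divisors.card ≤ D) :
    B ^ 2 ≤ 4 * D * (rows B).card := by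
  have h1 : (rows B).card = ∑ a ∈ Finset.Ioc (B / 2) B, a.totient := by
    rw [Finset.card_eq_sum_card_fiberwise (s := rows B) (f := Prod.fst)
      (t := Finset.Ioc (B / 2) B)
      (fun x hx => (Finset.mem_product.1 (Finset.mem_filter.1 hx).1).1)]
    refine Finset.sum_congr rfl fun a ha => ?_
    rw [Nat.totient_eq_card_coprime]
    refine Finset.card_bij (fun x _ => x.2) ?_ ?_ ?_
    · intro x hx
      simp only [rows, Finset.mem_filter, Finset.mem_product, Finset.mem_Ioc, Finset.mem_range]
        at hx ⊢
      obtain ⟨⟨_, h1, h2⟩, rfl⟩ := hx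
      exact ⟨h1, h2⟩
    · intro x hx y hy h
      have h1 := (Finset.mem_filter.1 hx).2
      have h2 := (Finset.mem_filter.1 hy).2
      exact Prod.ext (h1.trans h2.symm) h
    · intro b hb
      simp only [Finset.mem_filter, Finset.mem_range, Finset.mem_Ioc] at hb ha
      refine ⟨(a, b), ?_, rfl⟩
      simp only [rows, Finset.mem_filter, Finset.mem_product, Finset.mem_Ioc, Finset.mem_range]
      exact ⟨⟨⟨ha, by omega⟩, hb⟩, trivial⟩
  have h2 : (Finset.Ioc (B / 2) B).card • B ≤
      ∑ a ∈ Finset.Ioc (B / 2) B, 2 * D * a.totient := by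
    refine Finset.card_nsmul_le_sum _ _ _ fun a ha => ?_
    rw [Finset.mem_Ioc] at ha
    have h3 := le_totient_mul a (by omega)
    have h4 := Nat.mul_le_mul_left a.totient (hD a (by omega) ha.2)
    calc B ≤ 2 * a := by omega
      _ ≤ 2 * (a.totient * D) := by omega
      _ = _ := by ring
  rw [← Finset.mul_sum, ← h1, Nat.card_Ioc, smul_eq_mul] at h2
  have h5 : B ≤ 2 * (B - B / 2) := by omega
  calc B ^ 2 = B * B := sq B
    _ ≤ 2 * (B - B / 2) * B := Nat.mul_le_mul_right _ h5
    _ ≤ _ := by nlinarith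

theorem mul_entry_le {X Y : ZMat} {x y : ℝ} (hX : ∀ i j, |(X i j : ℝ)| ≤ x)
    (hY : ∀ i j, |(Y i j : ℝ)| ≤ y) (i j : Fin 2) : |((X * Y) i j : ℝ)| ≤ 2 * (x * y) := by
  rw [Matrix.mul_apply, Fin.sum_univ_two]
  push_cast
  have h0 : 0 ≤ x := (abs_nonneg _).trans (hX 0 0)
  have h1 := mul_le_mul (hX i 0) (hY 0 j) (abs_nonneg _) h0
  have h2 := mul_le_mul (hX i 1) (hY 1 j) (abs_nonneg _) h0
  rw [← abs_mul] at h1 h2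
  have h3 := abs_add_le ((X i 0 : ℝ) * Y 0 j) (X i 1 * Y 1 j)
  linarith

theorem adj_entry_le {X : ZMat} {x : ℝ} (hX : ∀ i j, |(X i j : ℝ)| ≤ x) (i j : Fin 2) :
    |(X.adjugate i j : ℝ)| ≤ x := by
  rw [Matrix.adjugate_fin_two]
  fin_cases i <;> fin_cases j <;> simp [hX]

/-- Two integer matrices of determinant `p` whose quotient is integral and close to the identity
coincide. -/
theorem not_dv_of_near {p : ℕ} (hp : 0 < p) {Z : ZMat}
    (h : ∀ i j, |(Z i j : ℝ) - p * (1 : Mat) i j| < p) (hd : Dv p Z) : Z = (p:ℤ) • 1 := by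
  obtain ⟨M, rfl⟩ := (dv_iff _ _).1 hd
  congr 1
  ext i j
  have h1 := h i j
  have hp' : (0:ℝ) < p := by exact_mod_cast hp
  have e : (((p:ℤ) • M) i j : ℝ) - p * (1 : Mat) i j = p * ((M i j - (1 : ZMat) i j : ℤ) : ℝ) := by
    rw [Matrix.smul_apply, Matrix.one_apply, Matrix.one_apply]
    push_cast
    split_ifs <;> simp <;> ring
  rw [e, abs_mul, abs_of_pos hp'] at h1
  have h2 : |((M i j - (1 : ZMat) i j : ℤ) : ℝ)| < 1 := by
    by_contra h3
    push Not at h3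
    nlinarith
  have h3 : |M i j - (1 : ZMat) i j| < 1 := by exact_mod_cast h2
  rw [Int.abs_lt_one_iff] at h3
  linarith

/-- A large family of integer matrices of determinant `p` that are close to each other. -/
theorem exists_sep (K : ℕ) (hK : 2 ≤ K) : ∃ C : ℕ, ∀ Q p : ℕ, p.Prime → p ≤ Q ^ 320 →
    ∃ (κ : Type) (_ : Fintype κ) (t : κ → ZMat), Sep p t ∧ Fintype.card κ ≤ p ∧
      p ≤ C * Q * Fintype.card κ ∧
      ∀ a b i j, |((t a * (t b).adjugate) i j : ℝ) - p * (1 : Mat) i j| * K ≤ p := by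
  obtain ⟨C, hC1, hC⟩ := exists_divisor_bound 320 (by norm_num)
  refine ⟨16 * C * (9 * (18 * K) + 1) ^ 4, fun Q p hp hpQ => ?_⟩
  set B := Nat.sqrt p with hBdef
  have hB1 : B ^ 2 ≤ p := Nat.sqrt_le' p
  have hB2 : p < (B + 1) ^ 2 := Nat.lt_succ_sqrt' p
  have hB0 : 1 ≤ B := by
    by_contra h
    have : B = 0 := by omega
    rw [this] at hB2
    have := hp.two_le
    omega
  have hB4 : p ≤ 4 * B ^ 2 := by nlinarith
  have hBp : B ≤ p := by nlinarith
  -- the matrices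
  have hex : ∀ x : ℕ × ℕ, ∃ M : ZMat, x ∈ rows B →
      M.det = p ∧ M 0 0 = x.1 ∧ M 0 1 = x.2 ∧ ∀ i j, 0 ≤ M i j ∧ M i j ≤ 9 * B := by
    intro x
    by_cases hx : x ∈ rows B
    · have hx' := hx
      simp only [rows, Finset.mem_filter, Finset.mem_product, Finset.mem_Ioc, Finset.mem_range]
        at hx'
      obtain ⟨⟨⟨h1, h2⟩, h3⟩, h4, h5⟩ := hx'
      obtain ⟨c, d, h6, h7, h8⟩ := exists_row (p := p) (by omega : 0 < x.1) h5
      refine ⟨!![(x.1:ℤ), x.2; c, d], fun _ => ⟨?_, rfl, rfl, ?_⟩⟩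
      · rw [Matrix.det_fin_two_of]; exact h8
      · have ha : (0:ℤ) < x.1 := by exact_mod_cast (by omega : 0 < x.1)
        have ha2 : (B:ℤ) ≤ 2 * x.1 := by exact_mod_cast (by omega : B ≤ 2 * x.1)
        have haB : (x.1:ℤ) ≤ B := by exact_mod_cast h2
        have hbB : (x.2:ℤ) ≤ B := by exact_mod_cast (by omega : x.2 ≤ B)
        have hb0 : (0:ℤ) ≤ x.2 := by positivity
        have hp0 : (0:ℤ) < p := by exact_mod_cast hp.pos
        have hpB : (p:ℤ) ≤ 4 * B ^ 2 := by exact_mod_cast hB4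
        have hB0' : (0:ℤ) < B := by exact_mod_cast hB0
        have hbc : (x.2:ℤ) * c ≤ B * x.1 := mul_le_mul hbB h7.le h6 hB0'.le
        have hbc0 : 0 ≤ (x.2:ℤ) * c := mul_nonneg hb0 h6
        have hd0 : 0 ≤ d := by
          by_contra h
          push Not at h
          nlinarith
        have hd9 : d ≤ 9 * B := by
          refine le_of_mul_le_mul_left ?_ ha
          nlinarith
        intro i j
        fin_cases i <;> fin_cases j <;> simp <;> (try constructor) <;> linarith
    · exact ⟨0, fun h => absurd h hx⟩
  choose m hm using hex
  -- the pigeonhole principle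
  let box : ℕ × ℕ → (Fin 2 → Fin 2 → ℕ) := fun x i j => (18 * K * (m x i j).toNat) / B
  let T : Finset (Fin 2 → Fin 2 → ℕ) :=
    Fintype.piFinset fun _ => Fintype.piFinset fun _ => Finset.range (9 * (18 * K) + 1)
  have hT : T.card = (9 * (18 * K) + 1) ^ 4 := by
    simp only [T, Fintype.card_piFinset, Finset.card_range, Finset.prod_const, Finset.card_univ,
      Fintype.card_fin]
    ring
  have hbox : ∀ x ∈ rows B, box x ∈ T := by
    intro x hx
    refine Fintype.mem_piFinset.2 fun i => Fintype.mem_piFinset.2 fun j => ?_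
    rw [Finset.mem_range, Nat.lt_succ_iff]
    refine Nat.div_le_of_le_mul ?_
    have h1 := (hm x hx).2.2.2 i j
    have h2 : (m x i j).toNat ≤ 9 * B := by omega
    calc 18 * K * (m x i j).toNat ≤ 18 * K * (9 * B) := Nat.mul_le_mul_left _ h2
      _ = _ := by ring
  have hpig : ∃ y ∈ T, (rows B).card ≤
      ((rows B).filter fun x => box x = y).card * (9 * (18 * K) + 1) ^ 4 := by
    by_contra h
    push Not at h
    have hTne : T.Nonempty := by
      rw [← Finset.card_pos, hT]; positivity
    have h1 := Finset.card_eq_sum_card_fiberwise (f := box) (s := rows B) (t := T) hbox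
    have h2 : (rows B).card * T.card < T.card * (rows B).card := by
      calc (rows B).card * T.card =
          ∑ y ∈ T, ((rows B).filter fun x => box x = y).card * T.card := by
            conv_lhs => rw [h1]
            rw [Finset.sum_mul]
        _ < ∑ y ∈ T, (rows B).card := Finset.sum_lt_sum_of_nonempty hTne fun y hy => by
            rw [hT]; exact h y hy
        _ = _ := by rw [Finset.sum_const, smul_eq_mul]
    rw [mul_comm] at h2
    exact lt_irrefl _ h2
  obtain ⟨y, -, hy⟩ := hpig
  set S := (rows B).filter fun x => box x = y with hS
  have hrow : ∀ a : S, (a : ℕ × ℕ) ∈ rows B := fun a => (Finset.mem_filter.1 a.2).1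
  let t : S → ZMat := fun a => m a
  have hBr : (0:ℝ) < B := by exact_mod_cast hB0
  have hpr : (0:ℝ) < p := by exact_mod_cast hp.pos
  have hKr : (0:ℝ) < K := by exact_mod_cast (by omega : 0 < K)
  have hBp' : (B:ℝ) ^ 2 ≤ p := by exact_mod_cast hB1
  have hsize : ∀ (a : S) i j, |(t a i j : ℝ)| ≤ 9 * B := by
    intro a i j
    have h1 := (hm a (hrow a)).2.2.2 i j
    rw [abs_of_nonneg (by exact_mod_cast h1.1)]
    exact_mod_cast h1.2
  have hdiff : ∀ (a b : S) i j, |((t a - t b) i j : ℝ)| ≤ B / (18 * K) := by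
    intro a b i j
    have h1 := (hm a (hrow a)).2.2.2 i j
    have h2 := (hm b (hrow b)).2.2.2 i j
    have h3 : box a = box b := (Finset.mem_filter.1 a.2).2.trans (Finset.mem_filter.1 b.2).2.symm
    have h4 := congrFun (congrFun h3 i) j
    simp only [box] at h4
    have e1 := Nat.div_add_mod (18 * K * (m a i j).toNat) B
    have e2 := Nat.div_add_mod (18 * K * (m b i j).toNat) B
    have l1 := Nat.mod_lt (18 * K * (m a i j).toNat) (by omega : 0 < B)
    have l2 := Nat.mod_lt (18 * K * (m b i j).toNat) (by omega : 0 < B)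
    rw [h4] at e1
    have z1 : ((m a i j).toNat : ℝ) = (m a i j : ℝ) := by
      exact_mod_cast Int.toNat_of_nonneg h1.1
    have z2 : ((m b i j).toNat : ℝ) = (m b i j : ℝ) := by
      exact_mod_cast Int.toNat_of_nonneg h2.1
    set ra := 18 * K * (m a i j).toNat % B
    set rb := 18 * K * (m b i j).toNat % B
    have e1' : (B:ℝ) * ((18 * K * (m b i j).toNat / B : ℕ) : ℝ) + ra = 18 * K * (m a i j : ℝ) := by
      rw [← z1]; exact_mod_cast e1
    have e2' : (B:ℝ) * ((18 * K * (m b i j).toNat / B : ℕ) : ℝ) + rb = 18 * K * (m b i j : ℝ) := by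
      rw [← z2]; exact_mod_cast e2
    have l1' : (ra:ℝ) < B := by exact_mod_cast l1
    have l2' : (rb:ℝ) < B := by exact_mod_cast l2
    have l3 : (0:ℝ) ≤ ra := by positivity
    have l4 : (0:ℝ) ≤ rb := by positivity
    have hsub : ((t a - t b) i j : ℝ) = (m a i j : ℝ) - m b i j := by
      rw [Matrix.sub_apply]; push_cast; rfl
    have hK18 : (0:ℝ) < 18 * K := by positivity
    rw [hsub, abs_le, ← neg_div, div_le_iff₀ hK18, le_div_iff₀ hK18]
    constructor <;> nlinarith
  have hone : ∀ (c : ℝ) i j, c * (1 : Mat) i j = c * ((1 : ZMat) i j : ℝ) := by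
    intro c i j
    rw [Matrix.one_apply, Matrix.one_apply]; split_ifs <;> simp
  have hdet : ∀ a : S, (t a).det = p := fun a => (hm a (hrow a)).1
  have hfin : (2:ℝ) * (B / (18 * K) * (9 * B)) * K ≤ p := by
    have : (2:ℝ) * (B / (18 * K) * (9 * B)) * K = B ^ 2 := by field_simp; ring
    rw [this]; exact hBp'
  have hnear : ∀ (a b : S) i j,
      |((t a * (t b).adjugate) i j : ℝ) - p * (1 : Mat) i j| * K ≤ p := by
    intro a b i j
    have e : ((t a * (t b).adjugate) i j : ℝ) - p * (1 : Mat) i j =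
        (((t a - t b) * (t b).adjugate) i j : ℝ) := by
      rw [hone, Matrix.sub_mul, Matrix.mul_adjugate, hdet, Matrix.sub_apply, Matrix.smul_apply]
      push_cast
      simp
    rw [e]
    refine le_trans (mul_le_mul_of_nonneg_right
      (mul_entry_le (hdiff a b) (adj_entry_le (hsize b)) i j) hKr.le) hfin
  have hnear' : ∀ (a b : S) i j,
      |(((t a).adjugate * t b) i j : ℝ) - p * (1 : Mat) i j| * K ≤ p := by
    intro a b i j
    have e : (((t a).adjugate * t b) i j : ℝ) - p * (1 : Mat) i j =
        (((t a).adjugate * (t b - t a)) i j : ℝ) := by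
      rw [hone, Matrix.mul_sub, Matrix.adjugate_mul, hdet, Matrix.sub_apply, Matrix.smul_apply]
      push_cast
      simp
    rw [e]
    refine le_trans (mul_le_mul_of_nonneg_right
      (mul_entry_le (adj_entry_le (hsize a)) (hdiff b a) i j) hKr.le) (le_trans (le_of_eq ?_) hfin)
    ring
  have hlt : ∀ x : ℝ, |x| * K ≤ p → |x| < p := by
    intro x hx
    have hK2 : (2:ℝ) ≤ K := by exact_mod_cast hK
    nlinarith [abs_nonneg x]
  have hp0 : (p:ℤ) ≠ 0 := by exact_mod_cast hp.ne_zero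
  have hinj : ∀ a b : S, t a = t b → a = b := by
    intro a b h
    have h1 := hm a (hrow a)
    have h2 := hm b (hrow b)
    have h3 : m a = m b := h
    apply Subtype.ext
    apply Prod.ext
    · have := h1.2.1.symm.trans ((congrFun (congrFun h3 0) 0).trans h2.2.1)
      exact_mod_cast this
    · have := h1.2.2.1.symm.trans ((congrFun (congrFun h3 0) 1).trans h2.2.2.1)
      exact_mod_cast this
  have hsm : ∀ A B : ZMat, (p:ℤ) • A = (p:ℤ) • B → A = B := by
    intro A B h
    ext i j
    have := congrFun (congrFun h i) j
    simpa [hp.ne_zero] using this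
  refine ⟨S, inferInstance, t, ⟨hp, hdet, ?_, ?_⟩, ?_, ?_, hnear⟩
  · intro a b hab hd
    have h1 := not_dv_of_near hp.pos (fun i j => hlt _ (hnear a b i j)) hd
    apply hab
    apply hinj
    apply hsm
    have h2 := congrArg (· * t b) h1
    simp only [Matrix.mul_assoc, Matrix.adjugate_mul, hdet, Matrix.mul_smul, Matrix.mul_one,
      Matrix.smul_mul, Matrix.one_mul] at h2
    exact h2
  · intro a b hab hd
    have h1 := not_dv_of_near hp.pos (fun i j => hlt _ (hnear' a b i j)) hd
    apply hab
    apply hinj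
    apply hsm
    have h2 := congrArg (t a * ·) h1
    simp only [← Matrix.mul_assoc, Matrix.mul_adjugate, hdet, Matrix.mul_smul, Matrix.mul_one,
      Matrix.smul_mul, Matrix.one_mul] at h2
    exact h2.symm
  · rw [Fintype.card_coe]
    exact (Finset.card_le_card (Finset.filter_subset _ _)).trans ((card_rows_le B).trans hB1)
  · rw [Fintype.card_coe]
    have h1 := le_card_rows (B := B) (D := C * Q) fun x hx hxB => hC x Q hx
      (hxB.trans (hBp.trans hpQ))
    calc p ≤ 4 * B ^ 2 := hB4
      _ ≤ 4 * (4 * (C * Q) * (rows B).card) := by omega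
      _ ≤ 4 * (4 * (C * Q) * (S.card * (9 * (18 * K) + 1) ^ 4)) := by gcongr
      _ = _ := by ring

/-! ### Matrix coefficients of words -/

theorem mul_entry_le_en {X Z : Mat} {δ : ℝ} (hX : ∀ i j, |X i j| ≤ δ) (i j : Fin 2) :
    |(X * Z) i j| ≤ δ * en Z := by
  rw [Matrix.mul_apply, Fin.sum_univ_two]
  have h0 : 0 ≤ δ := (abs_nonneg _).trans (hX 0 0)
  have h1 := mul_le_mul_of_nonneg_right (hX i 0) (abs_nonneg (Z 0 j))
  have h2 := mul_le_mul_of_nonneg_right (hX i 1) (abs_nonneg (Z 1 j))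
  rw [← abs_mul] at h1 h2
  have h3 := abs_add_le (X i 0 * Z 0 j) (X i 1 * Z 1 j)
  have h4 : |Z 0 j| + |Z 1 j| ≤ en Z := by
    rw [en_eq]
    have := abs_nonneg (Z 0 0)
    have := abs_nonneg (Z 0 1)
    have := abs_nonneg (Z 1 0)
    have := abs_nonneg (Z 1 1)
    fin_cases j <;> simp <;> linarith
  have h5 := mul_le_mul_of_nonneg_left h4 h0
  linarith

theorem inv_mul_self {w : Mat} (hw : w.det = 1) : w⁻¹ * w = 1 :=
  Matrix.nonsing_inv_mul w (by rw [hw]; exact isUnit_one)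

theorem mul_inv_self' {w : Mat} (hw : w.det = 1) : w * w⁻¹ = 1 :=
  Matrix.mul_nonsing_inv w (by rw [hw]; exact isUnit_one)

/-- The matrix coefficient of a step function is almost constant near `c • w`. -/
theorem coef_near {N : ℕ} (hN : 0 < N) {f : ℝ → ℝ} (hf : IsStep N f) {w g : Mat} {c δ R : ℝ}
    (hw : w.det = 1) (hwR : en w⁻¹ ≤ R) (hc : 1 ≤ c) (hg : ∀ i j, |g i j - c * w i j| ≤ δ)
    (hδ : δ * R ≤ 1 / 10) : |coef f g - coef f w| ≤ √(150 * (δ * R) * N) * nsq f := by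
  have hc0 : 0 < c := by linarith
  have hδ0 : 0 ≤ δ := (abs_nonneg _).trans (hg 0 0)
  set h : Mat := c⁻¹ • (g * w⁻¹) with hh
  have hnear : NearOne (δ * R) h := by
    intro i j
    have e : h i j - (1 : Mat) i j = c⁻¹ * (((g - c • w) * w⁻¹ : Mat) i j) := by
      rw [Matrix.sub_mul, Matrix.smul_mul, mul_inv_self' hw, hh, Matrix.smul_apply,
        Matrix.sub_apply, Matrix.smul_apply, smul_eq_mul, smul_eq_mul]
      field_simp
    have h1 : |((g - c • w) * w⁻¹ : Mat) i j| ≤ δ * en w⁻¹ :=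
      mul_entry_le_en (fun i j => by simpa using hg i j) i j
    rw [e, abs_mul, abs_of_pos (inv_pos.2 hc0)]
    calc c⁻¹ * |((g - c • w) * w⁻¹ : Mat) i j| ≤ 1 * (δ * R) := by
          refine mul_le_mul (inv_le_one_of_one_le₀ hc) (h1.trans (by gcongr)) (abs_nonneg _)
            zero_le_one
      _ = δ * R := one_mul _
  have hw0 : 0 < w.det := by rw [hw]; norm_num
  have hfl := hf.l2 hN
  have hhd : 0 < h.det := hnear.det_pos hδ
  have e1 : h * w = c⁻¹ • g := by
    rw [hh, Matrix.smul_mul, Matrix.mul_assoc, inv_mul_self hw, Matrix.mul_one]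
  have hFl : L2 (fun x => sl h f x - f x) := (hfl.sl hhd).sub hfl
  have e2 : coef f g - coef f w = ip (sl w (fun x => sl h f x - f x)) f := by
    have e3 : sl w (fun x => sl h f x - f x) = fun x => sl w (sl h f) x - sl w f x := by
      ext x; simp only [sl]; ring
    rw [e3, ip_sub_left ((hfl.sl hhd).sl hw0) (hfl.sl hw0) hfl, ← ip_sl_mul hhd hw0, e1,
      sl_smul (inv_pos.2 hc0)]
    rfl
  rw [e2]
  refine (abs_ip_le (hFl.sl hw0) hfl).trans ?_
  rw [nsq_sl hw0]
  have h5 := nsq_sl_sub_le hδ hnear hN hf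
  have hn := nsq_nonneg f
  calc √(nsq fun x => sl h f x - f x) * √(nsq f)
      ≤ √(150 * (δ * R) * N * nsq f) * √(nsq f) := by gcongr
    _ = √(150 * (δ * R) * N) * nsq f := by
      rw [Real.sqrt_mul' _ hn, mul_assoc, Real.mul_self_sqrt hn]

theorem det_diff {a b c d a' b' c' d' A δ : ℝ} (ha : |a| ≤ A) (hb : |b| ≤ A)
    (hc' : |c'| ≤ A) (hd' : |d'| ≤ A) (h1 : |a - a'| ≤ δ) (h2 : |b - b'| ≤ δ) (h3 : |c - c'| ≤ δ)
    (h4 : |d - d'| ≤ δ) : |(a * d - b * c) - (a' * d' - b' * c')| ≤ 4 * (A * δ) := by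
  have hA : 0 ≤ A := (abs_nonneg _).trans ha
  have e : (a * d - b * c) - (a' * d' - b' * c') =
      a * (d - d') + (a - a') * d' - (b * (c - c') + (b - b') * c') := by ring
  have hδ0 : 0 ≤ δ := (abs_nonneg _).trans h1
  have k1 : |a * (d - d')| ≤ A * δ := by rw [abs_mul]; gcongr
  have k2 : |(a - a') * d'| ≤ δ * A := by rw [abs_mul]; gcongr
  have k3 : |b * (c - c')| ≤ A * δ := by rw [abs_mul]; gcongr
  have k4 : |(b - b') * c'| ≤ δ * A := by rw [abs_mul]; gcongr
  rw [e]
  have := abs_le.1 k1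
  have := abs_le.1 k2
  have := abs_le.1 k3
  have := abs_le.1 k4
  rw [abs_le]
  constructor <;> linarith

theorem scaled_entry {w : Mat} {c R : ℝ} (hc : 1 ≤ c) (hc2 : c ≤ 2) (hw : en w ≤ R) (i j : Fin 2) :
    |c * w i j| ≤ 2 * R := by
  rw [abs_mul, abs_of_nonneg (by linarith)]
  exact mul_le_mul hc2 ((abs_le_en w i j).trans hw) (abs_nonneg _) (by norm_num)

/-- Two cubes can only meet if the words and the scalars at their centres are close. -/
theorem cubes_meet {w w' g : Mat} {c c' δ R : ℝ} (hw : w.det = 1) (hw' : w'.det = 1)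
    (hwR : en w ≤ R) (hwR' : en w' ≤ R) (hwi : en w'⁻¹ ≤ R) (hc : 1 ≤ c) (hc2 : c ≤ 2)
    (hc' : 1 ≤ c') (hc2' : c' ≤ 2) (hg : ∀ i j, |g i j - c * w i j| ≤ δ)
    (hg' : ∀ i j, |g i j - c' * w' i j| ≤ δ) :
    |c - c'| ≤ 8 * (R * δ) ∧ NearOne (10 * (R * δ)) (w * w'⁻¹) := by
  have hc0 : 0 < c := by linarith
  have hd : ∀ i j, |c * w i j - c' * w' i j| ≤ 2 * δ := by
    intro i j
    have := abs_le.1 (hg i j)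
    have := abs_le.1 (hg' i j)
    rw [abs_le]; constructor <;> linarith
  have h1 := det_diff (scaled_entry hc hc2 hwR 0 0) (scaled_entry hc hc2 hwR 0 1)
    (scaled_entry hc' hc2' hwR' 1 0) (scaled_entry hc' hc2' hwR' 1 1) (hd 0 0) (hd 0 1) (hd 1 0)
    (hd 1 1)
  have e1 : c * w 0 0 * (c * w 1 1) - c * w 0 1 * (c * w 1 0) = c ^ 2 := by
    rw [det_eq] at hw; linear_combination c ^ 2 * hw
  have e2 : c' * w' 0 0 * (c' * w' 1 1) - c' * w' 0 1 * (c' * w' 1 0) = c' ^ 2 := by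
    rw [det_eq] at hw'; linear_combination c' ^ 2 * hw'
  rw [e1, e2, show c ^ 2 - c' ^ 2 = (c - c') * (c + c') by ring, abs_mul,
    abs_of_pos (show 0 < c + c' by linarith)] at h1
  have h2 : |c - c'| ≤ 8 * (R * δ) := by nlinarith [abs_nonneg (c - c')]
  refine ⟨h2, fun i j => ?_⟩
  have e : (w * w'⁻¹) i j - (1 : Mat) i j =
      c⁻¹ * (((c • w - c' • w') * w'⁻¹ : Mat) i j + (c' - c) * (1 : Mat) i j) := by
    rw [Matrix.sub_mul, Matrix.smul_mul, Matrix.smul_mul, mul_inv_self' hw', Matrix.sub_apply,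
      Matrix.smul_apply, Matrix.smul_apply, smul_eq_mul, smul_eq_mul]
    field_simp
    ring
  have h3 : |((c • w - c' • w') * w'⁻¹ : Mat) i j| ≤ 2 * δ * en w'⁻¹ :=
    mul_entry_le_en (fun i j => by simpa using hd i j) i j
  have hδ0 : 0 ≤ δ := (abs_nonneg _).trans (hg 0 0)
  have h4 : 2 * δ * en w'⁻¹ ≤ 2 * δ * R := by gcongr
  have h5 : |(c' - c) * (1 : Mat) i j| ≤ 8 * (R * δ) := by
    rw [abs_mul, abs_sub_comm]
    have : |(1 : Mat) i j| ≤ 1 := by rw [Matrix.one_apply]; split_ifs <;> simp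
    nlinarith [abs_nonneg (c - c')]
  rw [e, abs_mul, abs_of_pos (inv_pos.2 hc0)]
  have h6 := abs_add_le (((c • w - c' • w') * w'⁻¹ : Mat) i j) ((c' - c) * (1 : Mat) i j)
  calc c⁻¹ * |((c • w - c' • w') * w'⁻¹ : Mat) i j + (c' - c) * (1 : Mat) i j|
      ≤ 1 * (10 * (R * δ)) := by
        refine mul_le_mul (inv_le_one_of_one_le₀ hc) (by linarith) (abs_nonneg _) zero_le_one
    _ = _ := one_mul _

/-- The set of matrices whose entries are within `δ` of those of `A`. -/
def cube (A : Mat) (δ : ℝ) : Set ((ℝ × ℝ) × (ℝ × ℝ)) := {p | ∀ i j, |mat p i j - A i j| ≤ δ}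

theorem cube_eq (A : Mat) (δ : ℝ) : cube A δ =
    (Icc (A 1 0 - δ) (A 1 0 + δ) ×ˢ Icc (A 1 1 - δ) (A 1 1 + δ)) ×ˢ
      (Icc (A 0 0 - δ) (A 0 0 + δ) ×ˢ Icc (A 0 1 - δ) (A 0 1 + δ)) := by
  ext p
  have hI : ∀ x y : ℝ, x ∈ Icc (y - δ) (y + δ) ↔ |x - y| ≤ δ := fun x y => by
    rw [mem_Icc, abs_le]
    constructor <;> rintro ⟨h1, h2⟩ <;> constructor <;> linarith
  simp only [cube, mem_prod, hI, mem_ofPred_eq, Fin.forall_fin_two, mat, Matrix.of_apply,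
    Matrix.cons_val', Matrix.cons_val_zero, Matrix.cons_val_one, Matrix.cons_val_fin_one]
  tauto

theorem measurableSet_cube (A : Mat) (δ : ℝ) : MeasurableSet (cube A δ) := by
  rw [cube_eq]
  exact (measurableSet_Icc.prod measurableSet_Icc).prod (measurableSet_Icc.prod measurableSet_Icc)

theorem volume_cube (A : Mat) {δ : ℝ} (hδ : 0 ≤ δ) : volume.real (cube A δ) = (2 * δ) ^ 4 := by
  have h : ∀ y : ℝ, volume.real (Icc (y - δ) (y + δ)) = 2 * δ := fun y => by
    rw [Real.volume_real_Icc_of_le (by linarith)]; ring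
  rw [cube_eq, Measure.volume_eq_prod, measureReal_prod_prod, Measure.volume_eq_prod,
    measureReal_prod_prod, measureReal_prod_prod, h, h, h, h]
  ring

theorem cube_subset_region {w : Mat} {c δ R : ℝ} (hw : w.det = 1) (hwR : en w ≤ R) (hR : 1 ≤ R)
    (hc : 1 ≤ c) (hc2 : c ≤ 2) (hδ : 24 * (R * δ) ≤ 1) (hδ0 : 0 ≤ δ) :
    cube (c • w) δ ⊆ region (3 * R) := by
  intro p hp
  have hd : ∀ i j, |mat p i j - c * w i j| ≤ δ := fun i j => by simpa using hp i j
  have hδ1 : δ ≤ R := by nlinarith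
  have hs := scaled_entry hc hc2 hwR
  have hb : ∀ i j, |mat p i j| ≤ 3 * R := by
    intro i j
    have := abs_le.1 (hd i j)
    have := abs_le.1 (hs i j)
    rw [abs_le]; constructor <;> linarith
  refine ⟨?_, ?_⟩
  · have h00 := abs_le.1 (hb 0 0)
    have h01 := abs_le.1 (hb 0 1)
    have h10 := abs_le.1 (hb 1 0)
    have h11 := abs_le.1 (hb 1 1)
    exact ⟨⟨h10, h11⟩, ⟨h00, h01⟩⟩
  · have h1 := det_diff (hb 0 0) (hb 0 1) ((hs 1 0).trans (by linarith))
      ((hs 1 1).trans (by linarith)) (hd 0 0) (hd 0 1) (hd 1 0) (hd 1 1)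
    have e1 : c * w 0 0 * (c * w 1 1) - c * w 0 1 * (c * w 1 0) = c ^ 2 := by
      rw [det_eq] at hw; linear_combination c ^ 2 * hw
    rw [e1, ← det_eq] at h1
    have h2 := abs_le.1 h1
    have h3 : 1 ≤ c ^ 2 := by nlinarith
    have h4 : c ^ 2 ≤ 4 := by nlinarith
    constructor <;> nlinarith

theorem card_close {n r : ℕ} (i : Fin n) :
    ((Finset.univ : Finset (Fin n)).filter fun i' : Fin n => |((i : ℕ) : ℝ) - ((i' : ℕ) : ℝ)| ≤ r).card ≤
      2 * r + 1 := by
  have h : ((Finset.univ : Finset (Fin n)).filter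
      fun i' : Fin n => |((i : ℕ) : ℝ) - ((i' : ℕ) : ℝ)| ≤ r).card ≤
      (Finset.Icc ((i:ℤ) - r) (i + r)).card := by
    refine Finset.card_le_card_of_injOn (fun i' => (i' : ℤ)) ?_ ?_
    · intro i' hi'
      have := (Finset.mem_filter.1 (Finset.mem_coe.1 hi')).2
      have h2 : |((i:ℕ):ℤ) - ((i':ℕ):ℤ)| ≤ r := by exact_mod_cast this
      rw [abs_le] at h2
      rw [Finset.mem_coe, Finset.mem_Icc]
      constructor <;> linarith
    · intro a _ b _ h
      apply Fin.ext
      simpa using h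
  refine h.trans (le_of_eq ?_)
  rw [Int.card_Icc]
  omega

open Classical in
/-- The average over words of the matrix coefficients of a function that is constant at scale
`1 / N'` and oscillates at scale `1 / N`. The words are thickened to cubes of size `1 / n` in the
space of matrices; by Cauchy-Schwarz only the overlap of the cubes, that is the return probability
of the words, and the mean square of the coefficient matter. -/
theorem Good.word_bound {κ : Type} [Fintype κ] {s : κ → Mat} (hs : Good s) (j : ℕ) {R : ℕ}
    (hR : R = 2 * 3 ^ j) {n : ℕ} (hn : 24 * R ≤ n) {N N' : ℕ} (hN : 0 < N) (hN' : 0 < N')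
    {f : ℝ → ℝ} (hf : IsStep N' f) (h0 : MeanZero N f) {σ : ℝ} (hσ : 0 < σ)
    (hσN : √(1 / N) ≤ σ ^ 2) :
    avgW s j (coef f) ≤ nsq f * (√(150 * (R / n) * N') + √(3300 * R ^ 3 *
      avgW s (j + j) (fun g => if NearOne (10 * (R / n)) g then 1 else 0) * n ^ 3 * σ)) := by
  obtain ⟨ι, i1, i2, v, hv1, hv2⟩ := hs.rep j
  have hRv : ∀ a, (v a).det = 1 ∧ en (v a) ≤ R ∧ en (v a)⁻¹ ≤ R := by
    intro a; have := hv2 a; rw [hR]; push_cast; exact this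
  have hR1 : 1 ≤ R := by rw [hR]; have := Nat.one_le_pow j 3 (by norm_num); omega
  have hR1' : (1:ℝ) ≤ R := by exact_mod_cast hR1
  have hn0 : 0 < n := by omega
  have hnr : (0:ℝ) < n := by exact_mod_cast hn0
  have hnR : 24 * (R:ℝ) ≤ n := by exact_mod_cast hn
  set q := avgW s (j + j) (fun g => if NearOne (10 * (R / n)) g then (1:ℝ) else 0) with hq
  set err := √(150 * (R / n) * N') with herr
  set δ : ℝ := 1 / n with hδ
  have hδ0 : 0 < δ := by positivity
  have hRδ : (R:ℝ) * δ = R / n := by rw [hδ]; ring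
  have hRδ1 : 24 * ((R:ℝ) * δ) ≤ 1 := by
    rw [hRδ, ← mul_div_assoc, div_le_one hnr]; exact hnR
  let lam : Fin n → ℝ := fun i => 1 + ((i:ℕ):ℝ) / n
  have hlam : ∀ i, 1 ≤ lam i ∧ lam i ≤ 2 := by
    intro i
    have h1 : ((i:ℕ):ℝ) / n ≤ 1 := by
      rw [div_le_one hnr]; exact_mod_cast i.2.le
    have h2 : 0 ≤ ((i:ℕ):ℝ) / n := by positivity
    constructor <;> simp only [lam] <;> linarith
  let Q : Fin n × ι → Set ((ℝ × ℝ) × (ℝ × ℝ)) := fun z => cube (lam z.1 • v z.2) δ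
  have hQm : ∀ z, MeasurableSet (Q z) := fun z => measurableSet_cube _ _
  have hQR : ∀ z, Q z ⊆ region (3 * R) := fun z =>
    cube_subset_region (hRv _).1 (hRv _).2.1 hR1' (hlam _).1 (hlam _).2 hRδ1 hδ0.le
  set V : ℝ := (2 * δ) ^ 4 with hV
  have hVol : ∀ z, volume.real (Q z) = V := fun z => volume_cube _ hδ0.le
  have hV0 : 0 < V := by positivity
  set μ := (volume : Measure ((ℝ × ℝ) × (ℝ × ℝ))).restrict (region (3 * R)) with hμ
  have hfin : IsFiniteMeasure μ := ⟨by
    rw [hμ, Measure.restrict_apply_univ]; exact volume_region_lt _⟩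
  have hμQ : ∀ z, μ.restrict (Q z) = volume.restrict (Q z) := fun z => by
    rw [hμ, Measure.restrict_restrict (hQm z), inter_eq_self_of_subset_left (hQR z)]
  have hfB := hf.bddSupp hN'
  have hfl := hf.l2 hN'
  have hns := nsq_nonneg f
  set c : (ℝ × ℝ) × (ℝ × ℝ) → ℝ := fun p => coef f (mat p) with hc
  have hcm : Measurable c := measurable_coef hf.meas
  have hcb : ∀ᵐ p ∂μ, ‖c p‖ ≤ nsq f := by
    refine (ae_restrict_iff' (measurableSet_region _)).2 (Filter.Eventually.of_forall fun p hp => ?_)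
    exact abs_coef_le hfl (by have := hp.2.1; linarith)
  have hci : Integrable c μ := Integrable.of_bound hcm.aestronglyMeasurable _ hcb
  have hc2i : Integrable (fun p => c p ^ 2) μ := by
    refine Integrable.of_bound (hcm.pow_const 2).aestronglyMeasurable (nsq f ^ 2) ?_
    filter_upwards [hcb] with p hp
    rw [norm_pow]; gcongr
  -- on each cube the coefficient is almost the one at the word
  have step1 : ∀ z : Fin n × ι, V * (coef f (v z.2) - err * nsq f) ≤ ∫ p in Q z, c p ∂μ := by
    intro z
    have h1 : ∫ p in Q z, (coef f (v z.2) - err * nsq f) ∂μ =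
        V * (coef f (v z.2) - err * nsq f) := by
      rw [hμQ, setIntegral_const, hVol, smul_eq_mul]
    rw [← h1]
    refine setIntegral_mono_on (integrable_const _).integrableOn hci.integrableOn (hQm z) ?_
    intro p hp
    have h2 := coef_near hN' hf (g := mat p) (c := lam z.1) (δ := δ) (R := R) (hRv z.2).1
      (hRv z.2).2.2 (hlam z.1).1 (fun i j => by simpa using hp i j) (by linarith)
    rw [mul_comm δ, hRδ] at h2
    have := (abs_le.1 h2).1
    linarith
  let F : (ℝ × ℝ) × (ℝ × ℝ) → ℝ := fun p => ∑ z, (Q z).indicator (fun _ => (1:ℝ)) p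
  have hFm : Measurable F := Finset.measurable_sum _ fun z _ => measurable_const.indicator (hQm z)
  have hIi : ∀ s : Set ((ℝ × ℝ) × (ℝ × ℝ)), MeasurableSet s →
      Integrable (s.indicator fun _ => (1:ℝ)) μ := fun s hs => (integrable_const _).indicator hs
  have step2 : ∑ z, ∫ p in Q z, c p ∂μ = ∫ p, F p * c p ∂μ := by
    have e : ∀ p, F p * c p = ∑ z, (Q z).indicator c p := by
      intro p
      simp only [F, Finset.sum_mul]
      refine Finset.sum_congr rfl fun z _ => ?_
      by_cases hp : p ∈ Q z <;> simp [hp]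
    simp_rw [e]
    rw [integral_finsetSum _ fun z _ => hci.indicator (hQm z)]
    refine Finset.sum_congr rfl fun z _ => ?_
    rw [integral_indicator (hQm z)]
  have eF2 : ∀ p, F p ^ 2 = ∑ z, ∑ z', (Q z ∩ Q z').indicator (fun _ => (1:ℝ)) p := by
    intro p
    rw [sq]
    simp only [F, Finset.sum_mul_sum]
    refine Finset.sum_congr rfl fun z _ => Finset.sum_congr rfl fun z' _ => ?_
    by_cases hp : p ∈ Q z <;> by_cases hp' : p ∈ Q z' <;> simp [hp, hp']
  have hF2i : Integrable (fun p => F p ^ 2) μ := by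
    simp_rw [eF2]
    exact integrable_finsetSum _ fun z _ => integrable_finsetSum _ fun z' _ =>
      hIi _ ((hQm z).inter (hQm z'))
  let X : ι → ι → ℝ := fun a b => if NearOne (10 * (R / n)) (v a * (v b)⁻¹) then 1 else 0
  let Y : Fin n → Fin n → ℝ := fun i i' =>
    if |((i : ℕ) : ℝ) - ((i' : ℕ) : ℝ)| ≤ (8 * R : ℕ) then 1 else 0
  have step3 : ∀ z z' : Fin n × ι,
      ∫ p, (Q z ∩ Q z').indicator (fun _ => (1:ℝ)) p ∂μ ≤ V * (Y z.1 z'.1 * X z.2 z'.2) := by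
    intro z z'
    rw [integral_indicator ((hQm z).inter (hQm z')), setIntegral_const, smul_eq_mul, mul_one]
    by_cases hne : (Q z ∩ Q z').Nonempty
    · obtain ⟨p, hp, hp'⟩ := hne
      have h1 := cubes_meet (g := mat p) (hRv z.2).1 (hRv z'.2).1 (hRv z.2).2.1 (hRv z'.2).2.1
        (hRv z'.2).2.2 (hlam z.1).1 (hlam z.1).2 (hlam z'.1).1 (hlam z'.1).2
        (fun i j => by simpa using hp i j) (fun i j => by simpa using hp' i j)
      have hY : Y z.1 z'.1 = 1 := by
        simp only [Y]
        rw [if_pos]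
        have h2 := h1.1
        have e : lam z.1 - lam z'.1 = (((z.1 : ℕ) : ℝ) - ((z'.1 : ℕ) : ℝ)) / n := by
          simp only [lam]; ring
        rw [e, abs_div, abs_of_pos hnr, hRδ, div_le_iff₀ hnr] at h2
        push_cast
        calc _ ≤ _ := h2
          _ = _ := by field_simp
      have hX : X z.2 z'.2 = 1 := by
        simp only [X]
        rw [if_pos]
        rw [← hRδ]; exact h1.2
      rw [hY, hX, mul_one, mul_one, ← hVol z]
      calc μ.real (Q z ∩ Q z') ≤ μ.real (Q z) := measureReal_mono inter_subset_left
        _ = volume.real (Q z) := by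
          rw [hμ, measureReal_restrict_apply (hQm z), inter_eq_self_of_subset_left (hQR z)]
    · rw [not_nonempty_iff_eq_empty.1 hne, measureReal_empty]
      have : 0 ≤ Y z.1 z'.1 := by simp only [Y]; split_ifs <;> norm_num
      have : 0 ≤ X z.2 z'.2 := by simp only [X]; split_ifs <;> norm_num
      positivity
  set k : ℝ := ((Fintype.card ι : ℕ) : ℝ) with hk
  have hk0 : 0 < k := by rw [hk]; exact_mod_cast Fintype.card_pos
  have hXsum : ∑ a, ∑ b, X a b = k ^ 2 * q := by
    rw [hq, ← hs.avgW_add j j]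
    simp only [hv1, ← Finset.mul_sum]
    simp only [X]
    field_simp
  have hq0 : 0 ≤ q := by
    have h1 : 0 ≤ ∑ a, ∑ b, X a b := Finset.sum_nonneg fun a _ => Finset.sum_nonneg fun b _ => by
      simp only [X]; split_ifs <;> norm_num
    rw [hXsum] at h1
    exact nonneg_of_mul_nonneg_right h1 (by positivity)
  have hYsum : ∑ i, ∑ i', Y i i' ≤ n * (17 * R) := by
    have h1 : ∀ i, ∑ i', Y i i' ≤ 17 * R := by
      intro i
      simp only [Y]
      rw [← Finset.sum_filter, Finset.sum_const, nsmul_eq_mul, mul_one]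
      have h2 := card_close (r := 8 * R) i
      calc _ ≤ ((2 * (8 * R) + 1 : ℕ) : ℝ) := by exact_mod_cast h2
        _ ≤ 17 * R := by push_cast; linarith
    refine (Finset.sum_le_sum fun i _ => h1 i).trans (le_of_eq ?_)
    rw [Finset.sum_const, Finset.card_univ, Fintype.card_fin, nsmul_eq_mul]
  have step4 : ∫ p, F p ^ 2 ∂μ ≤ V * (n * (17 * R) * (k ^ 2 * q)) := by
    simp_rw [eF2]
    rw [integral_finsetSum _ fun z _ => integrable_finsetSum _ fun z' _ =>
      hIi _ ((hQm z).inter (hQm z'))]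
    have h1 : ∀ z : Fin n × ι, ∫ p, ∑ z' : Fin n × ι, (Q z ∩ Q z').indicator (fun _ => (1:ℝ)) p ∂μ ≤
        ∑ z' : Fin n × ι, V * (Y z.1 z'.1 * X z.2 z'.2) := by
      intro z
      rw [integral_finsetSum _ fun z' _ => hIi _ ((hQm z).inter (hQm z'))]
      exact Finset.sum_le_sum fun z' _ => step3 z z'
    refine (Finset.sum_le_sum fun z _ => h1 z).trans ?_
    have e : ∑ z : Fin n × ι, ∑ z' : Fin n × ι, V * (Y z.1 z'.1 * X z.2 z'.2) =
        V * ((∑ i, ∑ i', Y i i') * ∑ a, ∑ b, X a b) := by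
      simp only [Fintype.sum_prod_type]
      simp only [← Finset.mul_sum, ← Finset.sum_mul]
    rw [e, hXsum]
    gcongr
  have step5 : ∫ p, c p ^ 2 ∂μ ≤ 3060 * R ^ 2 * σ * nsq f ^ 2 := by
    refine (coef_bound hN hfB h0 hσ hσN (R := 3 * R) (by positivity)).trans (le_of_eq ?_)
    ring
  have hCS := cauchy_schwarz hFm.aestronglyMeasurable hcm.aestronglyMeasurable hF2i hc2i
  set Z := avgW s j (coef f) with hZ
  have hsum : n * k * V * (Z - err * nsq f) ≤ ∫ p, F p * c p ∂μ := by
    rw [← step2]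
    refine le_trans (le_of_eq ?_) (Finset.sum_le_sum fun z _ => step1 z)
    rw [← Finset.mul_sum, Fintype.sum_prod_type]
    simp only [Finset.sum_const, Finset.card_univ, Fintype.card_fin, Finset.sum_sub_distrib, hZ,
      hv1, nsmul_eq_mul, ← hk]
    field_simp
  have hmain : ∫ p, F p * c p ∂μ ≤
      n * k * V * (nsq f * √(3300 * R ^ 3 * q * n ^ 3 * σ)) := by
    refine le_of_abs_le (abs_le_of_sq_le_sq ?_ (by positivity))
    have h1 : (0:ℝ) ≤ 3300 * R ^ 3 * q * n ^ 3 * σ := by positivity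
    calc (∫ p, F p * c p ∂μ) ^ 2
        ≤ V * (n * (17 * R) * (k ^ 2 * q)) * (3060 * R ^ 2 * σ * nsq f ^ 2) := by
          refine hCS.trans (mul_le_mul step4 step5 (integral_nonneg fun _ => sq_nonneg _) ?_)
          positivity
      _ = 52020 * (V * n * k ^ 2 * q * R ^ 3 * σ * nsq f ^ 2) := by ring
      _ ≤ 52800 * (V * n * k ^ 2 * q * R ^ 3 * σ * nsq f ^ 2) := by gcongr; norm_num
      _ = (n * k * V * nsq f) ^ 2 * (3300 * R ^ 3 * q * n ^ 3 * σ) := by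
          have : V * n ^ 4 = 16 := by rw [hV, hδ]; field_simp; norm_num
          linear_combination (-3300 * (V * n * k ^ 2 * q * R ^ 3 * σ * nsq f ^ 2)) * this
      _ = _ := by
          rw [← mul_assoc (n * k * V), mul_pow _ (√(3300 * R ^ 3 * q * n ^ 3 * σ)), Real.sq_sqrt h1]
  have := le_of_mul_le_mul_left (hsum.trans hmain) (by positivity)
  linarith

/-! ### Contraction on one frequency band -/

/-- A separated family of integer matrices of determinant `p` with quotients near the scalar `p`
yields a family of real unimodular matrices near the identity with the same quotients. -/
theorem exists_good {κ : Type} [Fintype κ] {p : ℕ} {t : κ → ZMat} (ht : Sep p t) {K : ℕ}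
    (hK : 10 ≤ K) (hκ : 0 < Fintype.card κ)
    (hnear : ∀ a b i j, |((t a * (t b).adjugate) i j : ℝ) - p * (1 : Mat) i j| * K ≤ p) :
    ∃ s : κ → Mat, Good s ∧ (∀ a, NearOne (1 / K) (s a)) ∧
      ∀ a b, s a * (s b)⁻¹ =
        ((p:ℝ)⁻¹) • ((t a * (t b).adjugate).map (Int.cast : ℤ → ℝ)) := by
  have hne : Nonempty κ := Fintype.card_pos_iff.1 hκ
  obtain ⟨a0⟩ := hne
  have hp0 : (0:ℝ) < p := by exact_mod_cast ht.prime.pos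
  have hKr : (10:ℝ) ≤ K := by exact_mod_cast hK
  let r : κ → Mat := fun a => (t a).map (Int.cast : ℤ → ℝ)
  have hdet : ∀ a, (r a).det = p := by
    intro a
    have h := ht.det a
    rw [Matrix.det_fin_two] at h
    simp only [r, Matrix.det_fin_two, Matrix.map_apply]
    exact_mod_cast h
  have hu : ∀ a, IsUnit (r a).det := fun a => by rw [hdet]; exact isUnit_iff_ne_zero.2 hp0.ne'
  have hq : ∀ a b, r a * (r b)⁻¹ =
      ((p:ℝ)⁻¹) • ((t a * (t b).adjugate).map (Int.cast : ℤ → ℝ)) := by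
    intro a b
    rw [Matrix.inv_def, Ring.inverse_eq_inv', hdet, Matrix.mul_smul]
    congr 1
    ext i j
    simp only [r, Matrix.mul_apply, Fin.sum_univ_two, Matrix.adjugate_fin_two, Matrix.map_apply]
    fin_cases j <;> simp
  have hclose : ∀ a b, NearOne (1 / K) (r a * (r b)⁻¹) := by
    intro a b i j
    rw [hq, Matrix.smul_apply, Matrix.map_apply, smul_eq_mul]
    have h := hnear a b i j
    have e : (p:ℝ)⁻¹ * ((t a * (t b).adjugate) i j : ℝ) - (1 : Mat) i j =
        (((t a * (t b).adjugate) i j : ℝ) - p * (1 : Mat) i j) / p := by field_simp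
    rw [e, abs_div, abs_of_pos hp0, div_le_div_iff₀ hp0 (by linarith)]
    linarith
  have hquot : ∀ a b, (r a * (r a0)⁻¹) * (r b * (r a0)⁻¹)⁻¹ = r a * (r b)⁻¹ := by
    intro a b
    rw [Matrix.mul_inv_rev, Matrix.nonsing_inv_nonsing_inv _ (hu a0), Matrix.mul_assoc,
      ← Matrix.mul_assoc (r a0)⁻¹, Matrix.nonsing_inv_mul _ (hu a0), Matrix.one_mul]
  refine ⟨fun a => r a * (r a0)⁻¹, ⟨⟨a0⟩, fun a => ?_, fun a b => ?_⟩, fun a => hclose a a0,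
    fun a b => ?_⟩
  · rw [Matrix.det_mul, Matrix.det_nonsing_inv, hdet, hdet, Ring.inverse_eq_inv',
      mul_inv_cancel₀ hp0.ne']
  · rw [hquot]
    intro i j
    refine (hclose a b i j).trans ?_
    rw [div_le_div_iff₀ (by linarith) (by norm_num)]
    linarith
  · rw [hquot, hq]

open Classical in
/-- A bound for the return probability of the words to a small neighbourhood of the identity. -/
theorem return_bound {κ : Type} [Fintype κ] {p : ℕ} {t : κ → ZMat} (ht : Sep p t) {s : κ → Mat}
    (hst : ∀ a b, s a * (s b)⁻¹ =
      ((p:ℝ)⁻¹) • ((t a * (t b).adjugate).map (Int.cast : ℤ → ℝ)))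
    (hp3 : 3 ≤ p) (hκ0 : 0 < Fintype.card κ) (hκ : Fintype.card κ ≤ p) {l E D : ℕ}
    (hE : p ≤ E * Fintype.card κ) {η : ℝ} (hη0 : 0 < η) (hη : η ≤ 1 / 2)
    (h1 : 1 ≤ η ^ 3 * (p:ℝ) ^ (2 * l))
    (hD : ∀ m : ℕ, 0 < m → m ≤ p ^ (4 * l) → m.divisors.card ≤ D) :
    avgW s (l + l) (fun g => if NearOne η g then 1 else 0) ≤
      16 ^ l * (2 * l + 1) * (36 * D * η ^ 3 * (E:ℝ) ^ (4 * l)) := by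
  have hp0 : (0:ℝ) < p := by exact_mod_cast ht.prime.pos
  have hk0 : (0:ℝ) < Fintype.card κ := by exact_mod_cast hκ0
  have h2 := cnt_eq_avgW hst (l + l) (fun g => if NearOne η g then (1:ℝ) else 0) hκ0.ne'
  have h3 := ht.count_close hp3 hκ hη0 hη h1 hD
  have e : (fun M : ZMat => if NearOne η (((p:ℝ) ^ (l + l))⁻¹ • M.map (Int.cast : ℤ → ℝ))
      then (1:ℝ) else 0) = fun M => if NearScalar η ((p:ℝ) ^ (2 * l)) M then 1 else 0 := by
    ext M
    have hX : (0:ℝ) < (p:ℝ) ^ (2 * l) := by positivity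
    have : NearOne η (((p:ℝ) ^ (l + l))⁻¹ • M.map (Int.cast : ℤ → ℝ)) ↔
        NearScalar η ((p:ℝ) ^ (2 * l)) M := by
      refine forall_congr' fun i => forall_congr' fun j => ?_
      rw [← two_mul, Matrix.smul_apply, Matrix.map_apply, smul_eq_mul]
      have e : ((p:ℝ) ^ (2 * l))⁻¹ * (M i j : ℝ) - (1 : Mat) i j =
          ((M i j : ℝ) - (p:ℝ) ^ (2 * l) * (1 : Mat) i j) / (p:ℝ) ^ (2 * l) := by field_simp
      rw [e, abs_div, abs_of_pos hX, div_le_iff₀ hX]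
    simp only [this]
  rw [e, show 2 * (l + l) = 4 * l by ring] at h2
  rw [← h2] at h3
  have h4 : (p:ℝ) ^ (4 * l) ≤ (E:ℝ) ^ (4 * l) * (Fintype.card κ : ℝ) ^ (4 * l) := by
    rw [← mul_pow]
    gcongr
    exact_mod_cast hE
  refine le_of_mul_le_mul_left ?_ (pow_pos hk0 (4 * l))
  refine h3.trans ?_
  calc (16:ℝ) ^ l * (2 * l + 1) * (36 * D * η ^ 3 * (p:ℝ) ^ (4 * l))
      ≤ 16 ^ l * (2 * l + 1) * (36 * D * η ^ 3 *
        ((E:ℝ) ^ (4 * l) * (Fintype.card κ : ℝ) ^ (4 * l))) := by gcongr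
    _ = _ := by ring

/-- Averaging over a suitable family contracts functions that live in a single frequency band
`[P ^ 2 ^ m, P ^ 2 ^ (m + 1)]`, where `P = Q ^ 64`, by a factor that is small for `Q` large. -/
theorem exists_band (K : ℕ) (hK : 10 ≤ K) : ∃ A : ℝ, 0 < A ∧ ∀ Q : ℕ, 144 ≤ Q →
    ∃ (κ : Type) (_ : Fintype κ) (s : κ → Mat), Good s ∧ (∀ a, NearOne (1 / K) (s a)) ∧
      ∀ (m : ℕ) (f : ℝ → ℝ), IsStep ((Q ^ 64) ^ 2 ^ (m + 1)) f → MeanZero ((Q ^ 64) ^ 2 ^ m) f →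
        nsq (avgT s f) ≤ √(A / (Q:ℝ) ^ 8) * nsq f := by
  classical
  obtain ⟨C1, hC1, hdiv⟩ := exists_divisor_bound 320 (by norm_num)
  obtain ⟨C2, hsep⟩ := exists_sep K (by omega)
  set B : ℝ := 16 * 3 * 36 * C1 * (2 ^ 4 * (2 * C2) ^ 4) * 60 ^ 3 * 3300 * 216 + 900 with hB
  have hC1r : (1:ℝ) ≤ C1 := by exact_mod_cast hC1
  have hB0 : 900 ≤ B := by rw [hB]; simp only [le_add_iff_nonneg_left]; positivity
  refine ⟨4 * B, by linarith, fun Q hQ => ?_⟩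
  -- With `p` between `P ^ 5` and `2 * P ^ 5`, the return probability of words of length `2 * l` to a
  -- neighbourhood of size about `P ^ (-3 * l)` is cubic in that size, up to a factor of order
  -- `Q ^ (8 * l)`.
  have hQr : (144:ℝ) ≤ Q := by exact_mod_cast hQ
  have hQ0 : (0:ℝ) < Q := by linarith
  have hP0 : (Q ^ 64) ^ 5 ≠ 0 := by positivity
  obtain ⟨p, hp, hp1, hp2⟩ := Nat.exists_prime_lt_and_le_two_mul _ hP0
  have hpQ : p ≤ (2 * Q) ^ 320 := by
    refine hp2.trans ?_
    rw [mul_pow, ← pow_mul]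
    exact Nat.mul_le_mul (Nat.le_self_pow (by norm_num) 2) le_rfl
  obtain ⟨κ, iκ, t, ht, hκp, hkE, hnear⟩ := hsep (2 * Q) p hp hpQ
  have hκ0 : 0 < Fintype.card κ := by
    by_contra h
    have h0 : Fintype.card κ = 0 := by omega
    rw [h0] at hkE
    have := hp.pos
    omega
  obtain ⟨s, hs, hs1, hst⟩ := exists_good ht hK hκ0 hnear
  refine ⟨κ, iκ, s, hs, hs1, fun m f hf h0 => ?_⟩
  set l := 2 ^ m with hl
  have hl1 : 1 ≤ l := Nat.one_le_two_pow
  have hl0 : l ≠ 0 := by omega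
  set R : ℕ := 2 * 3 ^ l with hR
  have hR6 : (R:ℝ) ≤ 6 ^ l := by
    rw [hR]; push_cast
    calc (2:ℝ) * 3 ^ l ≤ 2 ^ l * 3 ^ l := by gcongr; exact le_self_pow₀ (by norm_num) hl0
      _ = 6 ^ l := by rw [← mul_pow]; norm_num
  have hR0 : (1:ℝ) ≤ R := by
    have : 1 ≤ R := by have := Nat.one_le_pow l 3 (by norm_num); omega
    exact_mod_cast this
  -- Words are thickened to cubes of side `1 / n`, much finer than the cells of the band.
  set n : ℕ := (Q ^ 64) ^ (3 * l) with hn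
  have hnr : (n:ℝ) = ((Q:ℝ) ^ l) ^ 192 := by rw [hn]; push_cast; ring
  have hy : (144:ℝ) ^ l ≤ (Q:ℝ) ^ l := by gcongr
  set y : ℝ := (Q:ℝ) ^ l with hyd
  have hy1 : 1 ≤ y := (one_le_pow₀ (by norm_num)).trans hy
  have hy0 : 0 < y := by linarith
  have hRn' : 24 * (R:ℝ) ≤ n := by
    calc 24 * (R:ℝ) ≤ 24 ^ l * 6 ^ l := by
          gcongr; exact le_self_pow₀ (by norm_num) hl0
      _ = 144 ^ l := by rw [← mul_pow]; norm_num
      _ ≤ y := hy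
      _ ≤ y ^ 192 := le_self_pow₀ hy1 (by norm_num)
      _ = n := hnr.symm
  have hRn : 24 * R ≤ n := by exact_mod_cast hRn'
  have hn0 : (0:ℝ) < n := by linarith
  set q := avgW s (l + l) (fun g => if NearOne (10 * (R / n)) g then (1:ℝ) else 0) with hq
  have hp5 : y ^ 640 ≤ (p:ℝ) ^ (2 * l) := by
    have : ((Q:ℝ) ^ 64) ^ 5 ≤ p := by exact_mod_cast hp1.le
    calc y ^ 640 = (((Q:ℝ) ^ 64) ^ 5) ^ (2 * l) := by rw [hyd]; ring
      _ ≤ _ := by gcongr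
  have hq1 : q ≤ 16 ^ l * (2 * l + 1) * (36 * (C1 * (2 * Q) ^ (4 * l) : ℕ) *
      (10 * ((R:ℝ) / n)) ^ 3 * ((C2 * (2 * Q) : ℕ):ℝ) ^ (4 * l)) := by
    refine return_bound ht hst ?_ hκ0 hκp hkE (by positivity) ?_ ?_ ?_
    · have : 144 ≤ (Q ^ 64) ^ 5 := by
        rw [← pow_mul]; exact hQ.trans (Nat.le_self_pow (by norm_num) Q)
      omega
    · rw [← mul_div_assoc, div_le_iff₀ hn0]; linarith
    · calc (1:ℝ) ≤ (10 * R) ^ 3 * y ^ 64 := by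
            refine one_le_mul_of_one_le_of_one_le (one_le_pow₀ (by linarith)) (one_le_pow₀ hy1)
        _ = (10 * (R / n)) ^ 3 * y ^ 640 := by
            rw [hnr]; field_simp
        _ ≤ _ := by gcongr
    · intro d hd hd2
      refine hdiv d _ hd (hd2.trans ?_)
      calc p ^ (4 * l) ≤ ((2 * Q) ^ 320) ^ (4 * l) := Nat.pow_le_pow_left hpQ _
        _ = ((2 * Q) ^ (4 * l)) ^ 320 := pow_right_comm _ _ _
  have hl3 : (2 * (l:ℝ) + 1) ≤ 3 ^ l := by
    have := one_add_mul_le_pow (a := (2:ℝ)) (by norm_num) l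
    norm_num at this
    linarith
  have hq2 : 3300 * R ^ 3 * q * n ^ 3 * (y ^ 16)⁻¹ ≤ B ^ l / y ^ 8 := by
    have hc : (0:ℝ) ≤ R ^ 3 * n ^ 3 * (y ^ 16)⁻¹ := by positivity
    have hR20 : (10 * (R:ℝ)) ^ 3 ≤ (60 ^ l) ^ 3 := by
      gcongr
      calc 10 * (R:ℝ) ≤ 10 ^ l * 6 ^ l := by
            gcongr; exact le_self_pow₀ (by norm_num) hl0
        _ = 60 ^ l := by rw [← mul_pow]; norm_num
    calc 3300 * R ^ 3 * q * n ^ 3 * (y ^ 16)⁻¹ = 3300 * (R ^ 3 * n ^ 3 * (y ^ 16)⁻¹) * q := by ring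
      _ ≤ 3300 * (R ^ 3 * n ^ 3 * (y ^ 16)⁻¹) *
          (16 ^ l * (2 * l + 1) * (36 * (C1 * (2 * Q) ^ (4 * l) : ℕ) *
            (10 * ((R:ℝ) / n)) ^ 3 * ((C2 * (2 * Q) : ℕ):ℝ) ^ (4 * l))) := by gcongr
      _ = 3300 * 36 * C1 * (R ^ 3 * (16 ^ l * (2 * l + 1) * ((10 * R) ^ 3 *
            ((2 ^ 4 * (2 * C2) ^ 4) ^ l)))) / y ^ 8 := by
          push_cast
          rw [hyd]
          have e16 : (256:ℝ) ^ l = 2 ^ (l * 8) := by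
            rw [show (256:ℝ) = 2 ^ 8 by norm_num, ← pow_mul, mul_comm]
          field_simp
          ring_nf
          rw [e16]
      _ ≤ 3300 ^ l * 36 ^ l * C1 ^ l * ((6 ^ l) ^ 3 * (16 ^ l * 3 ^ l * ((60 ^ l) ^ 3 *
            ((2 ^ 4 * (2 * C2) ^ 4) ^ l)))) / y ^ 8 := by
          gcongr
          · exact le_self_pow₀ (by norm_num) hl0
          · exact le_self_pow₀ (by norm_num) hl0
          · exact le_self_pow₀ hC1r hl0
      _ = (16 * 3 * 36 * C1 * (2 ^ 4 * (2 * C2) ^ 4) * 60 ^ 3 * 3300 * 216) ^ l / y ^ 8 := by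
          rw [pow_right_comm 6, pow_right_comm 60, ← mul_pow, ← mul_pow, ← mul_pow, ← mul_pow,
            ← mul_pow, ← mul_pow, ← mul_pow]
          congr 2
          ring
      _ ≤ B ^ l / y ^ 8 := by
          gcongr
          rw [hB]; linarith
  have hfirst : 150 * ((R:ℝ) / n) * ((Q ^ 64) ^ 2 ^ (m + 1) : ℕ) ≤ B ^ l / y ^ 8 := by
    have e : (((Q ^ 64) ^ 2 ^ (m + 1) : ℕ) : ℝ) = y ^ 128 := by
      rw [hyd, hl]; push_cast; rw [pow_succ]; ring
    rw [e, hnr]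
    calc 150 * ((R:ℝ) / y ^ 192) * y ^ 128 = 150 * R / y ^ 64 := by field_simp
      _ ≤ B ^ l / y ^ 8 := by
        gcongr
        · calc 150 * (R:ℝ) ≤ 150 ^ l * 6 ^ l := by
                gcongr; exact le_self_pow₀ (by norm_num) hl0
            _ = 900 ^ l := by rw [← mul_pow]; norm_num
            _ ≤ B ^ l := by gcongr
        · norm_num
  have hQp : 0 < Q := by omega
  -- `f` has mean zero on cells of length `y ^ (-64)`; the fourth root of this is `σ`, which
  -- outweighs the loss of order `y ^ 8` in the return probability.
  have hw := hs.word_bound l hR hRn (N := (Q ^ 64) ^ l) (N' := (Q ^ 64) ^ 2 ^ (m + 1))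
    (by positivity) (by positivity) hf h0 (σ := (y ^ 16)⁻¹) (by positivity) (by
      have e : (1 / (((Q ^ 64) ^ l : ℕ) : ℝ)) = (((y ^ 16)⁻¹) ^ 2) ^ 2 := by
        rw [hyd]; push_cast; field_simp; ring
      rw [e, Real.sqrt_sq (by positivity)])
  have hns := nsq_nonneg f
  have hBy : √(B ^ l / y ^ 8) + √(B ^ l / y ^ 8) ≤ √(4 * B / (Q:ℝ) ^ 8) ^ l := by
    have e : B ^ l / y ^ 8 = (B / (Q:ℝ) ^ 8) ^ l := by rw [hyd, div_pow]; ring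
    have e2 : √((B / (Q:ℝ) ^ 8) ^ l) = √(B / (Q:ℝ) ^ 8) ^ l := by
      rw [Real.sqrt_eq_iff_eq_sq (by positivity) (by positivity), ← pow_mul, mul_comm l, pow_mul,
        Real.sq_sqrt (by positivity)]
    have e3 : √(4 * B / (Q:ℝ) ^ 8) = 2 * √(B / (Q:ℝ) ^ 8) := by
      rw [mul_div_assoc, Real.sqrt_mul (by norm_num), show (4:ℝ) = 2 ^ 2 by norm_num,
        Real.sqrt_sq (by norm_num)]
    rw [e, e2, e3, mul_pow, ← two_mul]
    gcongr
    exact le_self_pow₀ (by norm_num) hl0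
  have hw2 : avgW s l (coef f) ≤ nsq f * √(4 * B / (Q:ℝ) ^ 8) ^ l := by
    refine hw.trans (mul_le_mul_of_nonneg_left (le_trans ?_ hBy) hns)
    exact add_le_add (Real.sqrt_le_sqrt hfirst) (Real.sqrt_le_sqrt hq2)
  have hpow := hs.pow_le (hf.l2 (by positivity)) m
  refine le_of_pow_le_pow_left₀ hl0 (by positivity) (hpow.trans ?_)
  calc avgW s l (coef f) * nsq f ^ (l - 1)
      ≤ nsq f * √(4 * B / (Q:ℝ) ^ 8) ^ l * nsq f ^ (l - 1) := by gcongr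
    _ = √(4 * B / (Q:ℝ) ^ 8) ^ l * (nsq f ^ (l - 1) * nsq f) := by ring
    _ = _ := by rw [← pow_succ, Nat.sub_add_cancel hl1, mul_pow]

/-! ### Contraction on all oscillating functions -/

theorem two_ip_le {f g : ℝ → ℝ} (hf : L2 f) (hg : L2 g) : 2 * ip f g ≤ nsq f + nsq g := by
  have h1 := (le_abs_self _).trans (abs_ip_le hf hg)
  have h2 := Real.sq_sqrt (nsq_nonneg f)
  have h3 := Real.sq_sqrt (nsq_nonneg g)
  nlinarith [sq_nonneg (√(nsq f) - √(nsq g))]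

theorem avgT_add {κ : Type} [Fintype κ] (s : κ → Mat) (f g : ℝ → ℝ) :
    avgT s (fun x => f x + g x) = fun x => avgT s f x + avgT s g x := by
  ext x
  simp only [avgT, sl, mul_add, Finset.sum_add_distrib]

theorem mem_of_floor {N : ℕ} (hN : 0 < N) {x : ℝ} (h1 : 0 ≤ ⌊(N:ℝ) * x⌋) (h2 : ⌊(N:ℝ) * x⌋ < N) :
    x ∈ Ico (0:ℝ) 1 := by
  have hN' : (0:ℝ) < N := by exact_mod_cast hN
  refine ⟨nonneg_of_mul_nonneg_right (Int.floor_nonneg.1 h1) hN', ?_⟩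
  have h3 : (N:ℝ) * x < N := by simpa using Int.floor_lt.1 h2
  nlinarith

theorem MeanZero.of_ip {N : ℕ} (hN : 0 < N) {f : ℝ → ℝ} (hs : ∀ x, x ∉ Ico (0:ℝ) 1 → f x = 0)
    (h : ∀ u, IsStep N u → ip u f = 0) : MeanZero N f := by
  classical
  intro κ
  let c : ℤ → ℝ := fun j => if 0 ≤ j ∧ j < N then κ j else 0
  have hu : IsStep N fun x => c ⌊N * x⌋ := by
    refine ⟨⟨c, fun x => rfl⟩, fun x hx => ?_⟩
    simp only [c]
    rw [if_neg]
    rintro ⟨h1, h2⟩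
    exact hx (mem_of_floor hN h1 h2)
  rw [← h _ hu]
  unfold ip
  congr 1
  ext x
  by_cases hx : x ∈ Ico (0:ℝ) 1
  · have := floor_mem hN hx
    rw [Finset.mem_Ico] at this
    simp only [c]
    rw [if_pos this]
  · rw [hs x hx, mul_zero, mul_zero]

theorem MeanZero.add {N N' N'' : ℕ} (hN : 0 < N) (hN' : 0 < N') (hN'' : 0 < N'')
    {f g : ℝ → ℝ} (hf : MeanZero N f) (hg : MeanZero N g) (hfs : IsStep N' f)
    (hgs : IsStep N'' g) : MeanZero N (fun x => f x + g x) := by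
  refine .of_ip hN (fun x hx => by rw [hfs.supp x hx, hgs.supp x hx, add_zero]) fun u hu => ?_
  rw [ip_comm, ip_add_left (hfs.l2 hN') (hgs.l2 hN'') (hu.l2 hN), ip_comm, hf.ip_eq_zero hu,
    ip_comm, hg.ip_eq_zero hu, add_zero]

theorem MeanZero.neg {N : ℕ} {f : ℝ → ℝ} (hf : MeanZero N f) : MeanZero N (fun x => -f x) := by
  intro κ
  have := hf κ
  simp only [mul_neg, integral_neg, this, neg_zero]

theorem IsStep.neg {N : ℕ} {f : ℝ → ℝ} (hf : IsStep N f) : IsStep N (fun x => -f x) := by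
  obtain ⟨c, hc⟩ := hf.const
  exact ⟨⟨fun j => -c j, fun x => by rw [hc]⟩, fun x hx => by rw [hf.supp x hx, neg_zero]⟩

/-- Average of a step function: again a step function, and the remainder oscillates. -/
theorem split_avg {N N' : ℕ} (hN : 0 < N) (hN' : 0 < N') (hd : N ∣ N') {f : ℝ → ℝ}
    (hf : IsStep N' f) :
    IsStep N (avg N f) ∧ IsStep N' (fun x => f x - avg N f x) ∧
      MeanZero N (fun x => f x - avg N f x) ∧
      nsq f = nsq (avg N f) + nsq (fun x => f x - avg N f x) := by
  obtain ⟨hm, ⟨B, hB0, hB⟩, hs⟩ := hf.bddSupp hN'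
  have h1 : IsStep N (avg N f) := avg_step hN hs
  have h2 := hf.sub (h1.mono hd hN')
  have h3 : MeanZero N (fun x => f x - avg N f x) :=
    avg_meanZero hN (integrable_of_bdd_supp hm hB hs) hs hB hm
  refine ⟨h1, h2, h3, ?_⟩
  have h4 := nsq_add (h1.l2 hN) (h2.l2 hN')
  rw [h3.ip_eq_zero h1] at h4
  have e : (fun x => avg N f x + (f x - avg N f x)) = f := by ext x; ring
  rw [e] at h4
  linarith

/-- Images of functions living in distant frequency bands are almost orthogonal. -/
theorem Good.cross_le {κ : Type} [Fintype κ] {s : κ → Mat} (hs : Good s) {N N' : ℕ} (hN : 0 < N)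
    (hNN : N ≤ N') {u v : ℝ → ℝ} (hu : IsStep N u) (hv : MeanZero N' v) {N'' : ℕ}
    (hN'' : 0 < N'') (hvs : IsStep N'' v) {ε : ℝ} (hε : 0 ≤ ε) (hr : (N:ℝ) / N' ≤ ε ^ 2) :
    2 * ip (avgT s u) (avgT s v) ≤ 3 * ε * (nsq u + nsq v) := by
  have := hs.ne
  have hk : (0:ℝ) < Fintype.card κ := by exact_mod_cast Fintype.card_pos
  have hul := hu.l2 hN
  have hvl := hvs.l2 hN''
  have hun := nsq_nonneg u
  have hvn := nsq_nonneg v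
  have h1 : ∀ a b, ip (sl (s a * (s b)⁻¹) u) v ≤ 3 * ε * (nsq u + nsq v) / 2 := by
    intro a b
    have h := cross_bound le_rfl (hs.near a b) hN hNN hu hv hvl hvs.supp
    refine le_of_abs_le (abs_le_of_sq_le_sq (h.trans ?_) (by positivity))
    calc 9 * ((N:ℝ) / N') * nsq u * nsq v ≤ 9 * ε ^ 2 * nsq u * nsq v := by gcongr
      _ ≤ 9 * ε ^ 2 * ((nsq u + nsq v) / 2) ^ 2 := by
        rw [mul_assoc]
        gcongr
        nlinarith [sq_nonneg (nsq u - nsq v)]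
      _ = _ := by ring
  rw [hs.ip_avgT hul hvl]
  have h2 : ∑ a, ∑ b, ip (sl (s a * (s b)⁻¹) u) v ≤
      ∑ _a : κ, ∑ _b : κ, 3 * ε * (nsq u + nsq v) / 2 :=
    Finset.sum_le_sum fun a _ => Finset.sum_le_sum fun b _ => h1 a b
  simp only [Finset.sum_const, Finset.card_univ, nsmul_eq_mul] at h2
  have h3 := mul_le_mul_of_nonneg_left h2 (by positivity : 0 ≤ ((Fintype.card κ : ℝ) ^ 2)⁻¹)
  have e : ((Fintype.card κ : ℝ) ^ 2)⁻¹ * ((Fintype.card κ : ℝ) * ((Fintype.card κ : ℝ) *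
      (3 * ε * (nsq u + nsq v) / 2))) = 3 * ε * (nsq u + nsq v) / 2 := by field_simp
  linarith

/-- Adding up the frequency bands. Distant bands are almost orthogonal, and the interaction of
adjacent bands is absorbed by the contraction on each of them; this is why the estimate for
`u + v` allots a smaller constant to the top band `v` than to the rest `u`. -/
theorem Good.sum_bands {κ : Type} [Fintype κ] {s : κ → Mat} (hs : Good s) {Q : ℕ} (hQ : 2 ≤ Q)
    {β : ℝ} (hβ : 0 ≤ β)
    (hband : ∀ (m : ℕ) (f : ℝ → ℝ), IsStep ((Q ^ 64) ^ 2 ^ (m + 1)) f →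
      MeanZero ((Q ^ 64) ^ 2 ^ m) f → nsq (avgT s f) ≤ β * nsq f) (m : ℕ) {u v : ℝ → ℝ}
    (hu : IsStep ((Q ^ 64) ^ 2 ^ m) u) (hu0 : MeanZero (Q ^ 64) u)
    (hv : IsStep ((Q ^ 64) ^ 2 ^ (m + 1)) v) (hv0 : MeanZero ((Q ^ 64) ^ 2 ^ m) v) :
    nsq (avgT s fun x => u x + v x) ≤
      3 * β * nsq u + 2 * β * nsq v + 6 / Q * (1 - (1 / 2) ^ m) * (nsq u + nsq v) := by
  have hQ0 : 0 < Q := by omega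
  have hQr : (2:ℝ) ≤ Q := by exact_mod_cast hQ
  have hpos : ∀ j, 0 < (Q ^ 64) ^ 2 ^ j := fun j => by positivity
  have hdvd : ∀ j, (Q ^ 64) ^ 2 ^ j ∣ (Q ^ 64) ^ 2 ^ (j + 1) := fun j =>
    pow_dvd_pow _ (Nat.pow_le_pow_right (by norm_num) (by omega))
  induction m generalizing u v with
  | zero =>
    simp only [pow_zero, pow_one] at hu hv0
    have hul := hu.l2 (by positivity)
    have hvl := hv.l2 (hpos _)
    have hun := nsq_nonneg u
    have hvn := nsq_nonneg v
    have h1 := hband 0 (fun x => u x + v x) ((hu.mono (by simp) (hpos 1)).add hv) (by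
      simpa using MeanZero.add (by positivity) (by positivity) (hpos 1) hu0 hv0 hu hv)
    have h2 : ip u v = 0 := hv0.ip_eq_zero hu
    rw [nsq_add hul hvl, h2] at h1
    refine h1.trans ?_
    have := mul_nonneg hβ hun
    have := mul_nonneg hβ hvn
    simp only [pow_zero, sub_self, mul_zero, zero_mul, add_zero]
    linarith
  | succ m ih =>
    obtain ⟨h1, h2, h3, h4⟩ := split_avg (hpos m) (hpos (m + 1)) (hdvd m) hu
    set u' := avg ((Q ^ 64) ^ 2 ^ m) u with hu'
    set v' : ℝ → ℝ := fun x => u x - u' x with hv'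
    have h10 : MeanZero (Q ^ 64) u' := by
      have h5 : MeanZero (Q ^ 64) v' :=
        h3.mono (dvd_pow_self _ (pow_ne_zero _ two_ne_zero)) (hpos m)
      have h6 := MeanZero.add (by positivity) (hpos (m + 1)) (hpos (m + 1)) hu0 h5.neg hu h2.neg
      have e : (fun x => u x + -v' x) = u' := by ext x; simp only [hv']; ring
      rwa [e] at h6
    have hIH := ih h1 h10 h2 h3
    have e : (fun x => u' x + v' x) = u := by ext x; simp only [hv']; ring
    have hTul := hs.l2_avgT (hu.l2 (hpos _))
    have hTu'l := hs.l2_avgT (h1.l2 (hpos _))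
    have hTv'l := hs.l2_avgT (h2.l2 (hpos _))
    have hTvl := hs.l2_avgT (hv.l2 (hpos _))
    have c1 := hs.cross_le (ε := 1 / Q * (1 / 2) ^ m) (hpos m)
      (Nat.le_of_dvd (hpos _) (hdvd m)) h1 hv0 (hpos _) hv (by positivity) (by
        have e1 : ((((Q ^ 64) ^ 2 ^ m : ℕ) : ℝ) / ((Q ^ 64) ^ 2 ^ (m + 1) : ℕ)) =
            ((1 / (Q:ℝ) ^ 2 ^ m) ^ 32) ^ 2 := by
          push_cast
          rw [pow_succ 2 m]
          field_simp
          ring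
        have h5 : 1 / (Q:ℝ) ^ 2 ^ m ≤ 1 / Q * (1 / 2) ^ m := by
          rw [div_pow, one_pow, div_mul_div_comm, one_mul]
          gcongr
          calc (Q:ℝ) * 2 ^ m ≤ Q * Q ^ m := by gcongr
            _ = (Q:ℝ) ^ (m + 1) := by ring
            _ ≤ (Q:ℝ) ^ 2 ^ m := pow_le_pow_right₀ (by linarith) Nat.lt_two_pow_self
        rw [e1]
        gcongr
        refine (pow_le_of_le_one (by positivity) ?_ (by norm_num)).trans h5
        rw [div_le_one (by positivity)]
        exact one_le_pow₀ (by linarith))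
    have c2 := two_ip_le hTv'l hTvl
    have b1 := hband m v' h2 h3
    have b2 := hband (m + 1) v hv hv0
    rw [e] at hIH
    rw [avgT_add, nsq_add hTul hTvl]
    have e2 : ip (avgT s u) (avgT s v) = ip (avgT s u') (avgT s v) + ip (avgT s v') (avgT s v) := by
      rw [← ip_add_left hTu'l hTv'l hTvl, ← avgT_add, e]
    rw [e2, h4]
    rw [pow_succ]
    set z : ℝ := (1 / 2) ^ m with hz
    have hz0 : 0 ≤ z := by positivity
    have hn1 := nsq_nonneg u'
    have hn2 := nsq_nonneg v'
    have hn3 := nsq_nonneg v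
    have hβv : 0 ≤ β * nsq v' := mul_nonneg hβ hn2
    have hd : 0 ≤ 1 / (Q:ℝ) := by positivity
    have hz1 : z ≤ 1 := pow_le_one₀ (by norm_num) (by norm_num)
    have t1 : 0 ≤ 1 / (Q:ℝ) * z * nsq v' := by positivity
    have t2 : 0 ≤ 1 / (Q:ℝ) * (1 - z) * nsq v := by
      have : 0 ≤ 1 - z := by linarith
      positivity
    have e6 : 6 / (Q:ℝ) = 6 * (1 / Q) := by ring
    rw [e6] at hIH ⊢
    set d := 1 / (Q:ℝ) with hd'
    nlinarith

/-- The average over a suitable family of matrices near the identity contracts, as strongly as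
desired, all functions that have mean zero on the cells of some fixed length. -/
theorem exists_contraction (K : ℕ) (hK : 10 ≤ K) {ε : ℝ} (hε : 0 < ε) :
    ∃ (P : ℕ) (κ : Type) (_ : Fintype κ) (s : κ → Mat), 1000 ≤ P ∧ Good s ∧
      (∀ a, NearOne (1 / K) (s a)) ∧ ∀ (m : ℕ) (f : ℝ → ℝ), IsStep (P ^ 2 ^ m) f →
        MeanZero P f → nsq (avgT s f) ≤ ε * nsq f := by
  obtain ⟨A, hA, h⟩ := exists_band K hK
  -- The last two terms make the loss in a single band and the interaction of different bands
  -- smaller than `ε`.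
  obtain ⟨Q, hQ⟩ := exists_nat_ge (144 + 12 / ε + 36 * A / ε ^ 2)
  have h1 : 0 < 12 / ε := by positivity
  have h2 : 0 < 36 * A / ε ^ 2 := by positivity
  have hQ1 : 144 ≤ Q := by
    have : (144:ℝ) ≤ Q := by linarith
    exact_mod_cast this
  have hQr : (144:ℝ) ≤ Q := by exact_mod_cast hQ1
  have hQ0 : (0:ℝ) < Q := by linarith
  obtain ⟨κ, iκ, s, hs, hs1, hband⟩ := h Q hQ1
  have hpos : ∀ j, 0 < (Q ^ 64) ^ 2 ^ j := fun j => by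
    have : 0 < Q := by omega
    positivity
  have hP : 0 < Q ^ 64 := by simpa using hpos 0
  have hP2 : 1000 ≤ Q ^ 64 :=
    calc 1000 ≤ 144 ^ 2 := by norm_num
      _ ≤ Q ^ 2 := Nat.pow_le_pow_left hQ1 2
      _ ≤ Q ^ 64 := Nat.pow_le_pow_right (by omega) (by norm_num)
  have hdvd : ∀ j, (Q ^ 64) ^ 2 ^ j ∣ (Q ^ 64) ^ 2 ^ (j + 1) := fun j =>
    pow_dvd_pow _ (Nat.pow_le_pow_right (by norm_num) (by omega))
  refine ⟨Q ^ 64, κ, iκ, s, hP2, hs, hs1, fun m f hf hf0 => ?_⟩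
  obtain ⟨i1, i2, i3, i4⟩ := split_avg (hpos m) (hpos (m + 1)) (hdvd m) (hf.mono (hdvd m) (hpos _))
  set u := avg ((Q ^ 64) ^ 2 ^ m) f with hu
  set v : ℝ → ℝ := fun x => f x - u x with hv
  have hu0 : MeanZero (Q ^ 64) u := by
    have h5 : MeanZero (Q ^ 64) v :=
      i3.mono (dvd_pow_self _ (pow_ne_zero _ two_ne_zero)) (hpos m)
    have h6 := MeanZero.add hP (hpos m) (hpos (m + 1)) hf0 h5.neg hf i2.neg
    have e : (fun x => f x + -v x) = u := by ext x; simp only [hv]; ring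
    rwa [e] at h6
  have h3 := hs.sum_bands (by omega) (Real.sqrt_nonneg _) hband m i1 hu0 i2 i3
  have e : (fun x => u x + v x) = f := by ext x; simp only [hv]; ring
  rw [e] at h3
  have hsq : √(A / (Q:ℝ) ^ 8) ≤ ε / 6 := by
    rw [Real.sqrt_le_left (by positivity)]
    calc A / (Q:ℝ) ^ 8 ≤ A / Q := by
          gcongr; exact le_self_pow₀ (by linarith) (by norm_num)
      _ ≤ (ε / 6) ^ 2 := by
          rw [div_le_iff₀ hQ0]
          have : 36 * A / ε ^ 2 ≤ Q := by linarith
          rw [div_le_iff₀ (by positivity)] at this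
          linarith
  have hQε : 6 / (Q:ℝ) ≤ ε / 2 := by
    rw [div_le_iff₀ hQ0]
    have : 12 / ε ≤ Q := by linarith
    rw [div_le_iff₀ hε] at this
    linarith
  have n1 := nsq_nonneg u
  have n2 := nsq_nonneg v
  have hb := Real.sqrt_nonneg (A / (Q:ℝ) ^ 8)
  have hz : (1 / 2 : ℝ) ^ m ≤ 1 := pow_le_one₀ (by norm_num) (by norm_num)
  have hz0 : (0:ℝ) ≤ (1 / 2 : ℝ) ^ m := by positivity
  rw [i4]
  refine h3.trans ?_
  calc 3 * √(A / (Q:ℝ) ^ 8) * nsq u + 2 * √(A / (Q:ℝ) ^ 8) * nsq v +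
        6 / Q * (1 - (1 / 2) ^ m) * (nsq u + nsq v)
      ≤ 3 * (ε / 6) * nsq u + 3 * (ε / 6) * nsq v + ε / 2 * 1 * (nsq u + nsq v) := by
        gcongr
        · linarith
        · norm_num
    _ = ε * (nsq u + nsq v) := by ring

/-! ### Assembling the expander -/

theorem NearOne.inv {η : ℝ} {g : Mat} (hg : NearOne η g) (hd : g.det = 1) : NearOne η g⁻¹ := by
  obtain ⟨h1, h2, h3, h4⟩ := hg.entries
  intro i j
  rw [Matrix.inv_def, hd, Ring.inverse_one, one_smul, Matrix.adjugate_fin_two]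
  fin_cases i <;> fin_cases j <;> simpa

theorem NearOne.contDiffOn_mob {η : ℝ} {h : Mat} (hη : η ≤ 1 / 10) (hh : NearOne η h) {a b : ℝ}
    (ha : 0 ≤ a) (hb : b ≤ 1) : ContDiffOn ℝ (⊤ : ℕ∞) (mob h) (Icc a b) := by
  unfold mob den
  refine ContDiffOn.div (by fun_prop) (by fun_prop) fun x hx => ?_
  have := (hh.den_ge hη (x := x) (abs_le.2 ⟨by linarith [hx.1], by linarith [hx.2]⟩)).1
  unfold den at this
  linarith

theorem NearOne.strictMonoOn_mob {η : ℝ} {h : Mat} (hη : η ≤ 1 / 10) (hh : NearOne η h) {a b : ℝ}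
    (ha : 0 ≤ a) (hb : b ≤ 1) : StrictMonoOn (mob h) (Icc a b) := by
  intro x hx y hy hxy
  have h1 := (hh.den_ge hη (x := x) (abs_le.2 ⟨by linarith [hx.1], by linarith [hx.2]⟩)).1
  have h2 := (hh.den_ge hη (x := y) (abs_le.2 ⟨by linarith [hy.1], by linarith [hy.2]⟩)).1
  have h3 := hh.det_pos hη
  rw [det_eq] at h3
  unfold mob
  rw [div_lt_div_iff₀ (by linarith) (by linarith)]
  unfold den
  nlinarith [mul_pos h3 (sub_pos.2 hxy)]

theorem Good.nsq_avgT_le {κ : Type} [Fintype κ] {s : κ → Mat} (hs : Good s) {f : ℝ → ℝ}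
    (hf : L2 f) : nsq (avgT s f) ≤ nsq f := by
  have := hs.ne
  have hk : (0:ℝ) < Fintype.card κ := by exact_mod_cast Fintype.card_pos
  have h1 : ∀ a b, ip (sl (s a * (s b)⁻¹) f) f ≤ nsq f := by
    intro a b
    have hq : 0 < (s a * (s b)⁻¹).det := by rw [hs.quot]; norm_num
    have h := (le_abs_self _).trans (abs_ip_le (hf.sl hq) hf)
    rwa [nsq_sl hq, Real.mul_self_sqrt (nsq_nonneg f)] at h
  rw [← ip_self, hs.ip_avgT hf hf]
  have h2 : ∑ a, ∑ b, ip (sl (s a * (s b)⁻¹) f) f ≤ ∑ _a : κ, ∑ _b : κ, nsq f :=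
    Finset.sum_le_sum fun a _ => Finset.sum_le_sum fun b _ => h1 a b
  simp only [Finset.sum_const, Finset.card_univ, nsmul_eq_mul] at h2
  refine (mul_le_mul_of_nonneg_left h2
    (by positivity : 0 ≤ ((Fintype.card κ : ℝ) ^ 2)⁻¹)).trans (le_of_eq ?_)
  field_simp

theorem bddSupp_indicator {S : Set ℝ} (hS : MeasurableSet S) (hS1 : S ⊆ Ico 0 1) :
    BddSupp (S.indicator fun _ => (1:ℝ)) := by
  refine ⟨measurable_const.indicator hS, ⟨1, zero_le_one, fun x => ?_⟩, fun x hx => ?_⟩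
  · by_cases hx : x ∈ S <;> simp [hx]
  · rw [indicator_of_notMem fun h => hx (hS1 h)]

theorem nsq_indicator {S : Set ℝ} (hS : MeasurableSet S) :
    nsq (S.indicator fun _ => (1:ℝ)) = volume.real S := by
  unfold nsq
  have e : ∀ x, (S.indicator (fun _ => (1:ℝ)) x) ^ 2 = S.indicator (fun _ => (1:ℝ)) x := fun x => by
    by_cases hx : x ∈ S <;> simp [hx]
  simp_rw [e]
  rw [integral_indicator hS, setIntegral_const, smul_eq_mul, mul_one]

/-- By Cauchy-Schwarz, if the average of an indicator function has small `L²` norm then the union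
of the preimages of the set is large. -/
theorem Good.measure_preimages {κ : Type} [Fintype κ] {s : κ → Mat} (hs : Good s)
    (hs1 : ∀ a, NearOne (1 / 2000) (s a)) {S : Set ℝ} (hS : MeasurableSet S)
    (hS1 : S ⊆ Ico 0 1) :
    volume.real S ^ 2 ≤ 1.03 * (volume.real {x | ∃ a, den (s a) x ≠ 0 ∧ mob (s a) x ∈ S} *
      nsq (avgT s (S.indicator fun _ => (1:ℝ)))) := by
  have := hs.ne
  have hk : (0:ℝ) < Fintype.card κ := by exact_mod_cast Fintype.card_pos
  set F : ℝ → ℝ := S.indicator fun _ => (1:ℝ) with hF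
  have hFb := bddSupp_indicator hS hS1
  set B := {x | ∃ a, den (s a) x ≠ 0 ∧ mob (s a) x ∈ S} with hB
  have hBm : MeasurableSet B := by
    have e : B = ⋃ a, ({x | den (s a) x ≠ 0} ∩ mob (s a) ⁻¹' S) := by ext x; simp [hB]
    rw [e]
    exact .iUnion fun a => (measurableSet_den _).inter (measurable_mob _ hS)
  have hB2 : B ⊆ Icc (-2) 2 := by
    rintro x ⟨a, h1, h2⟩
    exact abs_le.1 ((hs1 a).preimage_bound (by norm_num) h1 (hS1 h2))
  have hBf : volume B ≠ ⊤ := ne_top_of_le_ne_top (by simp) (measure_mono hB2)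
  have hF01 : ∀ x, F x = 0 ∨ (x ∈ S ∧ F x = 1) := fun x => by
    by_cases hx : x ∈ S
    · right; exact ⟨hx, by simp [hF, hx]⟩
    · left; simp [hF, hx]
  have hwt : ∀ a x, den (s a) x ≠ 0 → mob (s a) x ∈ S →
      0.99 ≤ wt (s a) x ∧ wt (s a) x ≤ 1.01 := by
    intro a x h1 h2
    have hx := (hs1 a).preimage_bound (by norm_num) h1 (hS1 h2)
    have h3 := abs_le.1 ((hs1 a).wt_bound (by norm_num) hx)
    constructor <;> linarith [h3.1, h3.2]
  have hcmp : ∀ a x, wt (s a) x ^ 2 * F (mob (s a) x) ≤ 1.01 * sl (s a) F x ∧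
      |sl (s a) F x| ≤ 1.1 * (wt (s a) x ^ 2 * F (mob (s a) x)) := by
    intro a x
    unfold sl
    rcases hF01 (mob (s a) x) with h | ⟨h1, h2⟩
    · rw [h]; simp
    · by_cases hd : den (s a) x = 0
      · have : wt (s a) x = 0 := by unfold wt; rw [hd]; simp
        rw [this]; simp
      · obtain ⟨h3, h4⟩ := hwt a x hd h1
        rw [h2, mul_one, mul_one, abs_of_nonneg (by linarith)]
        constructor <;> nlinarith
  have hig : ∀ a, Integrable (sl (s a) F) := fun a => by
    refine ((integrable_mob (hs.pos a) hFb.integrable).const_mul 1.1).mono'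
      (measurable_sl _ hFb.meas).aestronglyMeasurable (Filter.Eventually.of_forall fun x => ?_)
    exact (hcmp a x).2
  have hmass : ∀ a, volume.real S / 1.01 ≤ ∫ x, sl (s a) F x := by
    intro a
    have h1 := integral_mob (hs.pos a) F
    have h2 : ∫ x, F x = volume.real S := by
      rw [hF, integral_indicator hS, setIntegral_const, smul_eq_mul, mul_one]
    have h3 : ∫ x, wt (s a) x ^ 2 * F (mob (s a) x) ≤ ∫ x, 1.01 * sl (s a) F x :=
      integral_mono (integrable_mob (hs.pos a) hFb.integrable) ((hig a).const_mul _)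
        fun x => (hcmp a x).1
    rw [h1, h2, integral_const_mul] at h3
    rw [div_le_iff₀ (by norm_num)]
    linarith
  have htot : volume.real S / 1.01 ≤ ∫ x, avgT s F x := by
    unfold avgT
    rw [integral_const_mul, integral_finsetSum _ fun a _ => hig a]
    have h1 : ∑ _a : κ, volume.real S / 1.01 ≤ ∑ a, ∫ x, sl (s a) F x :=
      Finset.sum_le_sum fun a _ => hmass a
    simp only [Finset.sum_const, Finset.card_univ, nsmul_eq_mul] at h1
    rw [inv_mul_eq_div, le_div_iff₀ hk]
    linarith
  have hzero : ∀ x, avgT s F x = B.indicator (fun _ => (1:ℝ)) x * avgT s F x := by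
    intro x
    by_cases hx : x ∈ B
    · simp [hx]
    · have h1 : avgT s F x = 0 := by
        unfold avgT
        rw [Finset.sum_eq_zero, mul_zero]
        intro a _
        unfold sl
        rcases hF01 (mob (s a) x) with h | ⟨h1, h2⟩
        · rw [h, mul_zero]
        · by_cases hd : den (s a) x = 0
          · have : wt (s a) x = 0 := by unfold wt; rw [hd]; simp
            rw [this, zero_mul]
          · exact absurd ⟨a, hd, h1⟩ hx
      rw [h1, mul_zero]
  have hBl : L2 (B.indicator fun _ => (1:ℝ)) := by
    refine ⟨measurable_const.indicator hBm, ?_⟩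
    have e : (fun x => (B.indicator (fun _ => (1:ℝ)) x) ^ 2) = B.indicator (fun _ => (1:ℝ)) := by
      ext x
      by_cases hx : x ∈ B <;> simp [hx]
    rw [e]
    exact (integrable_indicator_iff hBm).2 (integrableOn_const hBf)
  have hcs := ip_sq_le hBl (hs.l2_avgT hFb.l2)
  rw [nsq_indicator hBm] at hcs
  have e : ip (B.indicator fun _ => (1:ℝ)) (avgT s F) = ∫ x, avgT s F x := by
    unfold ip
    exact integral_congr_ae (Filter.Eventually.of_forall fun x => (hzero x).symm)
  rw [e] at hcs
  have h0 : 0 ≤ volume.real S := measureReal_nonneg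
  have h5 : (volume.real S / 1.01) ^ 2 ≤ (∫ x, avgT s F x) ^ 2 :=
    pow_le_pow_left₀ (by positivity) htot 2
  rw [div_pow, div_le_iff₀ (by norm_num)] at h5
  have h6 : 0 ≤ volume.real B * nsq (avgT s F) := mul_nonneg measureReal_nonneg (nsq_nonneg _)
  nlinarith

/-! ### Discretization of compact sets -/

/-- A compact subset of `[0,1)` is contained in a union of cells of length `P ^ (-2 ^ m)` whose
measure is only slightly larger. -/
theorem exists_outer_step {S : Set ℝ} (hS : IsCompact S) (hS1 : S ⊆ Ico 0 1) {P : ℕ} (hP : 2 ≤ P)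
    {τ : ℝ} (hτ : 0 < τ) :
    ∃ (m : ℕ) (U : Set ℝ), MeasurableSet U ∧ S ⊆ U ∧ U ⊆ Ico 0 1 ∧
      IsStep (P ^ 2 ^ m) (U.indicator fun _ => (1:ℝ)) ∧ volume.real (U \ S) ≤ τ := by
  classical
  have hSf : volume S ≠ ⊤ := hS.measure_lt_top.ne
  have h1 := tendsto_measure_cthickening_of_isCompact (μ := (volume : Measure ℝ)) hS
  have h2 : volume S < volume S + ENNReal.ofReal τ :=
    ENNReal.lt_add_right hSf (by simpa using hτ)
  obtain ⟨δ, hδ, h3⟩ := Metric.eventually_nhds_iff.1 (h1.eventually (gt_mem_nhds h2))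
  obtain ⟨m, hm⟩ := exists_nat_gt (1 / δ)
  have hN : 0 < P ^ 2 ^ m := by positivity
  have hmN : (m:ℝ) ≤ ((P ^ 2 ^ m : ℕ) : ℝ) := by
    have a1 : m < 2 ^ m := Nat.lt_two_pow_self
    have a2 : 2 ^ m < 2 ^ 2 ^ m := Nat.lt_two_pow_self
    have a3 : 2 ^ 2 ^ m ≤ P ^ 2 ^ m := Nat.pow_le_pow_left hP _
    exact_mod_cast (a1.trans a2).le.trans a3
  set N := P ^ 2 ^ m with hNdef
  have hN' : (0:ℝ) < N := by exact_mod_cast hN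
  have hNδ : 1 / (N:ℝ) < δ := by
    rw [div_lt_iff₀ hδ] at hm
    rw [div_lt_iff₀ hN']
    nlinarith
  set U : Set ℝ := {x | ∃ y ∈ S, ⌊(N:ℝ) * y⌋ = ⌊(N:ℝ) * x⌋} with hU
  have hUm : MeasurableSet U := by
    have : Measurable fun x : ℝ => ⌊(N:ℝ) * x⌋ := Int.measurable_floor.comp (by fun_prop)
    exact this (MeasurableSet.of_discrete (s := {j : ℤ | ∃ y ∈ S, ⌊(N:ℝ) * y⌋ = j}))
  have hSU : S ⊆ U := fun y hy => ⟨y, hy, rfl⟩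
  have hU1 : U ⊆ Ico 0 1 := by
    rintro x ⟨y, hy, h⟩
    have := floor_mem hN (hS1 hy)
    rw [h, Finset.mem_Ico] at this
    exact mem_of_floor hN this.1 this.2
  refine ⟨m, U, hUm, hSU, hU1, ⟨⟨fun j => if ∃ y ∈ S, ⌊(N:ℝ) * y⌋ = j then 1 else 0,
    fun x => ?_⟩, fun x hx => indicator_of_notMem (fun h => hx (hU1 h)) _⟩, ?_⟩
  · simp only [indicator_apply]
    rfl
  · have hUc : U ⊆ Metric.cthickening (1 / N) S := by
      rintro x ⟨y, hy, h⟩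
      refine Metric.mem_cthickening_of_dist_le x y _ S hy ?_
      rw [Real.dist_eq]
      have a1 := Int.floor_le ((N:ℝ) * x)
      have a2 := Int.lt_floor_add_one ((N:ℝ) * x)
      have a3 := Int.floor_le ((N:ℝ) * y)
      have a4 := Int.lt_floor_add_one ((N:ℝ) * y)
      rw [h] at a3 a4
      rw [abs_le, ← neg_div, div_le_iff₀ hN', le_div_iff₀ hN']
      constructor <;> nlinarith
    have h4 : volume (Metric.cthickening (1 / (N:ℝ)) S) < volume S + ENNReal.ofReal τ := by
      apply h3
      rw [Real.dist_eq, sub_zero, abs_of_pos (by positivity)]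
      exact hNδ
    have h5 : volume (U \ S) ≤ ENNReal.ofReal τ := by
      rw [measure_sdiff hSU hS.measurableSet.nullMeasurableSet hSf]
      exact tsub_le_iff_left.2 ((measure_mono hUc).trans h4.le)
    exact ENNReal.toReal_le_of_le_ofReal hτ.le h5

/-- If every cell contains at most `b` times its length of `U`, the averaged indicator is at most
`b` pointwise. -/
theorem nsq_avg_indicator_le {U : Set ℝ} (hU : MeasurableSet U) (hU1 : U ⊆ Ico 0 1) {P : ℕ}
    (hP : 0 < P) {b : ℝ}
    (h : ∀ j ∈ Finset.Ico (0:ℤ) P, volume.real (U ∩ cell P j) ≤ b / P) :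
    nsq (avg P (U.indicator fun _ => (1:ℝ))) ≤ b ^ 2 := by
  have hP' : (0:ℝ) < P := by exact_mod_cast hP
  have hst := avg_step hP (bddSupp_indicator hU hU1).supp
  have e : ∀ x, avg P (U.indicator fun _ => (1:ℝ)) x
      = P * volume.real (U ∩ cell P ⌊(P:ℝ) * x⌋) := by
    intro x
    unfold avg
    rw [integral_indicator hU, Measure.restrict_restrict hU, setIntegral_const, smul_eq_mul, mul_one]
  have h1 : ∀ x, avg P (U.indicator fun _ => (1:ℝ)) x ^ 2
      ≤ (Ico (0:ℝ) 1).indicator (fun _ => b ^ 2) x := by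
    intro x
    by_cases hx : x ∈ Ico (0:ℝ) 1
    · rw [indicator_of_mem hx, e]
      have h2 := h _ (floor_mem hP hx)
      rw [le_div_iff₀ hP'] at h2
      exact pow_le_pow_left₀ (by positivity) (by linarith) 2
    · rw [indicator_of_notMem hx, hst.supp x hx]
      norm_num
  have h2 : Integrable ((Ico (0:ℝ) 1).indicator fun _ => b ^ 2) :=
    (integrable_indicator_iff measurableSet_Ico).2 (integrableOn_const (by simp))
  refine (integral_mono (hst.l2 hP).int h2 h1).trans (le_of_eq ?_)
  rw [integral_indicator measurableSet_Ico, setIntegral_const]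
  simp

theorem sqrt_le_const_mul {a c α : ℝ} (hc : 0 ≤ c) (hα : 0 ≤ α) (h : a ≤ c ^ 2 * α) :
    √a ≤ c * √α := by
  rw [Real.sqrt_le_iff]
  refine ⟨by positivity, ?_⟩
  rw [mul_pow, Real.sq_sqrt hα]
  exact h

/-- A contracting family moves any compact set that is evenly spread over the cells of length
`1 / P`: a step function close to the indicator splits into its averages over cells, which are
small pointwise, and an oscillating part, which is contracted. -/
theorem Good.nsq_avgT_indicator {κ : Type} [Fintype κ] {s : κ → Mat} (hs : Good s) {P : ℕ}
    (hP : 1000 ≤ P)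
    (hc : ∀ (m : ℕ) (f : ℝ → ℝ), IsStep (P ^ 2 ^ m) f → MeanZero P f →
      nsq (avgT s f) ≤ 1 / 10000 * nsq f)
    {S : Set ℝ} (hS : IsCompact S) (hS1 : S ⊆ Ico 0 1) {α : ℝ} (hα : 0 < α) (hα2 : α ≤ 1 / 2)
    (hSα : volume.real S ≤ α)
    (hcell : ∀ j ∈ Finset.Ico (0:ℤ) P, volume.real (S ∩ cell P j) ≤ 1.1 * α / P) :
    nsq (avgT s (S.indicator fun _ => (1:ℝ))) ≤ 0.64 * α := by
  have hP0 : 0 < P := by omega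
  have hP' : (1000:ℝ) ≤ P := by exact_mod_cast hP
  obtain ⟨m, U, hUm, hSU, hU1, hst, hUS⟩ :=
    exists_outer_step hS hS1 (P := P) (by omega) (τ := 0.01 * α / P) (by positivity)
  have hN : 0 < P ^ 2 ^ m := by positivity
  have hτ : 0.01 * α / P ≤ 0.00001 * α := by
    rw [div_le_iff₀ (by linarith)]
    nlinarith
  have hUf : volume U ≠ ⊤ := ne_top_of_le_ne_top (by simp) (measure_mono hU1)
  have hUadd : ∀ C : Set ℝ, volume.real (U ∩ C) ≤ volume.real (S ∩ C) + volume.real (U \ S) := by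
    intro C
    refine (measureReal_mono (?_ : U ∩ C ⊆ (S ∩ C) ∪ (U \ S)) ?_).trans (measureReal_union_le _ _)
    · rintro x ⟨h1, h2⟩
      by_cases hx : x ∈ S
      · exact Or.inl ⟨hx, h2⟩
      · exact Or.inr ⟨h1, hx⟩
    · refine ne_top_of_le_ne_top hUf (measure_mono (union_subset ?_ sdiff_subset))
      exact inter_subset_left.trans hSU
  have hUvol : volume.real U ≤ 1.01 * α := by
    have := hUadd univ
    rw [inter_univ, inter_univ] at this
    linarith
  set F : ℝ → ℝ := S.indicator fun _ => (1:ℝ) with hF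
  set f : ℝ → ℝ := U.indicator fun _ => (1:ℝ) with hf
  obtain ⟨g1, g2, g3, g4⟩ := split_avg hP0 hN (dvd_pow_self P (by positivity)) hst
  rw [nsq_indicator hUm] at g4
  have hFl := (bddSupp_indicator hS.measurableSet hS1).l2
  have hfl := hst.l2 hN
  have hdl : L2 fun x => F x - f x := hFl.sub hfl
  have hgl := g1.l2 hP0
  have hol := g2.l2 hN
  have hd : nsq (fun x => F x - f x) ≤ 0.00001 * α := by
    have e : nsq (fun x => F x - f x) = volume.real (U \ S) := by
      rw [← nsq_indicator (hUm.diff hS.measurableSet)]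
      unfold nsq
      congr 1
      ext x
      by_cases hx : x ∈ S
      · simp [hF, hf, hx, hSU hx]
      · by_cases hy : x ∈ U <;> simp [hF, hf, hx, hy]
    rw [e]
    exact hUS.trans hτ
  have hg : nsq (avg P f) ≤ 0.785 ^ 2 * α := by
    refine (nsq_avg_indicator_le hUm hU1 hP0 (b := 1.11 * α) fun j hj => ?_).trans ?_
    · refine (hUadd _).trans ((add_le_add (hcell j hj) hUS).trans (le_of_eq ?_))
      ring
    · nlinarith
  have ho := hc m _ g2 g3
  have ho2 : nsq (fun x => f x - avg P f x) ≤ 1.01 * α := by linarith [nsq_nonneg (avg P f)]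
  have eF : F = fun x => (F x - f x) + ((f x - avg P f x) + avg P f x) := by ext x; ring
  have t1 : √(nsq (avgT s fun x => F x - f x)) ≤ 0.004 * √α :=
    sqrt_le_const_mul (by norm_num) hα.le ((hs.nsq_avgT_le hdl).trans (by linarith))
  have t2 : √(nsq (avgT s fun x => f x - avg P f x)) ≤ 0.011 * √α :=
    sqrt_le_const_mul (by norm_num) hα.le (by linarith)
  have t3 : √(nsq (avgT s (avg P f))) ≤ 0.785 * √α :=
    sqrt_le_const_mul (by norm_num) hα.le ((hs.nsq_avgT_le hgl).trans hg)
  have t4 := sqrt_nsq_add_le (hs.l2_avgT hol) (hs.l2_avgT hgl)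
  have t5 := sqrt_nsq_add_le (hs.l2_avgT hdl) (hs.l2_avgT (hol.add hgl))
  rw [← avgT_add] at t4 t5
  have t6 : √(nsq (avgT s F)) ≤ 0.8 * √α := by
    have e2 : avgT s F = avgT s fun x => (F x - f x) + ((f x - avg P f x) + avg P f x) :=
      congrArg _ eF
    rw [e2]
    linarith
  have t7 := pow_le_pow_left₀ (Real.sqrt_nonneg _) t6 2
  rw [mul_pow, Real.sq_sqrt hα.le, Real.sq_sqrt (nsq_nonneg _)] at t7
  linarith

/-- A set that is evenly spread over the cells of length `1 / P` has little mass near the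
endpoints of `[0,1]`. -/
theorem measure_middle {A : Set ℝ} (hA : A ⊆ Icc 0 1) {P : ℕ} (hP : 1000 ≤ P) {α : ℝ}
    (hα : 0 ≤ α)
    (hcell : ∀ i < P, volume.real (A ∩ Icc ((i:ℝ) / P) ((i + 1 : ℝ) / P)) ≤ 1.1 * α / P) :
    volume.real A ≤ volume.real (A ∩ Icc 0.01 0.99) + 0.03 * α := by
  have hP' : (1000:ℝ) ≤ P := by exact_mod_cast hP
  have hP0 : (0:ℝ) < P := by linarith
  set C : ℕ → Set ℝ := fun i => A ∩ Icc ((i:ℝ) / P) ((i + 1 : ℝ) / P) with hC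
  set k := P / 100 + 1 with hk
  have hkP : k < P := by omega
  have hk2 : (k:ℝ) ≤ P / 100 + 1 := by
    rw [hk]; push_cast
    have : ((P / 100 : ℕ) : ℝ) ≤ (P:ℝ) / 100 := by exact_mod_cast Nat.cast_div_le (m := P) (n := 100) (α := ℝ)
    linarith
  have hAf : volume A ≠ ⊤ := ne_top_of_le_ne_top (by simp) (measure_mono hA)
  have hfl : ∀ y : ℝ, 0 ≤ y → y ≤ 0.01 → ⌊(P:ℝ) * y⌋₊ < k := by
    intro y hy0 hy
    rw [hk, Nat.lt_succ_iff, Nat.le_div_iff_mul_le (by norm_num)]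
    have := Nat.floor_le (mul_nonneg hP0.le hy0)
    have h2 : (⌊(P:ℝ) * y⌋₊ : ℝ) * 100 ≤ P := by nlinarith
    exact_mod_cast h2
  have hcov : A ⊆ (A ∩ Icc 0.01 0.99) ∪ ⋃ j ∈ Finset.range k, (C j ∪ C (P - 1 - j)) := by
    intro x hx
    have hx1 := hA hx
    by_cases h1 : x ≤ 0.01
    · right
      have h2 := hfl x hx1.1 h1
      have h3 := Nat.floor_le (mul_nonneg hP0.le hx1.1)
      have h4 := Nat.lt_floor_add_one ((P:ℝ) * x)
      refine mem_biUnion (Finset.mem_coe.2 (Finset.mem_range.2 h2)) (Or.inl ⟨hx, ?_, ?_⟩)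
      · rw [div_le_iff₀ hP0]; linarith
      · rw [le_div_iff₀ hP0]; linarith
    by_cases h1' : x ≤ 0.99
    · exact Or.inl ⟨hx, by linarith, h1'⟩
    · right
      push Not at h1'
      have hx0 : 0 ≤ 1 - x := by linarith [hx1.2]
      have h2 := hfl (1 - x) hx0 (by linarith)
      have h3 := Nat.floor_le (mul_nonneg hP0.le hx0)
      have h4 := Nat.lt_floor_add_one ((P:ℝ) * (1 - x))
      have h5 : ((P - 1 - ⌊(P:ℝ) * (1 - x)⌋₊ : ℕ) : ℝ) = P - 1 - ⌊(P:ℝ) * (1 - x)⌋₊ := by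
        rw [Nat.cast_sub (by omega), Nat.cast_sub (by omega)]; simp
      refine mem_biUnion (Finset.mem_coe.2 (Finset.mem_range.2 h2)) (Or.inr ⟨hx, ?_, ?_⟩)
      · rw [h5, div_le_iff₀ hP0]; linarith
      · rw [h5, le_div_iff₀ hP0]; linarith
  have hsub : (A ∩ Icc 0.01 0.99) ∪ ⋃ j ∈ Finset.range k, (C j ∪ C (P - 1 - j)) ⊆ A := by
    refine union_subset inter_subset_left (iUnion₂_subset fun j _ => union_subset ?_ ?_) <;>
      exact inter_subset_left
  have h1 := (measureReal_mono hcov (ne_top_of_le_ne_top hAf (measure_mono hsub))).trans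
    (measureReal_union_le _ _)
  have h2 : volume.real (⋃ j ∈ Finset.range k, (C j ∪ C (P - 1 - j)))
      ≤ ∑ _j ∈ Finset.range k, 2 * (1.1 * α / P) := by
    refine (measureReal_biUnion_finset_le _ _).trans (Finset.sum_le_sum fun j hj => ?_)
    have hj := Finset.mem_range.1 hj
    refine (measureReal_union_le _ _).trans ?_
    have a1 := hcell j (by omega)
    have a2 := hcell (P - 1 - j) (by omega)
    simp only [hC]
    linarith
  rw [Finset.sum_const, Finset.card_range, nsmul_eq_mul] at h2
  have h3 : (k:ℝ) * (2 * (1.1 * α / P)) ≤ 0.03 * α := by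
    have e : (k:ℝ) * (2 * (1.1 * α / P)) = k * 2.2 * α / P := by ring
    rw [e, div_le_iff₀ hP0]
    nlinarith
  linarith

open scoped Pointwise in
theorem measureReal_affine_image {P : ℝ} (hP : 0 < P) (i : ℝ) (E : Set ℝ) :
    volume.real ((fun x => P * x - i) '' E) = P * volume.real E := by
  have e : (fun x => P * x - i) '' E = (fun x => x + i) ⁻¹' (P • E) := by
    ext y
    simp only [mem_image, mem_preimage, Set.mem_smul_set, smul_eq_mul]
    constructor
    · rintro ⟨x, hx, rfl⟩; exact ⟨x, hx, by ring⟩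
    · rintro ⟨x, hx, h⟩; exact ⟨x, hx, by linarith⟩
  rw [e, measureReal_def, measure_preimage_add_right, Measure.addHaar_smul, ENNReal.toReal_mul]
  simp [abs_of_pos hP, hP.le, measureReal_def]

/-! ### The expanding family -/

/-- Either some cell of length `1 / P` contains more than its share of `A`, and then the blow-up
of this cell expands `A`; or `A` is evenly spread, and then the contracting family does. -/
theorem expansion {P : ℕ} (hP : 1000 ≤ P) {κ : Type} [Fintype κ] {s : κ → Mat} (hs : Good s)
    (hs1 : ∀ a, NearOne (1 / 2000) (s a))
    (hc : ∀ (m : ℕ) (f : ℝ → ℝ), IsStep (P ^ 2 ^ m) f → MeanZero P f →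
      nsq (avgT s f) ≤ 1 / 10000 * nsq f)
    {A : Set ℝ} (hA : A ⊆ Icc 0 1) (hAm : MeasurableSet A) (hA2 : volume.real A ≤ 1 / 2) :
    (∃ i < P, 1.1 * volume.real A ≤
      volume.real ((fun x : ℝ => P * x - i) '' (A ∩ Icc ((i:ℝ) / P) ((i + 1 : ℝ) / P)))) ∨
    ∃ B : Set ℝ, 1.1 * volume.real A ≤ volume.real B ∧
      B ⊆ ⋃ a, mob (s a)⁻¹ '' (A ∩ Icc 0.01 0.99) := by
  have hP0 : (0:ℝ) < P := by exact_mod_cast (by omega : 0 < P)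
  by_cases hcell : ∀ i < P, volume.real (A ∩ Icc ((i:ℝ) / P) ((i + 1 : ℝ) / P))
      ≤ 1.1 * volume.real A / P
  swap
  · left
    push Not at hcell
    obtain ⟨i, hi, h⟩ := hcell
    refine ⟨i, hi, ?_⟩
    rw [measureReal_affine_image hP0]
    rw [div_lt_iff₀ hP0] at h
    linarith
  right
  set α := volume.real A with hα
  rcases (measureReal_nonneg : 0 ≤ volume.real A).eq_or_lt with h0 | h0
  · exact ⟨∅, by rw [← hα] at h0; simp [← h0], empty_subset _⟩
  rw [← hα] at h0
  have hAf : volume A ≠ ⊤ := ne_top_of_le_ne_top (by simp) (measure_mono hA)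
  have hmid := measure_middle hA hP h0.le hcell
  rw [← hα] at hmid
  have hA' : MeasurableSet (A ∩ Icc (0.01:ℝ) 0.99) := hAm.inter measurableSet_Icc
  have hA'f : volume (A ∩ Icc (0.01:ℝ) 0.99) ≠ ⊤ :=
    ne_top_of_le_ne_top hAf (measure_mono inter_subset_left)
  obtain ⟨S, hSA, hS, hSv⟩ := hA'.exists_lt_isCompact (μ := volume)
    (r := ENNReal.ofReal (0.96 * α)) (by
      rw [← ENNReal.ofReal_toReal hA'f]
      refine (ENNReal.ofReal_lt_ofReal_iff_of_nonneg (by positivity)).2 ?_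
      change _ < volume.real _
      linarith)
  have hSf : volume S ≠ ⊤ := hS.measure_lt_top.ne
  have hS96 : 0.96 * α < volume.real S :=
    (ENNReal.ofReal_lt_iff_lt_toReal (by positivity) hSf).1 hSv
  have hSα : volume.real S ≤ α := measureReal_mono (hSA.trans inter_subset_left) hAf
  have hS1 : S ⊆ Ico 0 1 := fun x hx =>
    ⟨by linarith [(hSA hx).2.1], by linarith [(hSA hx).2.2]⟩
  have hcon := hs.nsq_avgT_indicator hP hc hS hS1 h0 hA2 hSα fun j hj => by
    rw [Finset.mem_Ico] at hj
    obtain ⟨i, rfl⟩ := Int.eq_ofNat_of_zero_le hj.1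
    refine le_trans (measureReal_mono ?_ ?_) (hcell i (by omega))
    · rw [cell_eq (by omega)]
      exact fun x hx => ⟨(hSA hx.1).1, by simpa using Ico_subset_Icc_self hx.2⟩
    · exact ne_top_of_le_ne_top hAf (measure_mono inter_subset_left)
  have hpre := hs.measure_preimages hs1 hS.measurableSet hS1
  refine ⟨{x | ∃ a, den (s a) x ≠ 0 ∧ mob (s a) x ∈ S}, ?_, ?_⟩
  · set b := volume.real {x | ∃ a, den (s a) x ≠ 0 ∧ mob (s a) x ∈ S} with hb
    have hb0 : 0 ≤ b := measureReal_nonneg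
    have h1 : (0.96 * α) ^ 2 ≤ volume.real S ^ 2 := pow_le_pow_left₀ (by positivity) hS96.le 2
    have h2 : b * nsq (avgT s (S.indicator fun _ => (1:ℝ))) ≤ b * (0.64 * α) :=
      mul_le_mul_of_nonneg_left hcon hb0
    have h3 : α * (0.96 ^ 2 * α) ≤ α * (1.03 * 0.64 * b) := by nlinarith
    have h4 := le_of_mul_le_mul_left h3 h0
    linarith
  · rintro x ⟨a, h1, h2⟩
    exact mem_iUnion.2 ⟨a, mob (s a) x, hSA h2, mob_inv_mob (hs.pos a) h1⟩

end MonExp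

/-- **Existence of an explicit continuous monotone expander.**
There exist a constant `c₀ > 0` and a finite family `Ψ` of maps (indexed by `Fin n`),
each a smooth strictly increasing map from a closed subinterval of `[0,1]` into `[0,1]`,
such that for every measurable `A ⊆ [0,1]` with `|A| ≤ 1/2` one has
`|Ψ(A)| ≥ (1 + c₀)·|A|`, where `Ψ(A) = ⋃ i, ψ i '' (A ∩ dom i)`. -/
theorem continuous_monotone_expander_exists :
    ∃ c₀ : ℝ, 0 < c₀ ∧
      ∃ (n : ℕ) (dom : Fin n → Set ℝ) (ψ : Fin n → ℝ → ℝ),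
        (∀ i, ∃ a b : ℝ, 0 ≤ a ∧ a ≤ b ∧ b ≤ 1 ∧ dom i = Icc a b) ∧
        (∀ i, ContDiffOn ℝ (⊤ : ℕ∞) (ψ i) (dom i)) ∧
        (∀ i, StrictMonoOn (ψ i) (dom i)) ∧
        (∀ i, ψ i '' dom i ⊆ Icc 0 1) ∧
        (∀ A : Set ℝ, A ⊆ Icc 0 1 → MeasurableSet A → volume A ≤ 1 / 2 →
          ENNReal.ofReal (1 + c₀) * volume A ≤ volume (⋃ i, ψ i '' (A ∩ dom i))) := by
  -- `K = 2000` is large enough for the Möbius maps to move the points of `[0.01, 0.99]` by less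
  -- than `0.01`.
  obtain ⟨P, κ, _, s, hP, hs, hn, hc⟩ :=
    MonExp.exists_contraction 2000 (by norm_num) (ε := 1 / 10000) (by norm_num)
  have hs1 : ∀ a, MonExp.NearOne (1 / 2000) (s a) := fun a => by simpa using hn a
  have hi1 : ∀ a, MonExp.NearOne (1 / 2000) (s a)⁻¹ := fun a => (hs1 a).inv (hs.det a)
  have hP0 : (0:ℝ) < P := by exact_mod_cast (by omega : 0 < P)
  let dom' : Fin P ⊕ κ → Set ℝ :=
    Sum.elim (fun i => Icc ((i:ℕ) / P : ℝ) (((i:ℕ) + 1) / P)) fun _ => Icc 0.01 0.99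
  let ψ' : Fin P ⊕ κ → ℝ → ℝ :=
    Sum.elim (fun i x => P * x - (i:ℕ)) fun a => MonExp.mob (s a)⁻¹
  have H1 : ∀ i, ∃ a b : ℝ, 0 ≤ a ∧ a ≤ b ∧ b ≤ 1 ∧ dom' i = Icc a b := by
    rintro (i | a)
    · refine ⟨(i:ℕ) / P, ((i:ℕ) + 1) / P, by positivity, by gcongr; linarith, ?_, rfl⟩
      rw [div_le_one hP0]
      exact_mod_cast i.2
    · exact ⟨0.01, 0.99, by norm_num, by norm_num, by norm_num, rfl⟩
  have H2 : ∀ i, ContDiffOn ℝ (⊤ : ℕ∞) (ψ' i) (dom' i) := by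
    rintro (i | a)
    · have h : ContDiff ℝ (⊤ : ℕ∞) fun x : ℝ => P * x - (i : ℕ) := by fun_prop
      exact h.contDiffOn
    · exact (hi1 a).contDiffOn_mob (by norm_num) (by norm_num) (by norm_num)
  have H3 : ∀ i, StrictMonoOn (ψ' i) (dom' i) := by
    rintro (i | a)
    · intro x _ y _ hxy
      simp only [ψ', Sum.elim_inl]
      nlinarith
    · exact (hi1 a).strictMonoOn_mob (by norm_num) (by norm_num) (by norm_num)
  have H4 : ∀ i, ψ' i '' dom' i ⊆ Icc 0 1 := by
    rintro (i | a)
    · rintro _ ⟨x, hx, rfl⟩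
      simp only [dom', ψ', Sum.elim_inl] at hx ⊢
      have h1 := hx.1
      have h2 := hx.2
      rw [div_le_iff₀ hP0] at h1
      rw [le_div_iff₀ hP0] at h2
      constructor <;> linarith
    · rintro _ ⟨x, hx, rfl⟩
      simp only [dom', ψ', Sum.elim_inr] at hx ⊢
      have h1 := abs_le.1 ((hi1 a).mob_bound (by norm_num) (x := x)
        (abs_le.2 ⟨by linarith [hx.1], by linarith [hx.2]⟩))
      constructor <;> linarith [h1.1, h1.2, hx.1, hx.2]
  have H5 : ∀ A : Set ℝ, A ⊆ Icc 0 1 → MeasurableSet A → volume A ≤ 1 / 2 →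
      ENNReal.ofReal (1 + 1 / 10) * volume A ≤ volume (⋃ i, ψ' i '' (A ∩ dom' i)) := by
    intro A hA hAm hA2
    have hAf : volume A ≠ ⊤ := ne_top_of_le_ne_top (by simp) (measure_mono hA)
    have hA2' : volume.real A ≤ 1 / 2 := by
      have := ENNReal.toReal_mono (by simp) hA2
      simpa [measureReal_def] using this
    have hlow : ∀ B : Set ℝ, B ⊆ ⋃ i, ψ' i '' (A ∩ dom' i) → 1.1 * volume.real A ≤ volume.real B →
        ENNReal.ofReal (1 + 1 / 10) * volume A ≤ volume (⋃ i, ψ' i '' (A ∩ dom' i)) := by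
      intro B hB h
      have hBf : volume (⋃ i, ψ' i '' (A ∩ dom' i)) ≠ ⊤ := by
        refine ne_top_of_le_ne_top (b := volume (Icc (0:ℝ) 1)) (by simp) (measure_mono ?_)
        exact iUnion_subset fun i => (image_mono inter_subset_right).trans (H4 i)
      have h2 := h.trans (measureReal_mono hB hBf)
      rw [← ENNReal.ofReal_toReal hAf, ← ENNReal.ofReal_toReal hBf,
        ← ENNReal.ofReal_mul (by norm_num)]
      refine ENNReal.ofReal_le_ofReal ?_
      change _ * volume.real _ ≤ volume.real _
      norm_num at h2 ⊢
      exact h2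
    rcases MonExp.expansion hP hs hs1 hc hA hAm hA2' with ⟨i, hi, h⟩ | ⟨B, h, hB⟩
    · exact hlow _ (subset_iUnion (fun i => ψ' i '' (A ∩ dom' i)) (Sum.inl ⟨i, hi⟩)) h
    · exact hlow B (hB.trans (iUnion_subset fun a =>
        subset_iUnion (fun i => ψ' i '' (A ∩ dom' i)) (Sum.inr a))) h
  let e := Fintype.equivFin (Fin P ⊕ κ)
  refine ⟨1 / 10, by norm_num, Fintype.card (Fin P ⊕ κ), dom' ∘ e.symm, ψ' ∘ e.symm,
    fun i => H1 _, fun i => H2 _, fun i => H3 _, fun i => H4 _, fun A hA hAm hA2 => ?_⟩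
  refine (H5 A hA hAm hA2).trans (le_of_eq ?_)
  congr 1
  exact (e.symm.surjective.iUnion_comp fun i => ψ' i '' (A ∩ dom' i)).symm
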